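/- arXiv:1003.0860 — 4 statements merged into one kernel-verified Lean document; each statement's English description precedes it below -/
import Mathlib

section
/- Addition theorem for spherical harmonics: for all ξ, η ∈ Sⁿ and k ∈ ℕ₀, one has C_k^{(n-1)/2}(ξᵀη) / C_k^{(n-1)/2}(1) = (|Sⁿ| / d_k(n)) · Σ_{i=1}^{d_k(n)} Y_k^i(ξ) · conj(Y_k^i(η)), where {Y_k^i} is any orthonormal basis of the space of degree-k spherical harmonics on Sⁿ. -/
open MeasureTheory
open scoped RealInnerProductSpace

noncomputable section

/-- The Gegenbauer polynomials `C_k^λ`, defined by the standard recurrence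
`C₀ = 1`, `C₁ = 2λ X`, `(k+2) C_{k+2} = 2(k+1+λ) X C_{k+1} − (k+2λ) C_k`. -/
def gegenbauer (lam : ℝ) : ℕ → Polynomial ℝ
  | 0 => 1
  | 1 => Polynomial.C (2 * lam) * Polynomial.X
  | (n + 2) =>
      Polynomial.C (2 * ((n : ℝ) + 1 + lam) / ((n : ℝ) + 2)) * Polynomial.X
          * gegenbauer lam (n + 1)
        - Polynomial.C (((n : ℝ) + 2 * lam) / ((n : ℝ) + 2)) * gegenbauer lam n

/-- Dimension `d_k(n)` of the space of spherical harmonics of degree `k` on `Sⁿ`. -/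
def harmonicDim (n k : ℕ) : ℕ := (n + k).choose n - (n + k - 2).choose n

/-- `Y : EuclideanSpace ℝ (Fin (n+1)) → ℂ` is (the extension of) a spherical harmonic of
degree `k` on `Sⁿ`: it is given by a harmonic polynomial, homogeneous of degree `k`. -/
def IsSphericalHarmonic (n k : ℕ) (Y : EuclideanSpace ℝ (Fin (n + 1)) → ℂ) : Prop :=
  ∃ P : MvPolynomial (Fin (n + 1)) ℂ,
    P.IsHomogeneous k ∧
    (∑ i, MvPolynomial.pderiv i (MvPolynomial.pderiv i P)) = 0 ∧
    ∀ x : EuclideanSpace ℝ (Fin (n + 1)),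
      Y x = MvPolynomial.eval (fun i => (x i : ℂ)) P

namespace SHAdd

open MvPolynomial

/-- Laplacian of a polynomial. -/
def lap {n : ℕ} (P : MvPolynomial (Fin n) ℂ) : MvPolynomial (Fin n) ℂ :=
  ∑ i, pderiv i (pderiv i P)

/-- Directional derivative. -/
def dirD {n : ℕ} (y : Fin n → ℂ) (P : MvPolynomial (Fin n) ℂ) : MvPolynomial (Fin n) ℂ :=
  ∑ i, C (y i) * pderiv i P

/-- Linear form. -/
def lin {n : ℕ} (y : Fin n → ℂ) : MvPolynomial (Fin n) ℂ := ∑ i, C (y i) * X i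

/-- Squared norm. -/
def nsq (n : ℕ) : MvPolynomial (Fin n) ℂ := ∑ i, X i ^ 2

variable {n : ℕ}

lemma lap_add (P Q : MvPolynomial (Fin n) ℂ) : lap (P + Q) = lap P + lap Q := by
  simp [lap, Finset.sum_add_distrib]

lemma lap_sub (P Q : MvPolynomial (Fin n) ℂ) : lap (P - Q) = lap P - lap Q := by
  simp [lap]

lemma lap_C_mul (a : ℂ) (P : MvPolynomial (Fin n) ℂ) : lap (C a * P) = C a * lap P := by
  simp [lap, pderiv_C_mul, Finset.mul_sum]

lemma dirD_add (y : Fin n → ℂ) (P Q : MvPolynomial (Fin n) ℂ) :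
    dirD y (P + Q) = dirD y P + dirD y Q := by
  simp [dirD, mul_add, Finset.sum_add_distrib]

lemma dirD_sub (y : Fin n → ℂ) (P Q : MvPolynomial (Fin n) ℂ) :
    dirD y (P - Q) = dirD y P - dirD y Q := by
  simp [dirD, mul_sub]

lemma dirD_mul (y : Fin n → ℂ) (P Q : MvPolynomial (Fin n) ℂ) :
    dirD y (P * Q) = dirD y P * Q + P * dirD y Q := by
  simp only [dirD, pderiv_mul, Finset.mul_sum, Finset.sum_mul, ← Finset.sum_add_distrib]
  exact Finset.sum_congr rfl fun i _ => by ring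

lemma dirD_C (y : Fin n → ℂ) (a : ℂ) : dirD y (C a) = 0 := by simp [dirD]

lemma dirD_C_mul (y : Fin n → ℂ) (a : ℂ) (P : MvPolynomial (Fin n) ℂ) :
    dirD y (C a * P) = C a * dirD y P := by
  rw [dirD_mul, dirD_C]; ring

lemma pderiv_lin (y : Fin n → ℂ) (i : Fin n) : pderiv i (lin y) = C (y i) := by
  simp [lin, pderiv_C_mul, pderiv_X, Pi.single_apply]

lemma pderiv_nsq (i : Fin n) : pderiv i (nsq n) = 2 * X i := by
  simp only [nsq, map_sum, pderiv_pow, pderiv_X]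
  simp [Pi.single_apply]

lemma dirD_lin (y : Fin n → ℂ) : dirD y (lin y) = C (∑ i, y i ^ 2) := by
  simp [dirD, pderiv_lin, pow_two]

lemma dirD_nsq (y : Fin n → ℂ) : dirD y (nsq n) = 2 * lin y := by
  simp only [dirD, pderiv_nsq, lin, Finset.mul_sum]
  exact Finset.sum_congr rfl fun i _ => by ring

lemma lap_mul (P Q : MvPolynomial (Fin n) ℂ) :
    lap (P * Q) = lap P * Q + 2 * ∑ i, pderiv i P * pderiv i Q + P * lap Q := by
  simp only [lap, pderiv_mul, map_add, Finset.mul_sum, Finset.sum_mul, ← Finset.sum_add_distrib]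
  exact Finset.sum_congr rfl fun i _ => by ring

lemma lap_lin_mul (y : Fin n → ℂ) (P : MvPolynomial (Fin n) ℂ) :
    lap (lin y * P) = 2 * dirD y P + lin y * lap P := by
  rw [lap_mul]
  have : lap (lin y) = 0 := by simp [lap, pderiv_lin]
  simp only [this, pderiv_lin, dirD]; ring

lemma lap_nsq_mul {k : ℕ} (P : MvPolynomial (Fin n) ℂ) (hP : P.IsHomogeneous k) :
    lap (nsq n * P) = C (2 * (n : ℂ) + 4 * k) * P + nsq n * lap P := by
  rw [lap_mul]
  have h1 : lap (nsq n) = C (2 * (n : ℂ)) := by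
    have h2 (i : Fin n) : pderiv i (2 * X i : MvPolynomial (Fin n) ℂ) = 2 := by
      have : (2 : MvPolynomial (Fin n) ℂ) = C 2 := (map_ofNat C 2).symm
      rw [this, pderiv_C_mul]; simp
    simp [lap, pderiv_nsq, h2, map_ofNat C 2]; ring
  have h3 := hP.sum_X_mul_pderiv
  have h4 : ∑ i, pderiv i (nsq n) * pderiv i P = 2 * (k • P) := by
    rw [← h3, Finset.mul_sum]
    exact Finset.sum_congr rfl fun i _ => by rw [pderiv_nsq]; ring
  rw [h1, h4]
  simp [map_ofNat C 2, map_ofNat C 4]; ring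

lemma pderiv_comm' (i j : Fin n) (P : MvPolynomial (Fin n) ℂ) :
    pderiv i (pderiv j P) = pderiv j (pderiv i P) := by
  ext m
  simp only [coeff_pderiv]
  by_cases h : i = j
  · subst h; rfl
  · have h' : j ≠ i := fun e => h e.symm
    simp [Finsupp.single_apply, h, h', add_right_comm]; ring

lemma lap_dirD (y : Fin n → ℂ) (P : MvPolynomial (Fin n) ℂ) :
    lap (dirD y P) = dirD y (lap P) := by
  simp only [lap, dirD, map_sum, pderiv_C_mul, Finset.mul_sum]
  rw [Finset.sum_comm]
  refine Finset.sum_congr rfl fun i _ => Finset.sum_congr rfl fun j _ => ?_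
  rw [pderiv_comm' j i, pderiv_comm' j i]

lemma dirD_homog {k : ℕ} (y : Fin n → ℂ) {P : MvPolynomial (Fin n) ℂ} (hP : P.IsHomogeneous (k + 1)) :
    (dirD y P).IsHomogeneous k := by
  refine IsHomogeneous.sum _ _ _ fun i _ => ?_
  have := (isHomogeneous_C (Fin n) (y i)).mul (hP.pderiv (i := i))
  simpa using this

lemma lin_homog (y : Fin n → ℂ) : (lin y).IsHomogeneous 1 := by
  refine IsHomogeneous.sum _ _ _ fun i _ => ?_
  simpa using (isHomogeneous_C (Fin n) (y i)).mul (isHomogeneous_X ℂ i)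

lemma nsq_homog : (nsq n).IsHomogeneous 2 := by
  refine IsHomogeneous.sum _ _ _ fun i _ => ?_
  simpa using (isHomogeneous_X ℂ i).pow 2

/-- Moments of an abstract Gaussian functional against harmonic polynomials. -/
lemma moment (E : MvPolynomial (Fin n) ℂ →ₗ[ℂ] ℂ)
    (hE : ∀ i P, E (X i * P) = E (pderiv i P)) (y : Fin n → ℂ) (k : ℕ) :
    ∀ P : MvPolynomial (Fin n) ℂ, P.IsHomogeneous k → lap P = 0 →
      (∀ j < k, E (P * lin y ^ j) = 0) ∧
        E (P * lin y ^ k) = (k.factorial : ℂ) * eval y P * E 1 := by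
  have hC (a : ℂ) (P) : E (C a * P) = a * E P := by
    rw [← smul_eq_C_mul, map_smul, smul_eq_mul]
  have hL (P) : E (lin y * P) = E (dirD y P) := by
    simp only [lin, dirD, Finset.sum_mul, map_sum, mul_assoc, hC, hE]
  have hpow (j : ℕ) : dirD y (lin y ^ (j + 1)) = C ((j + 1 : ℂ) * ∑ i, y i ^ 2) * lin y ^ j := by
    induction j with
    | zero => simp [dirD_lin]
    | succ j ih => rw [pow_succ, dirD_mul, ih, dirD_lin]; simp only [map_mul, map_add]; push_cast; simp; ring
  have hstep0 (P) : E (P * lin y ^ 1) = E (dirD y P) := by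
    rw [← hL]; congr 1; ring
  have hstep (P) (j : ℕ) : E (P * lin y ^ (j + 2)) =
      E (dirD y P * lin y ^ (j + 1)) + ((j + 1 : ℂ) * ∑ i, y i ^ 2) * E (P * lin y ^ j) := by
    have : P * lin y ^ (j + 2) = lin y * (P * lin y ^ (j + 1)) := by ring
    rw [this, hL, dirD_mul, hpow, map_add, ← hC]
    congr 2; ring
  induction k with
  | zero =>
    intro P hP _
    refine ⟨by simp, ?_⟩
    have hc : P = C (coeff 0 P) := totalDegree_eq_zero_iff_eq_C.1 (Nat.le_zero.1 hP.totalDegree_le)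
    rw [hc]
    have := hC (coeff 0 P) 1
    simpa using this
  | succ k ih =>
    intro P hP hlap
    obtain ⟨i1, i2⟩ := ih (dirD y P) (dirD_homog y hP) (by rw [lap_dirD, hlap]; simp [dirD])
    have hEP : E P = 0 := by
      have h := hP.sum_X_mul_pderiv
      have h2 := congrArg E h
      rw [map_sum] at h2
      simp only [hE] at h2
      rw [← map_sum] at h2
      change E (lap P) = _ at h2
      rw [hlap, map_zero, map_nsmul, nsmul_eq_mul] at h2
      have : ((k + 1 : ℕ) : ℂ) ≠ 0 := by exact_mod_cast Nat.succ_ne_zero k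
      exact (mul_eq_zero.1 h2.symm).resolve_left this
    have hlow : ∀ j < k + 1, E (P * lin y ^ j) = 0 := by
      intro j
      induction j using Nat.strong_induction_on with
      | _ j ihj =>
        intro hj
        match j, ihj, hj with
        | 0, _, _ => simpa using hEP
        | 1, _, hj => rw [hstep0]; simpa using i1 0 (by omega)
        | j + 2, ihj, hj =>
          rw [hstep, i1 _ (by omega), ihj j (by omega) (by omega)]; simp
    refine ⟨hlow, ?_⟩
    have heul : eval y (dirD y P) = ((k + 1 : ℕ) : ℂ) * eval y P := by
      have h := congrArg (eval y) hP.sum_X_mul_pderiv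
      simpa [dirD] using h
    rw [heul] at i2
    have : E (P * lin y ^ (k + 1)) = E (dirD y P * lin y ^ k) := by
      match k, hlow with
      | 0, _ => rw [hstep0]; simp
      | k + 1, hlow => rw [hstep, hlow k (by omega)]; simp
    rw [this, i2, Nat.factorial_succ]; push_cast; ring

/-- Solid zonal harmonics. -/
def zon (lam : ℝ) (y : Fin n → ℂ) : ℕ → MvPolynomial (Fin n) ℂ
  | 0 => 1
  | 1 => C ((2 * lam : ℝ) : ℂ) * lin y
  | (k + 2) => C ((2 * ((k : ℝ) + 1 + lam) / ((k : ℝ) + 2) : ℝ) : ℂ) * (lin y * zon lam y (k + 1))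
      - C ((((k : ℝ) + 2 * lam) / ((k : ℝ) + 2) : ℝ) : ℂ) * (nsq n * zon lam y k)

lemma zon_homog (lam : ℝ) (y : Fin n → ℂ) (k : ℕ) : (zon lam y k).IsHomogeneous k := by
  induction k using Nat.twoStepInduction with
  | zero => exact isHomogeneous_one _ _
  | one => simpa only [zon, zero_add] using (isHomogeneous_C (Fin n) ((2 * lam : ℝ) : ℂ)).mul (lin_homog y)
  | more k h1 h2 =>
    rw [zon]
    refine IsHomogeneous.sub ?_ ?_
    · have := (isHomogeneous_C (Fin n) ((2 * ((k : ℝ) + 1 + lam) / ((k : ℝ) + 2) : ℝ) : ℂ)).mul ((lin_homog y).mul h2)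
      have e : 0 + (1 + (k + 1)) = k + 2 := by omega
      rwa [e] at this
    · have := (isHomogeneous_C (Fin n) ((((k : ℝ) + 2 * lam) / ((k : ℝ) + 2) : ℝ) : ℂ)).mul ((nsq_homog (n := n)).mul h1)
      have e : 0 + (2 + k) = k + 2 := by omega
      rwa [e] at this

lemma zon_rec (lam : ℝ) (y : Fin n → ℂ) (k : ℕ) :
    C ((k : ℂ) + 2) * zon lam y (k + 2) =
      C (2 * ((k : ℂ) + 1 + lam)) * (lin y * zon lam y (k + 1))
        - C ((k : ℂ) + 2 * lam) * (nsq n * zon lam y k) := by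
  have hk : (k : ℂ) + 2 ≠ 0 := by exact_mod_cast (by omega : k + 2 ≠ 0)
  rw [zon, mul_sub, ← mul_assoc (C _) (C _), ← mul_assoc (C _) (C _), ← C_mul, ← C_mul]
  push_cast
  rw [mul_div_cancel₀ _ hk, mul_div_cancel₀ _ hk]

lemma zon_zero (lam : ℝ) (y : Fin n → ℂ) : zon lam y 0 = 1 := by rw [zon]

lemma zon_one (lam : ℝ) (y : Fin n → ℂ) : zon lam y 1 = C ((2 * lam : ℝ) : ℂ) * lin y := by rw [zon]

lemma zon_eval (lam : ℝ) (x y : Fin n → ℂ) (t : ℝ) (hx : ∑ i, x i ^ 2 = 1) (ht : ∑ i, y i * x i = t)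
    (k : ℕ) : eval x (zon lam y k) = ((gegenbauer lam k).eval t : ℝ) := by
  have hL : eval x (lin y) = t := by simp [lin, ht]
  have hR : eval x (nsq n) = 1 := by simp [nsq, hx]
  induction k using Nat.twoStepInduction with
  | zero => simp [zon, gegenbauer]
  | one => simp [zon, gegenbauer, hL]
  | more k h1 h2 =>
    rw [zon, gegenbauer]
    simp only [map_sub, map_mul, eval_C, hL, hR, h1, h2]
    simp; ring

attribute [irreducible] zon

lemma zon_dirD (lam : ℝ) (y : Fin n → ℂ) (hy : ∑ i, y i ^ 2 = 1) (k : ℕ) :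
    dirD y (zon lam y (k + 1)) = C ((k : ℂ) + 2 * lam) * zon lam y k := by
  have hl : dirD y (lin y) = 1 := by rw [dirD_lin, hy, C_1]
  have hC2 : (C 2 : MvPolynomial (Fin n) ℂ) = 2 := map_ofNat C 2
  have h00 : dirD y (zon lam y 1) = C (((0 : ℕ) : ℂ) + 2 * lam) * zon lam y 0 := by
    rw [zon_one, dirD_C_mul, hl, zon_zero]; simp
  induction k using Nat.strong_induction_on with
  | _ k IH =>
  match k, IH with
  | 0, _ => exact h00
  | k + 1, IH =>
    have ih := IH k (by omega)
    have hk : (C ((k : ℂ) + 2) : MvPolynomial (Fin n) ℂ) ≠ 0 := by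
      rw [Ne, C_eq_zero]; exact_mod_cast (by omega : k + 2 ≠ 0)
    apply mul_left_cancel₀ hk
    rw [← dirD_C_mul, zon_rec, dirD_sub, dirD_C_mul, dirD_C_mul, dirD_mul, dirD_mul, dirD_nsq, hl, ih]
    have key : C ((k : ℂ) + 2 * lam) * (C 2 * ((k : MvPolynomial (Fin n) ℂ) + C (lam : ℂ)) * (lin y * zon lam y k)
        - nsq n * dirD y (zon lam y k)) = C ((k : ℂ) + 2 * lam) * (((k : MvPolynomial (Fin n) ℂ) + 1) * zon lam y (k + 1)) := by
      refine congrArg (fun z => C ((k : ℂ) + 2 * lam) * z) ?_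
      match k, IH with
      | 0, _ =>
        have h0 : dirD y (zon lam y 0) = 0 := by rw [zon_zero]; simp [dirD]
        rw [h0, zon_zero, zon_one]; simp
      | j + 1, IH =>
        rw [IH j (by omega)]
        have := zon_rec lam y j
        simp only [map_add, map_mul, hC2, map_natCast, map_one, Nat.cast_add, Nat.cast_one] at this ⊢
        linear_combination -this
    simp only [map_add, map_mul, hC2, map_natCast, map_one, Nat.cast_add, Nat.cast_one] at key ⊢
    linear_combination key

lemma zon_lap (lam : ℝ) (hn : (n : ℝ) = 2 * lam + 2) (y : Fin n → ℂ) (hy : ∑ i, y i ^ 2 = 1) (k : ℕ) :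
    lap (zon lam y k) = 0 := by
  have hn' : (n : ℂ) = 2 * lam + 2 := by exact_mod_cast hn
  induction k using Nat.twoStepInduction with
  | zero => rw [zon_zero]; simp [lap]
  | one => rw [zon_one, lap_C_mul]; simp [lap, pderiv_lin]
  | more k h1 h2 =>
    have hk : (C ((k : ℂ) + 2) : MvPolynomial (Fin n) ℂ) ≠ 0 := by
      rw [Ne, C_eq_zero]; exact_mod_cast (by omega : k + 2 ≠ 0)
    apply mul_left_cancel₀ hk
    rw [← lap_C_mul, zon_rec, lap_sub, lap_C_mul, lap_C_mul, lap_lin_mul,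
      lap_nsq_mul _ (zon_homog lam y k), h1, h2, zon_dirD lam y hy, hn']
    simp only [map_add, map_mul, map_ofNat C 2, map_ofNat C 4, map_natCast, map_one]
    ring

lemma geg_one_step (lam : ℝ) (k : ℕ) :
    ((k : ℝ) + 1) * (gegenbauer lam (k + 1)).eval 1 = (k + 2 * lam) * (gegenbauer lam k).eval 1 := by
  induction k with
  | zero => simp [gegenbauer]
  | succ k ih =>
    have hk : (k : ℝ) + 2 ≠ 0 := by positivity
    rw [gegenbauer]
    simp only [Polynomial.eval_sub, Polynomial.eval_mul, Polynomial.eval_C, Polynomial.eval_X]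
    push_cast
    field_simp
    linear_combination (k + 2 : ℝ) * ih

lemma geg_one_pos (lam : ℝ) (hl : 0 < lam) (k : ℕ) : 0 < (gegenbauer lam k).eval 1 := by
  induction k with
  | zero => simp [gegenbauer]
  | succ k ih =>
    have h := geg_one_step lam k
    have : 0 < ((k : ℝ) + 1) * (gegenbauer lam (k + 1)).eval 1 := by rw [h]; positivity
    exact (pos_iff_pos_of_mul_pos this).1 (by positivity)

lemma geg_deg (lam : ℝ) (k : ℕ) : (gegenbauer lam k).natDegree ≤ k := by
  induction k using Nat.twoStepInduction with
  | zero => simp [gegenbauer]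
  | one => rw [gegenbauer]; compute_degree
  | more k h1 h2 =>
    rw [gegenbauer]; compute_degree; omega

/-- The space of homogeneous harmonic polynomials. -/
def harm (n k : ℕ) : Submodule ℂ (MvPolynomial (Fin n) ℂ) where
  carrier := {P | P.IsHomogeneous k ∧ lap P = 0}
  add_mem' := fun ha hb => ⟨ha.1.add hb.1, by rw [lap_add, ha.2, hb.2, add_zero]⟩
  zero_mem' := ⟨isHomogeneous_zero _ _ _, by simp [lap]⟩
  smul_mem' := fun c P hP => by
    rw [smul_eq_C_mul]
    exact ⟨by simpa using (isHomogeneous_C (Fin n) c).mul hP.1, by rw [lap_C_mul, hP.2, mul_zero]⟩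

/-- Index set of the free coefficients. -/
def hidx (n k : ℕ) : Finset (Fin (n + 1) →₀ ℕ) :=
  ((Finset.univ : Finset (Fin (n + 1))).finsuppAntidiag k).filter (fun m => m 0 < 2)

lemma harm_inj {k : ℕ} (P : MvPolynomial (Fin (n + 1)) ℂ) (hP : P ∈ harm (n + 1) k)
    (h0 : ∀ m ∈ hidx n k, coeff m P = 0) : P = 0 := by
  have main : ∀ N : ℕ, ∀ m : Fin (n + 1) →₀ ℕ, m 0 = N → coeff m P = 0 := by
    intro N
    induction N using Nat.strong_induction_on with
    | _ N ih =>
      intro m hm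
      by_cases hd : ∑ i, m i = k
      · by_cases h2 : m 0 < 2
        · exact h0 m (by simp [hidx, Finset.mem_finsuppAntidiag, hd]; omega)
        · obtain ⟨m', rfl⟩ : ∃ m', m = m' + Finsupp.single 0 1 + Finsupp.single 0 1 := by
            refine ⟨m - Finsupp.single 0 2, ?_⟩
            ext i
            by_cases hi : i = 0
            · subst hi; simp; omega
            · simp [Finsupp.single_apply, Ne.symm hi]
          have hl := congrArg (coeff m') hP.2
          simp only [lap, coeff_sum, coeff_pderiv, coeff_zero] at hl
          rw [Finset.sum_eq_single 0] at hl
          · simp only [mul_eq_zero] at hl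
            rcases hl with (h | h) | h
            · exact h
            · exact absurd h (Nat.cast_add_one_ne_zero _)
            · exact absurd h (Nat.cast_add_one_ne_zero _)
          · intro i _ hi
            rw [ih (m' 0) (by simp at hm; omega) _ (by simp [hi.symm])]
            simp
          · simp
      · apply hP.1.coeff_eq_zero
        rw [Finsupp.degree_eq_sum]
        exact hd
  ext m
  simpa using main _ m rfl

lemma card_hidx (n k : ℕ) (hn : 0 < n) : (hidx n k).card = harmonicDim n k := by
  have hA (j : ℕ) : ((Finset.univ : Finset (Fin (n + 1))).finsuppAntidiag j).card = (n + j).choose n := by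
    rw [Finset.card_finsuppAntidiag_nat_eq_choose]
    simp only [Finset.card_univ, Fintype.card_fin]
    rw [show n + 1 + j - 1 = n + j by omega, Nat.choose_symm_add]
  have hsum (m : Fin (n + 1) →₀ ℕ) : Finset.univ.sum (m + Finsupp.single 0 2 : Fin (n + 1) →₀ ℕ) = Finset.univ.sum m + 2 := by
    change ∑ i, (m + Finsupp.single 0 2 : Fin (n + 1) →₀ ℕ) i = ∑ i, m i + 2
    simp [Finsupp.add_apply, Finset.sum_add_distrib, Finsupp.single_apply]
  have hsplit := Finset.card_filter_add_card_filter_not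
    (s := (Finset.univ : Finset (Fin (n + 1))).finsuppAntidiag k) (fun m => m 0 < 2)
  rw [hA] at hsplit
  have hB : (((Finset.univ : Finset (Fin (n + 1))).finsuppAntidiag k).filter (fun m => ¬ m 0 < 2)).card
      = (n + k - 2).choose n := by
    by_cases hk : k < 2
    · rw [Nat.choose_eq_zero_of_lt, Finset.card_eq_zero, Finset.filter_eq_empty_iff]
      · intro m hm
        rw [Finset.mem_finsuppAntidiag] at hm
        have := Finset.single_le_sum (f := fun i => m i) (fun i _ => Nat.zero_le _) (Finset.mem_univ 0)
        have h1 := hm.1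
        change m 0 ≤ Finset.univ.sum m at this
        omega
      · omega
    · rw [show n + k - 2 = n + (k - 2) by omega, ← hA]
      symm
      apply Finset.card_bij (fun m _ => m + Finsupp.single 0 2)
      · intro m hm
        simp only [Finset.mem_filter, Finset.mem_finsuppAntidiag] at hm ⊢
        refine ⟨⟨?_, by simp⟩, by simp⟩
        rw [hsum, hm.1]; omega
      · intro a _ b _ h; exact add_right_cancel h
      · intro b hb
        simp only [Finset.mem_filter, Finset.mem_finsuppAntidiag] at hb
        have hbe : b - Finsupp.single 0 2 + Finsupp.single 0 2 = b := by
          ext i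
          by_cases hi : i = 0
          · subst hi; simp; omega
          · simp [Finsupp.single_apply, Ne.symm hi]
        refine ⟨b - Finsupp.single 0 2, ?_, hbe⟩
        rw [Finset.mem_finsuppAntidiag]
        refine ⟨?_, by simp⟩
        have h1 := hb.1.1
        rw [← hbe, hsum] at h1
        omega
  rw [hB] at hsplit
  rw [hidx, harmonicDim]; omega

/-- Coefficient extraction. -/
def coeffMap (n k : ℕ) : harm (n + 1) k →ₗ[ℂ] (hidx n k → ℂ) :=
  LinearMap.pi fun m => (lcoeff ℂ m.1).comp (harm (n + 1) k).subtype

lemma coeffMap_inj (n k : ℕ) : Function.Injective (coeffMap n k) := by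
  rw [← LinearMap.ker_eq_bot, LinearMap.ker_eq_bot']
  intro P hP
  apply Subtype.ext
  refine harm_inj P.1 P.2 fun m hm => ?_
  exact congrFun hP ⟨m, hm⟩

lemma harm_findim (n k : ℕ) : FiniteDimensional ℂ (harm (n + 1) k) :=
  FiniteDimensional.of_injective _ (coeffMap_inj n k)

lemma harm_finrank (n k : ℕ) (hn : 0 < n) : Module.finrank ℂ (harm (n + 1) k) ≤ harmonicDim n k := by
  have := LinearMap.finrank_le_finrank_of_injective (coeffMap_inj n k)
  rwa [Module.finrank_fintype_fun_eq_card, Fintype.card_coe, card_hidx n k hn] at this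

/-- Evaluation of a complex polynomial at a real point. -/
def ev (x : EuclideanSpace ℝ (Fin n)) : MvPolynomial (Fin n) ℂ →+* ℂ :=
  eval (fun i => (x i : ℂ))

/-- The Gaussian weight. -/
def gs (x : EuclideanSpace ℝ (Fin n)) : ℂ := ((Real.exp (-(‖x‖ ^ 2) / 2) : ℝ) : ℂ)

lemma ev_cont (P : MvPolynomial (Fin n) ℂ) : Continuous (fun x : EuclideanSpace ℝ (Fin n) => ev x P) := by
  induction P using MvPolynomial.induction_on with
  | C a => simpa [ev] using continuous_const
  | add p q hp hq => simp only [map_add]; exact hp.add hq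
  | mul_X p i hp =>
    have : Continuous (fun x : EuclideanSpace ℝ (Fin n) => (x i : ℂ)) := by fun_prop
    simp only [map_mul]; exact hp.mul (by simpa [ev] using this)

lemma gs_cont : Continuous (fun x : EuclideanSpace ℝ (Fin n) => gs x) := by
  unfold gs; fun_prop

lemma ev_bound (P : MvPolynomial (Fin n) ℂ) : ∀ ε > (0 : ℝ), ∃ K : ℝ, 0 ≤ K ∧
    ∀ x : EuclideanSpace ℝ (Fin n), ‖ev x P‖ ≤ K * Real.exp (ε * ‖x‖ ^ 2) := by
  induction P using MvPolynomial.induction_on with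
  | C a =>
    intro ε hε
    refine ⟨‖a‖, norm_nonneg _, fun x => ?_⟩
    simp only [ev, eval_C]
    have : 1 ≤ Real.exp (ε * ‖x‖ ^ 2) := Real.one_le_exp (by positivity)
    nlinarith [norm_nonneg a]
  | add p q hp hq =>
    intro ε hε
    obtain ⟨K, hK0, hK⟩ := hp ε hε
    obtain ⟨M, hM0, hM⟩ := hq ε hε
    refine ⟨K + M, by positivity, fun x => ?_⟩
    rw [map_add, add_mul]
    exact (norm_add_le _ _).trans (add_le_add (hK x) (hM x))
  | mul_X p i hp =>
    intro ε hε
    obtain ⟨K, hK0, hK⟩ := hp (ε / 2) (by positivity)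
    refine ⟨K * (1 + 1 / (ε / 2)), by positivity, fun x => ?_⟩
    have hx : ‖ev x (X i)‖ ≤ (1 + 1 / (ε / 2)) * Real.exp (ε / 2 * ‖x‖ ^ 2) := by
      have h1 : ‖ev x (X i)‖ ≤ ‖x‖ := by
        simpa [ev] using PiLp.norm_apply_le x i
      have h2 := Real.add_one_le_exp (ε / 2 * ‖x‖ ^ 2)
      have h3 : ‖x‖ ≤ (1 + 1 / (ε / 2)) * (ε / 2 * ‖x‖ ^ 2 + 1) := by
        have : (1 + 1 / (ε / 2)) * (ε / 2 * ‖x‖ ^ 2 + 1) = 1 + ‖x‖ ^ 2 + (1 / (ε / 2) + ε / 2 * ‖x‖ ^ 2) := by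
          field_simp; ring
        rw [this]
        have : 0 ≤ (1 / (ε / 2) + ε / 2 * ‖x‖ ^ 2) := by positivity
        nlinarith [sq_nonneg (‖x‖ - 1)]
      have h4 : 0 ≤ 1 + 1 / (ε / 2) := by positivity
      exact h1.trans (h3.trans (mul_le_mul_of_nonneg_left h2 h4))
    rw [map_mul, norm_mul]
    calc _ ≤ (K * Real.exp (ε / 2 * ‖x‖ ^ 2)) * ((1 + 1 / (ε / 2)) * Real.exp (ε / 2 * ‖x‖ ^ 2)) :=
          mul_le_mul (hK x) hx (norm_nonneg _) (by positivity)
      _ = K * (1 + 1 / (ε / 2)) * (Real.exp (ε / 2 * ‖x‖ ^ 2) * Real.exp (ε / 2 * ‖x‖ ^ 2)) := by ring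
      _ = _ := by rw [← Real.exp_add]; congr 2; ring

lemma ev_integrable (P : MvPolynomial (Fin n) ℂ) :
    Integrable (fun x : EuclideanSpace ℝ (Fin n) => ev x P * gs x) := by
  obtain ⟨K, hK0, hK⟩ := ev_bound P (1 / 4) (by norm_num)
  have hb : (0 : ℝ) < ((1 / 4 : ℂ)).re := by norm_num
  have h := (GaussianFourier.integrable_cexp_neg_mul_sq_norm_add_of_euclideanSpace (ι := Fin n) hb 0 0).norm.const_mul K
  refine h.mono' ((ev_cont P).mul gs_cont).aestronglyMeasurable (Filter.Eventually.of_forall fun x => ?_)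
  rw [norm_mul]
  have e1 : ‖gs x‖ = Real.exp (-(‖x‖ ^ 2) / 2) := by
    rw [gs, Complex.norm_real, Real.norm_of_nonneg (Real.exp_nonneg _)]
  have e2 : ‖Complex.exp (-(1 / 4 : ℂ) * (‖x‖ : ℂ) ^ 2 + 0 * ((inner ℝ 0 x : ℝ) : ℂ))‖ = Real.exp (-(1 / 4) * ‖x‖ ^ 2) := by
    rw [Complex.norm_exp]
    congr 1
    have : (-(1 / 4 : ℂ) * (‖x‖ : ℂ) ^ 2 + 0 * ((inner ℝ 0 x : ℝ) : ℂ)) = ((-(1 / 4) * ‖x‖ ^ 2 : ℝ) : ℂ) := by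
      push_cast; ring
    rw [this, Complex.ofReal_re]
  rw [e1]
  refine (mul_le_mul_of_nonneg_right (hK x) (Real.exp_nonneg _)).trans (le_of_eq ?_)
  rw [e2, mul_assoc, ← Real.exp_add]
  congr 2; ring

lemma ev_deriv (P : MvPolynomial (Fin n) ℂ) (i : Fin n) (x : EuclideanSpace ℝ (Fin n)) :
    HasLineDerivAt ℝ (fun x : EuclideanSpace ℝ (Fin n) => ev x P) (ev x (pderiv i P)) x
      (EuclideanSpace.single i 1) := by
  unfold HasLineDerivAt
  induction P using MvPolynomial.induction_on with
  | C a => simpa [ev] using hasDerivAt_const (0 : ℝ) a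
  | add p q hp hq => simp only [map_add]; exact hp.add hq
  | mul_X p j hp =>
    have hX : HasDerivAt (fun t : ℝ => ev (x + t • EuclideanSpace.single i (1 : ℝ)) (X j)) (ev x (pderiv i (X j))) 0 := by
      by_cases h : j = i
      · subst h
        have : HasDerivAt (fun t : ℝ => (x j : ℂ) + (t : ℂ)) 1 0 :=
          (Complex.ofRealCLM.hasDerivAt (x := (0 : ℝ))).const_add _
        simpa [ev] using this
      · have := hasDerivAt_const (0 : ℝ) (x j : ℂ)
        simpa [ev, pderiv_X_of_ne h, h] using this
    have := hp.mul hX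
    rw [pderiv_mul]
    simp only [map_add, map_mul]
    simp only [zero_smul, add_zero] at this
    exact this

lemma gs_deriv (i : Fin n) (x : EuclideanSpace ℝ (Fin n)) :
    HasLineDerivAt ℝ (fun x : EuclideanSpace ℝ (Fin n) => gs x) (-(x i : ℂ) * gs x) x
      (EuclideanSpace.single i 1) := by
  unfold HasLineDerivAt
  have hn (t : ℝ) : ‖x + t • EuclideanSpace.single i (1 : ℝ)‖ ^ 2 = ‖x‖ ^ 2 + 2 * (t * x i) + t ^ 2 := by
    rw [norm_add_sq_real, norm_smul, inner_smul_right]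
    simp [EuclideanSpace.inner_single_right]
  have h1 : HasDerivAt (fun t : ℝ => -(‖x‖ ^ 2 + 2 * (t * x i) + t ^ 2) / 2) (- x i) 0 := by
    have a := ((((hasDerivAt_id (0 : ℝ)).mul_const (x i)).const_mul 2).const_add (‖x‖ ^ 2)).add
      ((hasDerivAt_id (0 : ℝ)).pow 2)
    have b := a.neg.div_const 2
    exact b.congr_deriv (by simp; ring)
  have h2 := h1.exp.ofReal_comp
  have e : (fun t : ℝ => gs (x + t • EuclideanSpace.single i (1 : ℝ))) =
      fun t : ℝ => ((Real.exp (-(‖x‖ ^ 2 + 2 * (t * x i) + t ^ 2) / 2) : ℝ) : ℂ) := by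
    funext t; rw [gs, hn]
  change HasDerivAt (fun t : ℝ => gs (x + t • EuclideanSpace.single i (1 : ℝ))) _ _
  rw [e]
  convert h2 using 1
  simp [gs]; ring

/-- The Gaussian functional. -/
def gE (n : ℕ) : MvPolynomial (Fin n) ℂ →ₗ[ℂ] ℂ where
  toFun P := ∫ x : EuclideanSpace ℝ (Fin n), ev x P * gs x
  map_add' P Q := by
    simp only [map_add, add_mul]
    exact integral_add (ev_integrable P) (ev_integrable Q)
  map_smul' c P := by
    simp only [smul_eq_C_mul, map_mul, RingHom.id_apply, smul_eq_mul, ← integral_const_mul]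
    refine integral_congr_ae (Filter.Eventually.of_forall fun x => ?_)
    simp [ev, mul_assoc]

lemma gE_stein (i : Fin n) (P : MvPolynomial (Fin n) ℂ) : gE n (X i * P) = gE n (pderiv i P) := by
  have h := integral_bilinear_hasLineDerivAt_right_eq_neg_left_of_integrable
    (μ := (volume : Measure (EuclideanSpace ℝ (Fin n))))
    (f := fun x => ev x P) (f' := fun x => ev x (pderiv i P)) (g := fun x => gs x)
    (g' := fun x => -(x i : ℂ) * gs x) (v := EuclideanSpace.single i 1)
    (B := ContinuousLinearMap.mul ℝ ℂ)
    (by simpa using ev_integrable (pderiv i P))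
    (by
      have := (ev_integrable (X i * P)).neg
      refine this.congr (Filter.Eventually.of_forall fun x => ?_)
      simp [ev]; ring)
    (by simpa using ev_integrable P)
    (fun x _ => ev_deriv P i x) (fun x _ => gs_deriv i x)
  simp only [ContinuousLinearMap.mul_apply'] at h
  change ∫ x, _ = ∫ x, _
  rw [← neg_inj, ← h, ← integral_neg]
  refine integral_congr_ae (Filter.Eventually.of_forall fun x => ?_)
  simp [ev]; ring

/-- Radial moments. -/
def rad (n m : ℕ) : ℂ :=
  ∫ r : Set.Ioi (0 : ℝ), ((r.1 ^ m * Real.exp (-(r.1 ^ 2) / 2) : ℝ) : ℂ) ∂(Measure.volumeIoiPow (n - 1))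

lemma ev_smul {m : ℕ} {P : MvPolynomial (Fin n) ℂ} (hP : P.IsHomogeneous m) (r : ℝ)
    (x : EuclideanSpace ℝ (Fin n)) : ev (r • x) P = (r : ℂ) ^ m * ev x P := by
  simp only [ev, eval_eq', Finset.mul_sum]
  refine Finset.sum_congr rfl fun d hd => ?_
  have hdeg : ∑ i, d i = m := by
    by_contra h
    exact mem_support_iff.1 hd (hP.coeff_eq_zero (by rwa [Finsupp.degree_eq_sum]))
  simp only [PiLp.smul_apply, smul_eq_mul, Complex.ofReal_mul, mul_pow, Finset.prod_mul_distrib,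
    Finset.prod_pow_eq_pow_sum, hdeg]
  ring

lemma gE_polar (hn : n ≠ 0) {m : ℕ} {P : MvPolynomial (Fin n) ℂ} (hP : P.IsHomogeneous m) :
    gE n P = (∫ x : Metric.sphere (0 : EuclideanSpace ℝ (Fin n)) 1, ev x P
      ∂(volume : Measure (EuclideanSpace ℝ (Fin n))).toSphere) * rad n m := by
  set μ := (volume : Measure (EuclideanSpace ℝ (Fin n)))
  have : Nonempty (Fin n) := ⟨⟨0, Nat.pos_of_ne_zero hn⟩⟩
  calc gE n P = ∫ x : ({(0)}ᶜ : Set (EuclideanSpace ℝ (Fin n))), ev x.1 P * gs x.1 ∂(μ.comap (↑)) := by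
        rw [integral_subtype_comap (measurableSet_singleton _).compl
          fun x : EuclideanSpace ℝ (Fin n) => ev x P * gs x, restrict_compl_singleton]
        rfl
    _ = ∫ p, ev p.1.1 P * ((p.2.1 ^ m * Real.exp (-(p.2.1 ^ 2) / 2) : ℝ) : ℂ)
          ∂μ.toSphere.prod (.volumeIoiPow (Module.finrank ℝ (EuclideanSpace ℝ (Fin n)) - 1)) := by
        rw [← μ.measurePreserving_homeomorphUnitSphereProd.integral_comp
          (Homeomorph.measurableEmbedding _)]
        refine integral_congr_ae (Filter.Eventually.of_forall fun x => ?_)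
        have hx : x.1 = ‖x.1‖ • (‖x.1‖⁻¹ • x.1) := by
          rw [smul_smul, mul_inv_cancel₀ (norm_ne_zero_iff.2 x.2), one_smul]
        simp only [homeomorphUnitSphereProd_apply_fst_coe, homeomorphUnitSphereProd_apply_snd_coe]
        conv_lhs => rw [hx, ev_smul hP, ← hx]
        simp only [gs]; push_cast; ring
    _ = _ := by
        rw [finrank_euclideanSpace_fin]
        exact integral_prod_mul (μ := μ.toSphere) (ν := Measure.volumeIoiPow (n - 1))
          (fun x : Metric.sphere (0 : EuclideanSpace ℝ (Fin n)) 1 => ev x.1 P)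
          (fun r : Set.Ioi (0 : ℝ) => ((r.1 ^ m * Real.exp (-(r.1 ^ 2) / 2) : ℝ) : ℂ))

lemma rad_ne (n m : ℕ) : rad n m ≠ 0 := by
  rw [rad, integral_complex_ofReal, Complex.ofReal_ne_zero]
  simp only [Measure.volumeIoiPow, ENNReal.ofReal]
  rw [integral_withDensity_eq_integral_smul
    (measurable_subtype_coe.pow_const _).real_toNNReal,
    integral_subtype_comap measurableSet_Ioi fun a : ℝ ↦ Real.toNNReal (a ^ (n - 1)) • (a ^ m * Real.exp (-(a ^ 2) / 2)),
    setIntegral_congr_fun (g := fun x : ℝ => x ^ ((n - 1 + m : ℕ) : ℝ) * Real.exp (-(1 / 2) * x ^ (2 : ℝ))) measurableSet_Ioi fun x hx ↦ ?_]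
  · rw [integral_rpow_mul_exp_neg_mul_rpow (by norm_num) (by
      have : (0 : ℝ) ≤ ((n - 1 + m : ℕ) : ℝ) := Nat.cast_nonneg _
      linarith) (by norm_num)]
    have : (0 : ℝ) ≤ ((n - 1 + m : ℕ) : ℝ) := Nat.cast_nonneg _
    have := Real.Gamma_pos_of_pos (s := (((n - 1 + m : ℕ) : ℝ) + 1) / 2) (by linarith)
    positivity
  · have hx0 : (0 : ℝ) < x := hx
    simp only []
    rw [NNReal.smul_def, Real.coe_toNNReal _ (pow_nonneg hx0.le _), Real.rpow_natCast, pow_add, smul_eq_mul]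
    rw [show x ^ (2 : ℝ) = x ^ 2 by exact_mod_cast Real.rpow_natCast x 2]
    rw [mul_assoc]; congr 3; ring

lemma sph_integrable (f : Metric.sphere (0 : EuclideanSpace ℝ (Fin n)) 1 → ℂ) (hf : Continuous f) :
    Integrable f (volume : Measure (EuclideanSpace ℝ (Fin n))).toSphere :=
  hf.integrable_of_hasCompactSupport (HasCompactSupport.of_compactSpace f)

lemma ev_sph_cont (P : MvPolynomial (Fin n) ℂ) :
    Continuous (fun x : Metric.sphere (0 : EuclideanSpace ℝ (Fin n)) 1 => ev x.1 P) :=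
  (ev_cont P).comp continuous_subtype_val

lemma ev_lin (x y : EuclideanSpace ℝ (Fin n)) :
    ev x (lin fun i => (y i : ℂ)) = ((inner ℝ x y : ℝ) : ℂ) := by
  simp [ev, lin, PiLp.inner_apply]

/-- The Funk–Hecke constant. -/
def fh (n k : ℕ) (q : Polynomial ℝ) : ℂ :=
  (q.coeff k : ℂ) * ((k.factorial : ℂ) * gE n 1 / rad n (k + k))

lemma funk_hecke (hn : n ≠ 0) {k : ℕ} (P : MvPolynomial (Fin n) ℂ) (hP : P ∈ harm n k)
    (q : Polynomial ℝ) (hq : q.natDegree ≤ k) (y : EuclideanSpace ℝ (Fin n)) :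
    ∫ x : Metric.sphere (0 : EuclideanSpace ℝ (Fin n)) 1, ev x.1 P * ((q.eval (inner ℝ x.1 y) : ℝ) : ℂ)
      ∂(volume : Measure (EuclideanSpace ℝ (Fin n))).toSphere = fh n k q * ev y P := by
  set L := lin (fun i => (y i : ℂ)) with hL
  obtain ⟨h1, h2⟩ := moment (gE n) gE_stein (fun i => (y i : ℂ)) k P hP.1 hP.2
  have hpol (j : ℕ) := gE_polar hn (hP.1.mul ((lin_homog (fun i => (y i : ℂ))).pow j))
  have hexp : ∀ x : Metric.sphere (0 : EuclideanSpace ℝ (Fin n)) 1,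
      ev x.1 P * ((q.eval (inner ℝ x.1 y) : ℝ) : ℂ) =
        ∑ j ∈ Finset.range (k + 1), (q.coeff j : ℂ) * ev x.1 (P * L ^ j) := by
    intro x
    rw [Polynomial.eval_eq_sum_range' (Nat.lt_succ_of_le hq)]
    push_cast
    rw [Finset.mul_sum]
    refine Finset.sum_congr rfl fun j _ => ?_
    rw [map_mul, map_pow, hL, ev_lin]; ring
  simp only [hexp]
  rw [integral_finsetSum _ fun j _ => (sph_integrable _ (ev_sph_cont _)).const_mul _]
  simp only [integral_const_mul]
  rw [Finset.sum_range_succ, Finset.sum_eq_zero, zero_add]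
  · have := hpol k
    rw [h2, one_mul] at this
    rw [fh, mul_assoc]
    congr 1
    have hr := rad_ne n (k + k)
    rw [eq_comm, div_mul_eq_mul_div, div_eq_iff hr, ← this]
    simp only [ev]; ring
  · intro j hj
    have := hpol j
    rw [h1 j (Finset.mem_range.1 hj), one_mul] at this
    rw [(mul_eq_zero.1 this.symm).resolve_right (rad_ne _ _), mul_zero]

lemma conj_mem {k : ℕ} {P : MvPolynomial (Fin n) ℂ} (hP : P ∈ harm n k) :
    map (starRingEnd ℂ) P ∈ harm n k := by
  refine ⟨hP.1.map _, ?_⟩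
  have := congrArg (map (starRingEnd ℂ)) hP.2
  simpa [lap, pderiv_map] using this

lemma ev_conj (P : MvPolynomial (Fin n) ℂ) (x : EuclideanSpace ℝ (Fin n)) :
    ev x (map (starRingEnd ℂ) P) = (starRingEnd ℂ) (ev x P) := by
  rw [ev, eval_map, ← eval₂_id, ← coe_eval₂Hom]
  rw [← coe_eval₂Hom, ← RingHom.comp_apply, comp_eval₂Hom]
  simp

lemma core (n k : ℕ) (hn : 2 ≤ n) (p : Fin (harmonicDim n k) → MvPolynomial (Fin (n + 1)) ℂ)
    (hp : ∀ i, p i ∈ harm (n + 1) k)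
    (hortho : ∀ i j, (∫ ξ : Metric.sphere (0 : EuclideanSpace ℝ (Fin (n + 1))) 1,
        ev ξ.1 (p i) * (starRingEnd ℂ) (ev ξ.1 (p j))
          ∂(volume : Measure (EuclideanSpace ℝ (Fin (n + 1)))).toSphere) = if i = j then 1 else 0)
    (ξ η : Metric.sphere (0 : EuclideanSpace ℝ (Fin (n + 1))) 1) :
    (((gegenbauer (((n : ℝ) - 1) / 2) k).eval (inner ℝ ξ.1 η.1) : ℝ) : ℂ) =
      fh (n + 1) k (gegenbauer (((n : ℝ) - 1) / 2) k) *
        ∑ i, ev ξ.1 (p i) * (starRingEnd ℂ) (ev η.1 (p i)) := by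
  set lam := ((n : ℝ) - 1) / 2 with hlam
  have hcoef (a : Fin (harmonicDim n k) → ℂ) (j) :
      ∫ ξ : Metric.sphere (0 : EuclideanSpace ℝ (Fin (n + 1))) 1,
        ev ξ.1 (∑ i, a i • p i) * (starRingEnd ℂ) (ev ξ.1 (p j))
          ∂(volume : Measure (EuclideanSpace ℝ (Fin (n + 1)))).toSphere = a j := by
    have e : ∀ ξ : Metric.sphere (0 : EuclideanSpace ℝ (Fin (n + 1))) 1,
        ev ξ.1 (∑ i, a i • p i) * (starRingEnd ℂ) (ev ξ.1 (p j)) =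
          ∑ i, a i * (ev ξ.1 (p i) * (starRingEnd ℂ) (ev ξ.1 (p j))) := by
      intro ξ
      rw [map_sum, Finset.sum_mul]
      refine Finset.sum_congr rfl fun i _ => ?_
      simp [smul_eq_C_mul, ev, mul_assoc]
    simp only [e]
    rw [integral_finsetSum _ fun i _ => (sph_integrable _ ?_).const_mul _]
    · simp only [integral_const_mul, hortho]
      simp
    · exact (ev_sph_cont _).mul (Complex.continuous_conj.comp (ev_sph_cont _))
  have hli : LinearIndependent ℂ (fun i => (⟨p i, hp i⟩ : harm (n + 1) k)) := by
    rw [Fintype.linearIndependent_iff]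
    intro g hg j
    have hg' : ∑ i, g i • p i = 0 := by
      have := congrArg Subtype.val hg
      simpa using this
    rw [← hcoef g j, hg']
    simp
  haveI := harm_findim n k
  have hspan := hli.span_eq_top_of_card_eq_finrank'
    (le_antisymm hli.fintype_card_le_finrank (by simpa using harm_finrank n k (by omega)))
  have sq (x : Metric.sphere (0 : EuclideanSpace ℝ (Fin (n + 1))) 1) : ∑ i, ((x.1 i : ℝ) : ℂ) ^ 2 = 1 := by
    have h : ‖x.1‖ = 1 := by simpa using x.2
    have h2 := EuclideanSpace.norm_sq_eq x.1
    rw [h] at h2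
    simp only [Real.norm_eq_abs, sq_abs] at h2
    exact_mod_cast h2.symm.trans (one_pow 2)
  set Z := zon lam (fun i => (η.1 i : ℂ)) k with hZ
  have hZm : Z ∈ harm (n + 1) k :=
    ⟨zon_homog _ _ _, zon_lap lam (by rw [hlam]; push_cast; ring) _ (sq η) k⟩
  have hZe (x : Metric.sphere (0 : EuclideanSpace ℝ (Fin (n + 1))) 1) :
      ev x.1 Z = (((gegenbauer lam k).eval (inner ℝ x.1 η.1) : ℝ) : ℂ) := by
    refine zon_eval lam _ _ _ (sq x) ?_ k
    simp [PiLp.inner_apply]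
  have hmem : (⟨Z, hZm⟩ : harm (n + 1) k) ∈ Submodule.span ℂ (Set.range fun i => (⟨p i, hp i⟩ : harm (n + 1) k)) := by
    rw [hspan]; trivial
  obtain ⟨a, ha⟩ := (Submodule.mem_span_range_iff_exists_fun ℂ).1 hmem
  have ha' : ∑ i, a i • p i = Z := by
    have := congrArg Subtype.val ha
    simpa using this
  have haj (j) : a j = fh (n + 1) k (gegenbauer lam k) * (starRingEnd ℂ) (ev η.1 (p j)) := by
    rw [← hcoef a j, ha', ← ev_conj, ← funk_hecke (Nat.succ_ne_zero n) _ (conj_mem (hp j)) _ (geg_deg lam k)]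
    refine integral_congr_ae (Filter.Eventually.of_forall fun x => ?_)
    simp only [hZe, ev_conj]; ring
  rw [← hZe ξ, ← ha', map_sum, Finset.mul_sum]
  refine Finset.sum_congr rfl fun i _ => ?_
  rw [haj, smul_eq_C_mul, map_mul]
  simp only [ev, eval_C]; ring

end SHAdd

/-- Addition theorem for spherical harmonics on `Sⁿ`:
`C_k^{(n-1)/2}(ξᵀη) / C_k^{(n-1)/2}(1) = (|Sⁿ|/d_k(n)) Σ_i Y_k^i(ξ) conj (Y_k^i(η))`
for any orthonormal basis `Y_k^1, …, Y_k^{d_k(n)}` of the degree-`k` spherical harmonics,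
with respect to the Lebesgue surface measure `σ` on the unit sphere. -/
theorem spherical_harmonics_addition_theorem
    (n k : ℕ) (hn : 2 ≤ n)
    (σ : Measure (Metric.sphere (0 : EuclideanSpace ℝ (Fin (n + 1))) 1))
    (hσ : σ = (volume : Measure (EuclideanSpace ℝ (Fin (n + 1)))).toSphere)
    (Y : Fin (harmonicDim n k) → EuclideanSpace ℝ (Fin (n + 1)) → ℂ)
    (hY : ∀ i, IsSphericalHarmonic n k (Y i))
    (hortho : ∀ i j, (∫ ξ : Metric.sphere (0 : EuclideanSpace ℝ (Fin (n + 1))) 1,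
        Y i ξ * (starRingEnd ℂ) (Y j ξ) ∂σ) = if i = j then 1 else 0)
    (ξ η : Metric.sphere (0 : EuclideanSpace ℝ (Fin (n + 1))) 1) :
    (((gegenbauer (((n : ℝ) - 1) / 2) k).eval ⟪(ξ : EuclideanSpace ℝ (Fin (n + 1))), (η : EuclideanSpace ℝ (Fin (n + 1)))⟫
        / (gegenbauer (((n : ℝ) - 1) / 2) k).eval 1 : ℝ) : ℂ)
      = (((σ Set.univ).toReal / (harmonicDim n k : ℝ)) : ℂ)
          * ∑ i, Y i ξ * (starRingEnd ℂ) (Y i η) := by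
  subst hσ
  choose p hp1 hp2 hp3 using hY
  have hp : ∀ i, p i ∈ SHAdd.harm (n + 1) k := fun i => ⟨hp1 i, hp2 i⟩
  have hYe : ∀ i x, Y i x = SHAdd.ev x (p i) := fun i x => hp3 i x
  simp only [hYe] at hortho ⊢
  have hcore := SHAdd.core n k hn p hp hortho
  set G := gegenbauer (((n : ℝ) - 1) / 2) k with hG
  set c := SHAdd.fh (n + 1) k G with hc
  set μ := (volume : Measure (EuclideanSpace ℝ (Fin (n + 1)))).toSphere with hμ
  have hG1 : 0 < G.eval 1 := by
    apply SHAdd.geg_one_pos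
    have : (2 : ℝ) ≤ n := by exact_mod_cast hn
    linarith
  have hmass : (μ Set.univ).toReal ≠ 0 := by
    rw [ENNReal.toReal_ne_zero]
    refine ⟨?_, measure_ne_top _ _⟩
    rw [Ne, Measure.measure_univ_eq_zero]
    exact Measure.toSphere_ne_zero _
  have hdiag : ((G.eval 1 : ℝ) : ℂ) * ((μ Set.univ).toReal : ℂ) = c * (harmonicDim n k : ℂ) := by
    have h1 : ∀ x : Metric.sphere (0 : EuclideanSpace ℝ (Fin (n + 1))) 1,
        ((G.eval 1 : ℝ) : ℂ) = c * ∑ i, SHAdd.ev x.1 (p i) * (starRingEnd ℂ) (SHAdd.ev x.1 (p i)) := by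
      intro x
      have hx : ‖x.1‖ = 1 := by simpa using x.2
      rw [← hcore x x, real_inner_self_eq_norm_sq, hx, one_pow]
    have h2 : ∫ x : Metric.sphere (0 : EuclideanSpace ℝ (Fin (n + 1))) 1, ((G.eval 1 : ℝ) : ℂ) ∂μ =
        ∫ x : Metric.sphere (0 : EuclideanSpace ℝ (Fin (n + 1))) 1,
          c * ∑ i, SHAdd.ev x.1 (p i) * (starRingEnd ℂ) (SHAdd.ev x.1 (p i)) ∂μ :=
      integral_congr_ae (Filter.Eventually.of_forall h1)
    rw [integral_const, integral_const_mul, integral_finsetSum _ fun i _ => SHAdd.sph_integrable _ ?_] at h2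
    · rw [← hμ] at h2
      simp only [hortho] at h2
      rw [Complex.real_smul] at h2
      simpa [mul_comm, Measure.real] using h2
    · exact (SHAdd.ev_sph_cont _).mul (Complex.continuous_conj.comp (SHAdd.ev_sph_cont _))
  have hG1c : ((G.eval 1 : ℝ) : ℂ) ≠ 0 := Complex.ofReal_ne_zero.2 hG1.ne'
  have hmc : ((μ Set.univ).toReal : ℂ) ≠ 0 := Complex.ofReal_ne_zero.2 hmass
  have hd : (harmonicDim n k : ℂ) ≠ 0 := by
    intro h0
    rw [h0, mul_zero] at hdiag
    exact mul_ne_zero hG1c hmc hdiag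
  rw [Complex.ofReal_div, hcore ξ η]
  push_cast
  field_simp
  linear_combination (-(∑ i, SHAdd.ev ξ.1 (p i) * (starRingEnd ℂ) (SHAdd.ev η.1 (p i)))) * hdiag

end
end

section
/- Zonal averaging: for all ξ ∈ Sⁿ, k ∈ ℕ₀, and any spherical harmonic Y of degree k, ∫_{SO(n)} Y(Bξ) dB = (Y(ξ₀) / C_k^{(n-1)/2}(1)) · C_k^{(n-1)/2}(ξ₀ᵀξ), where SO(n) is identified with the stabilizer of the north pole ξ₀ in SO(n+1) and dB is its normalized Haar measure. -/
open MeasureTheory Matrix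

noncomputable section

/-- `Y : (Fin (n+1) → ℝ) → ℂ` is (the extension of) a spherical harmonic of degree `k`
on `Sⁿ`: it is given by a harmonic polynomial, homogeneous of degree `k`. -/
def IsSphericalHarmonic' (n k : ℕ) (Y : (Fin (n + 1) → ℝ) → ℂ) : Prop :=
  ∃ P : MvPolynomial (Fin (n + 1)) ℂ,
    P.IsHomogeneous k ∧
    (∑ i, MvPolynomial.pderiv i (MvPolynomial.pderiv i P)) = 0 ∧
    ∀ x : Fin (n + 1) → ℝ, Y x = MvPolynomial.eval (fun i => (x i : ℂ)) P

/-- The copy of `SO(n)` inside `SO(n+1)`: the subgroup of the orthogonal group of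
determinant-one matrices stabilising the north pole `ξ₀`. -/
def soStabilizer (m : ℕ) (ξ₀ : Fin m → ℝ) : Subgroup (Matrix.orthogonalGroup (Fin m) ℝ) where
  carrier := {A | (A : Matrix (Fin m) (Fin m) ℝ).det = 1 ∧
    (A : Matrix (Fin m) (Fin m) ℝ).mulVec ξ₀ = ξ₀}
  one_mem' := by
    constructor
    · simp
    · simp [Matrix.one_mulVec]
  mul_mem' := by
    rintro a b ⟨ha1, ha2⟩ ⟨hb1, hb2⟩
    constructor
    · simp [Matrix.UnitaryGroup.mul_val, Matrix.det_mul, ha1, hb1]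
    · rw [Matrix.UnitaryGroup.mul_val, ← Matrix.mulVec_mulVec, hb2, ha2]
  inv_mem' := by
    rintro a ⟨ha1, ha2⟩
    constructor
    · rw [Matrix.UnitaryGroup.inv_val]
      calc (star a.1).det = star a.1.det := by
            rw [Matrix.star_eq_conjTranspose, Matrix.det_conjTranspose]
        _ = 1 := by rw [ha1]; exact star_one ℝ
    · rw [Matrix.UnitaryGroup.inv_val]
      conv_lhs => rw [← ha2]
      rw [Matrix.mulVec_mulVec, a.2.1, Matrix.one_mulVec]

section ZonAlg
open MvPolynomial

theorem zon_pderiv_comm {σ : Type*} (i j : σ) (P : MvPolynomial σ ℂ) :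
    pderiv i (pderiv j P) = pderiv j (pderiv i P) := by
  classical
  have h : ⁅(pderiv i : Derivation ℂ (MvPolynomial σ ℂ) (MvPolynomial σ ℂ)),
      (pderiv j : Derivation ℂ (MvPolynomial σ ℂ) (MvPolynomial σ ℂ))⁆ = 0 := by
    apply MvPolynomial.derivation_ext
    intro l
    simp [Derivation.commutator_apply, pderiv_X, Pi.single_apply]
    split_ifs <;> simp
  have := congrArg (fun D => D P) h
  simpa [Derivation.commutator_apply, sub_eq_zero] using this

noncomputable def zonD {σ : Type*} [Fintype σ] (z : σ → ℂ) (P : MvPolynomial σ ℂ) : MvPolynomial σ ℂ :=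
  ∑ l, C (z l) * pderiv l P

noncomputable def zonT {σ : Type*} [Fintype σ] (z : σ → ℂ) : MvPolynomial σ ℂ :=
  ∑ l, C (z l) * X l

/-- the rotation field -/
noncomputable def zonL {σ : Type*} [Fintype σ] (z : σ → ℂ) (i j : σ) (Q : MvPolynomial σ ℂ) :
    MvPolynomial σ ℂ :=
  (X i - C (z i) * zonT z) * (pderiv j Q - C (z j) * zonD z Q)
    - (X j - C (z j) * zonT z) * (pderiv i Q - C (z i) * zonD z Q)

theorem zonD_X_mul {σ : Type*} [Fintype σ] [DecidableEq σ] (z : σ → ℂ) (i : σ) (Q : MvPolynomial σ ℂ) :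
    zonD z (X i * Q) = C (z i) * Q + X i * zonD z Q := by
  simp only [zonD, Derivation.leibniz, smul_eq_mul, pderiv_X, Finset.mul_sum, mul_add, Finset.sum_add_distrib]
  rw [add_comm]
  congr 1
  · simp [Pi.single_apply]
  · exact Finset.sum_congr rfl fun l _ => by ring

theorem zonD_pderiv {σ : Type*} [Fintype σ] (z : σ → ℂ) (i : σ) (Q : MvPolynomial σ ℂ) :
    pderiv i (zonD z Q) = zonD z (pderiv i Q) := by
  simp only [zonD, map_sum, pderiv_C_mul, zon_pderiv_comm i]

theorem zon_abstract {σ R : Type*} [Fintype σ] [DecidableEq σ] [CommRing R] (z x a : σ → R)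
    (b : σ → σ → R) (T : R) (hT : ∑ i, z i * x i = T) (hz : ∑ i, z i * z i = 1) :
    ∑ i, ∑ j, ((x i - z i * T) * (((if i = j then 1 else 0) - z i * z j) * a j + x i * b j j)
      - (x j - z j * T) * ((1 - z i * z i) * a j + x i * b i j))
    = (2 - (Fintype.card σ : R)) * (∑ j, (x j - z j * T) * a j)
      + (∑ i, x i * x i - T * T) * (∑ j, b j j)
      - ∑ j, (x j - z j * T) * ∑ i, x i * b i j := by
  have h0 : ∑ i, (x i - z i * T) * z i = 0 := by
    simp only [sub_mul, Finset.sum_sub_distrib]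
    have : ∑ i, z i * T * z i = T * ∑ i, z i * z i := by
      rw [Finset.mul_sum]; exact Finset.sum_congr rfl fun l _ => by ring
    rw [this, hz, ← hT]
    simp [mul_comm]
  have h0' : ∑ i, (x i - z i * T) * x i = ∑ i, x i * x i - T * T := by
    simp only [sub_mul, Finset.sum_sub_distrib]
    congr 1
    rw [← hT, Finset.sum_mul]
    exact Finset.sum_congr rfl fun l _ => by ring
  have h1 : ∀ i j, ((x i - z i * T) * (((if i = j then 1 else 0) - z i * z j) * a j + x i * b j j)
      - (x j - z j * T) * ((1 - z i * z i) * a j + x i * b i j))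
    = (if i = j then (x i - z i * T) * a j else 0) - ((x i - z i * T) * z i) * (z j * a j)
      + ((x i - z i * T) * x i) * b j j - (1 - z i * z i) * ((x j - z j * T) * a j)
      - (x j - z j * T) * (x i * b i j) := by
    intro i j; split_ifs <;> ring
  simp only [h1, Finset.sum_add_distrib, Finset.sum_sub_distrib]
  rw [← Finset.sum_mul_sum, ← Finset.sum_mul_sum, ← Finset.sum_mul_sum, h0, h0']
  rw [Finset.sum_comm (f := fun i j => (x j - z j * T) * (x i * b i j))]
  simp only [← Finset.mul_sum, Finset.sum_sub_distrib, hz]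
  simp
  ring

theorem zonD_hom {σ : Type*} [Fintype σ] (z : σ → ℂ) {m : ℕ} {P : MvPolynomial σ ℂ}
    (hP : P.IsHomogeneous (m + 1)) : (zonD z P).IsHomogeneous m := by
  apply IsHomogeneous.sum
  intro i _
  have := (isHomogeneous_C σ (z i)).mul (hP.pderiv (i := i))
  simpa using this

theorem zon_euler_perp {σ : Type*} [Fintype σ] (z : σ → ℂ) {m : ℕ} {P : MvPolynomial σ ℂ}
    (hP : P.IsHomogeneous m) :
    ∑ j, (X j - C (z j) * zonT z) * pderiv j P = (m : MvPolynomial σ ℂ) * P - zonT z * zonD z P := by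
  simp only [sub_mul, Finset.sum_sub_distrib]
  rw [hP.sum_X_mul_pderiv, nsmul_eq_mul, zonD, Finset.mul_sum]
  refine congrArg₂ (fun a b => a - b) rfl ?_
  exact Finset.sum_congr rfl fun l _ => by ring

theorem zon_euler_perp' {σ : Type*} [Fintype σ] (z : σ → ℂ) {m : ℕ} {P : MvPolynomial σ ℂ}
    (hP : P.IsHomogeneous m) :
    ∑ j, X j * (pderiv j P - C (z j) * zonD z P)
      = (m : MvPolynomial σ ℂ) * P - zonT z * zonD z P := by
  simp only [mul_sub, Finset.sum_sub_distrib]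
  rw [hP.sum_X_mul_pderiv, nsmul_eq_mul, zonT, Finset.sum_mul]
  refine congrArg₂ (fun a b => a - b) rfl ?_
  exact Finset.sum_congr rfl fun l _ => by ring

theorem zon_key {σ : Type*} [Fintype σ] (z : σ → ℂ) (hz : ∑ i, z i * z i = 1)
    (m : ℕ) (P : MvPolynomial σ ℂ) (hP : P.IsHomogeneous (m + 1))
    (hD : ∑ i, pderiv i (pderiv i P) = 0) :
    ∑ i, ∑ j, zonL z i j (X i * pderiv j P)
    = (2 - (Fintype.card σ : MvPolynomial σ ℂ)) * (((m : MvPolynomial σ ℂ) + 1) * P - zonT z * zonD z P)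
      - (∑ i, X i * X i - zonT z * zonT z) * zonD z (zonD z P)
      - ((m : MvPolynomial σ ℂ) * (((m : MvPolynomial σ ℂ) + 1) * P - zonT z * zonD z P)
        - zonT z * ((m : MvPolynomial σ ℂ) * zonD z P - zonT z * zonD z (zonD z P))) := by
  classical
  have hz' : ∑ i, (C (z i) : MvPolynomial σ ℂ) * C (z i) = 1 := by
    simp only [← C_mul, ← map_sum, hz, C_1]
  have key := zon_abstract (fun i => (C (z i) : MvPolynomial σ ℂ)) X (fun j => pderiv j P)
    (fun i j => pderiv i (pderiv j P) - C (z i) * zonD z (pderiv j P)) (zonT z) rfl hz'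
  have h1 : ∑ j, (pderiv j (pderiv j P) - C (z j) * zonD z (pderiv j P)) = - zonD z (zonD z P) := by
    rw [Finset.sum_sub_distrib, hD, zero_sub]
    conv_rhs => rw [zonD]
    simp only [zonD_pderiv]
  have h2 : ∀ j, ∑ i, X i * (pderiv i (pderiv j P) - C (z i) * zonD z (pderiv j P))
      = (m : MvPolynomial σ ℂ) * pderiv j P - zonT z * zonD z (pderiv j P) := fun j => by
    have := hP.pderiv (i := j)
    exact zon_euler_perp' z this
  have h3 : ∑ j, (X j - C (z j) * zonT z) * zonD z (pderiv j P)
      = (m : MvPolynomial σ ℂ) * zonD z P - zonT z * zonD z (zonD z P) := by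
    simp only [← zonD_pderiv]
    exact zon_euler_perp z (zonD_hom z hP)
  have h4 := zon_euler_perp z hP
  rw [h1] at key
  simp only [h2] at key
  have h5 : ∑ j, (X j - C (z j) * zonT z) *
      ((m : MvPolynomial σ ℂ) * pderiv j P - zonT z * zonD z (pderiv j P))
      = (m : MvPolynomial σ ℂ) * (∑ j, (X j - C (z j) * zonT z) * pderiv j P)
        - zonT z * ∑ j, (X j - C (z j) * zonT z) * zonD z (pderiv j P) := by
    rw [Finset.mul_sum, Finset.mul_sum, ← Finset.sum_sub_distrib]
    exact Finset.sum_congr rfl fun l _ => by ring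
  rw [h5, h3, h4] at key
  push_cast at key
  rw [mul_neg, ← sub_eq_add_neg] at key
  rw [← key]
  refine Finset.sum_congr rfl fun i _ => Finset.sum_congr rfl fun j _ => ?_
  rw [zonL, zonD_X_mul]
  simp only [Derivation.leibniz, smul_eq_mul, pderiv_X_self, pderiv_X, Pi.single_apply]
  split_ifs <;> ring

theorem zon_geg_rec (lam : ℝ) (k : ℕ) (s : ℝ) :
    ((k : ℝ) + 2) * (gegenbauer lam (k + 2)).eval s
      = 2 * ((k : ℝ) + 1 + lam) * s * (gegenbauer lam (k + 1)).eval s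
        - ((k : ℝ) + 2 * lam) * (gegenbauer lam k).eval s := by
  have : (k : ℝ) + 2 ≠ 0 := by positivity
  rw [gegenbauer]
  simp only [Polynomial.eval_sub, Polynomial.eval_mul, Polynomial.eval_C, Polynomial.eval_X]
  field_simp

theorem zon_geg_one (lam : ℝ) (k : ℕ) :
    ((k : ℝ) + 1) * (gegenbauer lam (k + 1)).eval 1
      = (2 * lam + k) * (gegenbauer lam k).eval 1 := by
  induction k with
  | zero => simp [gegenbauer]
  | succ k ih =>
    have h := zon_geg_rec lam k 1
    push_cast
    linear_combination h + ih

theorem zon_geg_pos (lam : ℝ) (hl : 0 < lam) (k : ℕ) : 0 < (gegenbauer lam k).eval 1 := by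
  induction k with
  | zero => simp [gegenbauer]
  | succ k ih =>
    have h := zon_geg_one lam k
    have h2 : 0 < (2 * lam + k) * (gegenbauer lam k).eval 1 := by positivity
    rw [← h] at h2
    exact pos_of_mul_pos_right h2 (by positivity)

theorem zonD_harm {σ : Type*} [Fintype σ] (z : σ → ℂ) (P : MvPolynomial σ ℂ)
    (hD : ∑ i, pderiv i (pderiv i P) = 0) :
    ∑ i, pderiv i (pderiv i (zonD z P)) = 0 := by
  simp only [zonD_pderiv]
  have : ∑ i, zonD z (pderiv i (pderiv i P)) = zonD z (∑ i, pderiv i (pderiv i P)) := by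
    simp only [zonD, map_sum, Finset.mul_sum]
    exact Finset.sum_comm
  rw [this, hD]
  simp [zonD]

theorem zonD_eval {σ : Type*} [Fintype σ] (z : σ → ℂ) (m : ℕ) (P : MvPolynomial σ ℂ)
    (hP : P.IsHomogeneous m) : eval z (zonD z P) = m * eval z P := by
  have h := congrArg (eval z) hP.sum_X_mul_pderiv
  simpa [zonD, map_sum] using h

theorem zon_rec {σ : Type*} [Fintype σ] (z : σ → ℂ) (hz : ∑ i, z i * z i = 1)
    (n : ℕ) (hn : Fintype.card σ = n + 1)
    (I : MvPolynomial σ ℂ →ₗ[ℂ] ℂ) (t : ℂ)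
    (hT : ∀ Q, I (zonT z * Q) = t * I Q) (hS : ∀ Q, I ((∑ i, X i * X i) * Q) = I Q)
    (hL : ∀ i j Q, I (zonL z i j Q) = 0)
    (m : ℕ) (P : MvPolynomial σ ℂ) (hP : P.IsHomogeneous (m + 1))
    (hD : ∑ i, pderiv i (pderiv i P) = 0) :
    ((m : ℂ) + 1) * (m + n - 1) * I P = (2 * m + n - 1) * t * I (zonD z P)
      - I (zonD z (zonD z P)) := by
  have key := congrArg I (zon_key z hz m P hP hD)
  have hC : ∀ (c : ℂ) Q, I (C c * Q) = c * I Q := fun c Q => by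
    rw [← smul_eq_C_mul, map_smul, smul_eq_mul]
  have e : (2 - (Fintype.card σ : MvPolynomial σ ℂ)) * (((m : MvPolynomial σ ℂ) + 1) * P - zonT z * zonD z P)
      - (∑ i, X i * X i - zonT z * zonT z) * zonD z (zonD z P)
      - ((m : MvPolynomial σ ℂ) * (((m : MvPolynomial σ ℂ) + 1) * P - zonT z * zonD z P)
        - zonT z * ((m : MvPolynomial σ ℂ) * zonD z P - zonT z * zonD z (zonD z P)))
      = C (-(((m : ℂ) + 1) * (m + n - 1))) * P + C ((2 * m + n - 1 : ℂ)) * (zonT z * zonD z P)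
        - (∑ i, X i * X i) * zonD z (zonD z P) := by
    rw [hn]
    simp only [map_neg, map_mul, map_add, map_sub, map_natCast, map_one, map_ofNat]
    push_cast
    ring
  rw [e] at key
  simp only [map_sum, hL, Finset.sum_const_zero] at key
  rw [I.map_sub, I.map_add, hC, hC, hT, hS] at key
  linear_combination key

theorem zon_main {σ : Type*} [Fintype σ] (z : σ → ℂ) (hz : ∑ i, z i * z i = 1)
    (n : ℕ) (hn : Fintype.card σ = n + 1) (hn2 : 2 ≤ n)
    (I : MvPolynomial σ ℂ →ₗ[ℂ] ℂ) (t : ℝ) (h1 : I 1 = 1)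
    (hT : ∀ Q, I (zonT z * Q) = t * I Q) (hS : ∀ Q, I ((∑ i, X i * X i) * Q) = I Q)
    (hL : ∀ i j Q, I (zonL z i j Q) = 0) :
    ∀ (k : ℕ) (P : MvPolynomial σ ℂ), P.IsHomogeneous k → ∑ i, pderiv i (pderiv i P) = 0 →
      I P * ((gegenbauer (((n : ℝ) - 1) / 2) k).eval 1 : ℝ)
        = eval z P * ((gegenbauer (((n : ℝ) - 1) / 2) k).eval t : ℝ) := by
  have h0 : ∀ P : MvPolynomial σ ℂ, P.IsHomogeneous 0 → ∃ c, P = C c := by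
    intro P hP
    rw [← totalDegree_zero_iff_isHomogeneous, totalDegree_eq_zero_iff_eq_C] at hP
    exact ⟨_, hP⟩
  have hIC : ∀ c, I (C c) = c := fun c => by
    rw [← mul_one (C c), ← smul_eq_C_mul, map_smul, h1]; simp
  intro k
  induction k using Nat.strong_induction_on with
  | _ k ih =>
  intro P hP hD
  match k, ih, hP with
  | 0, ih, hP =>
    obtain ⟨c, rfl⟩ := h0 P hP
    simp [gegenbauer, hIC]
  | 1, ih, hP =>
    have hr := zon_rec z hz n hn I t hT hS hL 0 P hP hD
    obtain ⟨c, hc⟩ := h0 _ (zonD_hom z hP)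
    have he := zonD_eval z 1 P hP
    have hz0 : zonD z (C c) = 0 := by simp [zonD]
    rw [hc, hz0, map_zero, hIC] at hr
    rw [hc] at he
    simp only [eval_C, Nat.cast_one, one_mul] at he
    have hne : (n : ℂ) - 1 ≠ 0 := by
      have : (1 : ℂ) ≠ n := by exact_mod_cast (show (1 : ℕ) ≠ n by omega)
      exact sub_ne_zero.2 this.symm
    simp [gegenbauer]
    rw [← he]
    push_cast at hr
    linear_combination hr
  | m + 2, ih, hP =>
    have hr := zon_rec z hz n hn I t hT hS hL (m + 1) P hP hD
    have hP1 := zonD_hom z hP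
    have hD1 := zonD_harm z P hD
    have hP2 := zonD_hom z hP1
    have hD2 := zonD_harm z _ hD1
    have i1 := ih (m + 1) (by omega) _ hP1 hD1
    have i2 := ih m (by omega) _ hP2 hD2
    rw [zonD_eval z _ _ hP1] at i2
    rw [zonD_eval z _ _ hP] at i1 i2
    have g1 := congrArg (fun x : ℝ => (x : ℂ)) (zon_geg_rec (((n : ℝ) - 1) / 2) m t)
    have g2 := congrArg (fun x : ℝ => (x : ℂ)) (zon_geg_one (((n : ℝ) - 1) / 2) m)
    have g3 := congrArg (fun x : ℝ => (x : ℂ)) (zon_geg_one (((n : ℝ) - 1) / 2) (m + 1))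
    push_cast at g1 g2 g3 i1 i2 hr
    have e1 : (m : ℂ) + 2 ≠ 0 := by exact_mod_cast (show m + 2 ≠ 0 by omega)
    have e2 : (m : ℂ) + n ≠ 0 := by exact_mod_cast (show m + n ≠ 0 by omega)
    have e3 : (m : ℂ) + 1 ≠ 0 := by exact_mod_cast (show m + 1 ≠ 0 by omega)
    generalize (((gegenbauer (((n : ℝ) - 1) / 2) (m + 2)).eval 1 : ℝ) : ℂ) = G2 at *
    generalize (((gegenbauer (((n : ℝ) - 1) / 2) (m + 1)).eval 1 : ℝ) : ℂ) = G1 at *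
    generalize (((gegenbauer (((n : ℝ) - 1) / 2) m).eval 1 : ℝ) : ℂ) = G0 at *
    generalize (((gegenbauer (((n : ℝ) - 1) / 2) (m + 2)).eval t : ℝ) : ℂ) = c2 at *
    generalize (((gegenbauer (((n : ℝ) - 1) / 2) (m + 1)).eval t : ℝ) : ℂ) = c1 at *
    generalize (((gegenbauer (((n : ℝ) - 1) / 2) m).eval t : ℝ) : ℂ) = c0 at *
    generalize I (zonD z (zonD z P)) = J2 at *
    generalize I (zonD z P) = J1 at *
    generalize I P = J0 at *
    generalize eval z P = p at *
    have k1 : J1 * G2 = (n + m) * p * c1 := by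
      apply mul_left_cancel₀ e1
      linear_combination J1 * g3 + (n + m : ℂ) * i1
    have k2 : J2 * G2 = (n + m) * (n - 1 + m) * p * c0 := by
      apply mul_left_cancel₀ e1
      apply mul_left_cancel₀ e3
      linear_combination (m + 1 : ℂ) * J2 * g3 + (n + m : ℂ) * J2 * g2 + (n + m : ℂ) * (n - 1 + m) * i2
    apply mul_left_cancel₀ e1
    apply mul_left_cancel₀ e2
    linear_combination G2 * hr + (2 * m + n + 1 : ℂ) * t * k1 - k2 - (n + m : ℂ) * p * g1

end ZonAlg
section ZonExp
open scoped Matrix.Norms.Operator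

theorem zon_exp_deriv {m : ℕ} (A : Matrix (Fin m) (Fin m) ℝ) (t : ℝ) (v : Fin m → ℝ) (i : Fin m) :
    HasDerivAt (fun u : ℝ => (NormedSpace.exp (u • A) *ᵥ v) i)
      (((A * NormedSpace.exp (t • A)) *ᵥ v) i) t := by
  let f : Matrix (Fin m) (Fin m) ℝ →ₗ[ℝ] ℝ :=
    { toFun := fun M => (M *ᵥ v) i
      map_add' := fun M N => by simp [Matrix.add_mulVec]
      map_smul' := fun c M => by simp [Matrix.smul_mulVec] }
  have h := hasDerivAt_exp_smul_const' (𝕂 := ℝ) A t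
  exact (f.toContinuousLinearMap.hasFDerivAt.comp_hasDerivAt t h)

theorem zon_exp_orth {m : ℕ} (A : Matrix (Fin m) (Fin m) ℝ) (hA : Aᵀ = -A) :
    NormedSpace.exp A ∈ Matrix.orthogonalGroup (Fin m) ℝ := by
  rw [Matrix.mem_orthogonalGroup_iff]
  rw [← Matrix.exp_transpose, hA, ← Matrix.exp_add_of_commute _ _ (Commute.neg_right (Commute.refl A))]
  simp

theorem zon_exp_det {m : ℕ} (A : Matrix (Fin m) (Fin m) ℝ) (hA : Aᵀ = -A) :
    (NormedSpace.exp A).det = 1 := by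
  have h2 : ((1/2 : ℝ) • A)ᵀ = - ((1/2 : ℝ) • A) := by
    rw [Matrix.transpose_smul, hA, smul_neg]
  have h := zon_exp_orth _ h2
  have e : A = 2 • ((1/2 : ℝ) • A) := by
    rw [two_nsmul, ← add_smul]; norm_num
  rw [e, Matrix.exp_nsmul, Matrix.det_pow]
  rw [Matrix.mem_orthogonalGroup_iff] at h
  have := congrArg Matrix.det h
  rw [Matrix.det_mul, Matrix.det_transpose, Matrix.det_one] at this
  rw [pow_two]; simpa using this

theorem zon_exp_fix {m : ℕ} (A : Matrix (Fin m) (Fin m) ℝ) (v : Fin m → ℝ) (hv : A *ᵥ v = 0) :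
    NormedSpace.exp A *ᵥ v = v := by
  ext i
  have hd : ∀ t : ℝ, HasDerivAt (fun u : ℝ => (NormedSpace.exp (u • A) *ᵥ v) i) 0 t := by
    intro t
    have h := zon_exp_deriv A t v i
    have hc : Commute A (NormedSpace.exp (t • A)) :=
      (Commute.exp_right ((Commute.refl A).smul_right t))
    rw [hc.eq, ← Matrix.mulVec_mulVec, hv, Matrix.mulVec_zero] at h
    exact h
  have := is_const_of_deriv_eq_zero (fun t => (hd t).differentiableAt) (fun t => (hd t).deriv) 1 0
  simpa using this

end ZonExp

theorem zon_poly_deriv {σ : Type*} [Fintype σ] (Q : MvPolynomial σ ℂ) (x : ℝ → σ → ℂ) (x' : σ → ℂ)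
    (t : ℝ) (hx : ∀ i, HasDerivAt (fun u => x u i) (x' i) t) :
    HasDerivAt (fun u => MvPolynomial.eval (x u) Q)
      (∑ i, x' i * MvPolynomial.eval (x t) (MvPolynomial.pderiv i Q)) t := by
  classical
  induction Q using MvPolynomial.induction_on with
  | C a => simpa using hasDerivAt_const t a
  | add p q hp hq =>
    simp only [map_add, mul_add, Finset.sum_add_distrib]
    exact hp.add hq
  | mul_X p i hp =>
    have := hp.fun_mul (hx i)
    simp only [map_mul, MvPolynomial.eval_X]
    refine this.congr_deriv ?_
    symm
    simp only [Derivation.leibniz, smul_eq_mul, MvPolynomial.pderiv_X, map_add, map_mul, MvPolynomial.eval_X, mul_add, Finset.sum_add_distrib, Finset.sum_mul]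
    rw [add_comm]
    congr 1
    · exact Finset.sum_congr rfl fun l _ => by ring
    · simp [Pi.single_apply, apply_ite, mul_comm]

/-- evaluation of a polynomial on the orbit -/
def zonEv {m : ℕ} (x : Fin m → ℝ) (Q : MvPolynomial (Fin m) ℂ) : ℂ :=
  MvPolynomial.eval (fun i => (x i : ℂ)) Q

theorem zonEv_cont {m : ℕ} (Q : MvPolynomial (Fin m) ℂ) :
    Continuous (fun x : Fin m → ℝ => zonEv x Q) := by
  unfold zonEv
  exact (MvPolynomial.continuous_eval Q).comp (by fun_prop)

theorem zonEv_bdd {m : ℕ} (Q : MvPolynomial (Fin m) ℂ) :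
    ∃ K : ℝ, ∀ x : Fin m → ℝ, x ⬝ᵥ x = 1 → ‖zonEv x Q‖ ≤ K := by
  have hc : IsCompact (Set.pi Set.univ (fun _ : Fin m => Set.Icc (-1 : ℝ) 1)) :=
    isCompact_univ_pi fun _ => isCompact_Icc
  obtain ⟨K, hK⟩ := hc.exists_bound_of_continuousOn (zonEv_cont Q).continuousOn
  refine ⟨K, fun x hx => hK x ?_⟩
  intro i _
  have : x i * x i ≤ 1 := by
    rw [← hx]
    exact Finset.single_le_sum (f := fun i => x i * x i) (fun j _ => mul_self_nonneg _) (Finset.mem_univ i)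
  constructor <;> nlinarith

theorem zon_orth_dot {m : ℕ} (B : Matrix.orthogonalGroup (Fin m) ℝ) (x y : Fin m → ℝ) :
    (B.1 *ᵥ x) ⬝ᵥ (B.1 *ᵥ y) = x ⬝ᵥ y := by
  rw [Matrix.dotProduct_mulVec, Matrix.vecMul_mulVec, ← Matrix.dotProduct_mulVec]
  have := B.2.1
  rw [Matrix.star_eq_conjTranspose, Matrix.conjTranspose_eq_transpose_of_trivial] at this
  rw [this, Matrix.one_mulVec]

section ZonInt
variable {m : ℕ} {ξ₀ : Fin m → ℝ} [MeasurableSpace (soStabilizer m ξ₀)]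
    [BorelSpace (soStabilizer m ξ₀)]
    (ν : Measure (soStabilizer m ξ₀)) [IsProbabilityMeasure ν]

theorem zon_act_cont (x : Fin m → ℝ) :
    Continuous (fun B : soStabilizer m ξ₀ => (B.1.1 *ᵥ x)) := by
  have : Continuous (fun B : soStabilizer m ξ₀ => B.1.1) :=
    continuous_subtype_val.comp continuous_subtype_val
  exact this.matrix_mulVec continuous_const

theorem zon_integrable (Q : MvPolynomial (Fin m) ℂ) (M : Matrix.orthogonalGroup (Fin m) ℝ)
    (x : Fin m → ℝ) (hx : x ⬝ᵥ x = 1) :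
    Integrable (fun B : soStabilizer m ξ₀ => zonEv (M.1 *ᵥ (B.1.1 *ᵥ x)) Q) ν := by
  obtain ⟨K, hK⟩ := zonEv_bdd Q
  refine Integrable.of_bound (C := K) ?_ (Filter.Eventually.of_forall fun B => hK _ ?_)
  · apply Continuous.aestronglyMeasurable
    exact (zonEv_cont Q).comp (continuous_const.matrix_mulVec (zon_act_cont x))
  · rw [zon_orth_dot, zon_orth_dot, hx]

theorem zon_integrable' (Q : MvPolynomial (Fin m) ℂ)
    (x : Fin m → ℝ) (hx : x ⬝ᵥ x = 1) :
    Integrable (fun B : soStabilizer m ξ₀ => zonEv (B.1.1 *ᵥ x) Q) ν := by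
  simpa using zon_integrable ν Q 1 x hx

/-- vector field of a matrix -/
def zonV (A : Matrix (Fin m) (Fin m) ℝ) (Q : MvPolynomial (Fin m) ℂ) : MvPolynomial (Fin m) ℂ :=
  ∑ i, (∑ j, MvPolynomial.C (A i j : ℂ) * MvPolynomial.X j) * MvPolynomial.pderiv i Q

theorem zonV_ev (A : Matrix (Fin m) (Fin m) ℝ) (Q : MvPolynomial (Fin m) ℂ) (x : Fin m → ℝ) :
    zonEv x (zonV A Q) = ∑ i, (((A *ᵥ x) i : ℝ) : ℂ) * zonEv x (MvPolynomial.pderiv i Q) := by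
  simp [zonEv, zonV, Matrix.mulVec, dotProduct]

theorem zon_integral_V [ν.IsMulLeftInvariant] (A : Matrix (Fin m) (Fin m) ℝ) (hA : Aᵀ = -A)
    (hA0 : A *ᵥ ξ₀ = 0) (Q : MvPolynomial (Fin m) ℂ) (x : Fin m → ℝ) (hx : x ⬝ᵥ x = 1) :
    ∫ B : soStabilizer m ξ₀, zonEv (B.1.1 *ᵥ x) (zonV A Q) ∂ν = 0 := by
  have hAt : ∀ t : ℝ, (t • A)ᵀ = -(t • A) := fun t => by rw [Matrix.transpose_smul, hA, smul_neg]
  let M : ℝ → Matrix.orthogonalGroup (Fin m) ℝ := fun t =>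
    ⟨NormedSpace.exp (t • A), zon_exp_orth _ (hAt t)⟩
  let R : ℝ → soStabilizer m ξ₀ := fun t =>
    ⟨M t, zon_exp_det _ (hAt t), zon_exp_fix _ _ (by rw [Matrix.smul_mulVec, hA0, smul_zero])⟩
  have hinv : ∀ t, ∫ B : soStabilizer m ξ₀, zonEv ((M t).1 *ᵥ (B.1.1 *ᵥ x)) Q ∂ν
      = ∫ B : soStabilizer m ξ₀, zonEv (B.1.1 *ᵥ x) Q ∂ν := by
    intro t
    rw [← integral_mul_left_eq_self (fun B : soStabilizer m ξ₀ => zonEv (B.1.1 *ᵥ x) Q) (R t)]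
    refine integral_congr_ae (Filter.Eventually.of_forall fun B => ?_)
    simp only [Matrix.mulVec_mulVec]
    rfl
  obtain ⟨K, hK⟩ := zonEv_bdd (zonV A Q)
  have hd := hasDerivAt_integral_of_dominated_loc_of_deriv_le (μ := ν) (𝕜 := ℝ) (x₀ := 0)
    (s := Set.univ) (bound := fun _ => K)
    (F := fun t (B : soStabilizer m ξ₀) => zonEv ((M t).1 *ᵥ (B.1.1 *ᵥ x)) Q)
    (F' := fun t (B : soStabilizer m ξ₀) => zonEv ((M t).1 *ᵥ (B.1.1 *ᵥ x)) (zonV A Q))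
    Filter.univ_mem
    (Filter.Eventually.of_forall fun t => (zon_integrable ν Q (M t) x hx).aestronglyMeasurable)
    (zon_integrable ν Q (M 0) x hx)
    (zon_integrable ν _ (M 0) x hx).aestronglyMeasurable
    (Filter.Eventually.of_forall fun B t _ => hK _ (by rw [zon_orth_dot, zon_orth_dot, hx]))
    (integrable_const _)
    (Filter.Eventually.of_forall fun B t _ => by
      have h := zon_poly_deriv Q (fun u i => (((M u).1 *ᵥ (B.1.1 *ᵥ x)) i : ℂ))
        (fun i => (((A *ᵥ ((M t).1 *ᵥ (B.1.1 *ᵥ x))) i : ℝ) : ℂ)) t (fun i => by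
          have := zon_exp_deriv A t (B.1.1 *ᵥ x) i
          rw [← Matrix.mulVec_mulVec] at this
          exact this.ofReal_comp)
      rw [zonV_ev]
      exact h)
  have h2 := hd.2
  simp only [hinv] at h2
  have h3 := h2.unique (hasDerivAt_const _ _)
  have h4 : (M 0).1 = 1 := by simp [M]
  simpa [h4] using h3

end ZonInt

/-- projection of a basis vector to the orthogonal complement of `ξ₀` -/
def zonP {m : ℕ} (ξ₀ : Fin m → ℝ) (i l : Fin m) : ℝ := (if i = l then 1 else 0) - ξ₀ i * ξ₀ l

/-- generator of a rotation fixing `ξ₀` -/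
def zonA {m : ℕ} (ξ₀ : Fin m → ℝ) (i j : Fin m) : Matrix (Fin m) (Fin m) ℝ :=
  Matrix.of fun a l => zonP ξ₀ j a * zonP ξ₀ i l - zonP ξ₀ i a * zonP ξ₀ j l

theorem zonA_skew {m : ℕ} (ξ₀ : Fin m → ℝ) (i j : Fin m) : (zonA ξ₀ i j)ᵀ = - zonA ξ₀ i j := by
  ext a l
  simp [zonA]
  ring

theorem zonP_dot {m : ℕ} (ξ₀ : Fin m → ℝ) (h : ξ₀ ⬝ᵥ ξ₀ = 1) (i : Fin m) :
    ∑ l, zonP ξ₀ i l * ξ₀ l = 0 := by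
  have h' : ∑ l, ξ₀ l * ξ₀ l = 1 := h
  simp [zonP, sub_mul, Finset.sum_sub_distrib, mul_assoc, ← Finset.mul_sum, h']

theorem zonA_fix {m : ℕ} (ξ₀ : Fin m → ℝ) (h : ξ₀ ⬝ᵥ ξ₀ = 1) (i j : Fin m) :
    zonA ξ₀ i j *ᵥ ξ₀ = 0 := by
  ext a
  simp [zonA, Matrix.mulVec, dotProduct, sub_mul, Finset.sum_sub_distrib, mul_assoc,
    ← Finset.mul_sum, zonP_dot ξ₀ h]

theorem zonP_sum {m : ℕ} (ξ₀ : Fin m → ℝ) (i : Fin m) (f : Fin m → MvPolynomial (Fin m) ℂ) :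
    ∑ l, MvPolynomial.C (zonP ξ₀ i l : ℂ) * f l
      = f i - MvPolynomial.C (ξ₀ i : ℂ) * ∑ l, MvPolynomial.C (ξ₀ l : ℂ) * f l := by
  have : ∀ l, MvPolynomial.C (zonP ξ₀ i l : ℂ) * f l
      = (if i = l then f l else 0)
        - MvPolynomial.C (ξ₀ i : ℂ) * (MvPolynomial.C (ξ₀ l : ℂ) * f l) := by
    intro l
    simp only [zonP]
    split_ifs <;> simp [sub_mul, mul_assoc]
  simp only [this, Finset.sum_sub_distrib, ← Finset.mul_sum]
  simp

theorem zonV_eq_L {m : ℕ} (ξ₀ : Fin m → ℝ) (i j : Fin m) (Q : MvPolynomial (Fin m) ℂ) :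
    zonV (zonA ξ₀ i j) Q = zonL (fun l => (ξ₀ l : ℂ)) i j Q := by
  have hX := fun i => zonP_sum ξ₀ i MvPolynomial.X
  have hd := fun i => zonP_sum ξ₀ i (fun l => MvPolynomial.pderiv l Q)
  rw [zonL, zonT, zonD, ← hX, ← hX, ← hd, ← hd, zonV, Finset.mul_sum, Finset.mul_sum,
    ← Finset.sum_sub_distrib]
  refine Finset.sum_congr rfl fun a _ => ?_
  have : ∑ l, MvPolynomial.C (zonA ξ₀ i j a l : ℂ) * MvPolynomial.X l
      = MvPolynomial.C (zonP ξ₀ j a : ℂ) * (∑ l, MvPolynomial.C (zonP ξ₀ i l : ℂ) * MvPolynomial.X l)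
        - MvPolynomial.C (zonP ξ₀ i a : ℂ) *
          (∑ l, MvPolynomial.C (zonP ξ₀ j l : ℂ) * MvPolynomial.X l) := by
    rw [Finset.mul_sum, Finset.mul_sum, ← Finset.sum_sub_distrib]
    refine Finset.sum_congr rfl fun l _ => ?_
    simp only [zonA, Matrix.of_apply, Complex.ofReal_sub, Complex.ofReal_mul, map_sub, map_mul]
    ring
  rw [this]
  ring

/-- Zonal averaging on `Sⁿ`: averaging a degree-`k` spherical harmonic over the copy of
`SO(n)` stabilising the north pole `ξ₀` produces the zonal harmonic
`(Y(ξ₀)/C_k^{(n-1)/2}(1)) C_k^{(n-1)/2}(ξ₀ᵀξ)`. -/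
theorem spherical_harmonic_zonal_average
    (n k : ℕ) (hn : 2 ≤ n) (ξ₀ : Fin (n + 1) → ℝ) (hξ₀ : ξ₀ ⬝ᵥ ξ₀ = 1)
    (Y : (Fin (n + 1) → ℝ) → ℂ) (hY : IsSphericalHarmonic' n k Y)
    [MeasurableSpace (soStabilizer (n + 1) ξ₀)]
    [BorelSpace (soStabilizer (n + 1) ξ₀)]
    (ν : Measure (soStabilizer (n + 1) ξ₀)) [IsProbabilityMeasure ν]
    [ν.IsMulLeftInvariant] [ν.IsMulRightInvariant]
    (ξ : Fin (n + 1) → ℝ) (hξ : ξ ⬝ᵥ ξ = 1) :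
    ∫ B : soStabilizer (n + 1) ξ₀,
        Y (((B : Matrix.orthogonalGroup (Fin (n + 1)) ℝ) :
            Matrix (Fin (n + 1)) (Fin (n + 1)) ℝ).mulVec ξ) ∂ν
      = (Y ξ₀ / ((gegenbauer (((n : ℝ) - 1) / 2) k).eval 1 : ℝ))
          * (((gegenbauer (((n : ℝ) - 1) / 2) k).eval (ξ₀ ⬝ᵥ ξ) : ℝ) : ℂ) := by
  obtain ⟨P, hP, hD, hYP⟩ := hY
  let I : MvPolynomial (Fin (n + 1)) ℂ →ₗ[ℂ] ℂ :=
    { toFun := fun Q => ∫ B : soStabilizer (n + 1) ξ₀, zonEv (B.1.1 *ᵥ ξ) Q ∂ν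
      map_add' := fun Q R => by
        rw [← integral_add (zon_integrable' ν Q ξ hξ) (zon_integrable' ν R ξ hξ)]
        simp [zonEv]
      map_smul' := fun c Q => by
        simp only [zonEv, MvPolynomial.smul_eval, RingHom.id_apply, smul_eq_mul]
        rw [integral_const_mul] }
  have hz : ∑ i, ((ξ₀ i : ℂ)) * (ξ₀ i : ℂ) = 1 := by
    have h : ∑ i, ξ₀ i * ξ₀ i = 1 := hξ₀
    exact_mod_cast h
  have hmain := zon_main (fun l => (ξ₀ l : ℂ)) hz n (by simp) hn I (ξ₀ ⬝ᵥ ξ)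
    (by simp [I, zonEv])
    (fun Q => by
      change ∫ B : soStabilizer (n + 1) ξ₀, zonEv (B.1.1 *ᵥ ξ) _ ∂ν
        = _ * ∫ B : soStabilizer (n + 1) ξ₀, zonEv (B.1.1 *ᵥ ξ) Q ∂ν
      rw [← integral_const_mul]
      refine integral_congr_ae (Filter.Eventually.of_forall fun B => ?_)
      have h1 : ξ₀ ⬝ᵥ (B.1.1 *ᵥ ξ) = ξ₀ ⬝ᵥ ξ := by
        have h0 := zon_orth_dot B.1 ξ₀ ξ
        have h2 : B.1.1 *ᵥ ξ₀ = ξ₀ := B.2.2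
        rwa [h2] at h0
      change zonEv _ _ = _ * zonEv _ _
      rw [← h1]
      simp [zonEv, zonT, dotProduct])
    (fun Q => by
      change ∫ B : soStabilizer (n + 1) ξ₀, zonEv (B.1.1 *ᵥ ξ) _ ∂ν
        = ∫ B : soStabilizer (n + 1) ξ₀, zonEv (B.1.1 *ᵥ ξ) Q ∂ν
      refine integral_congr_ae (Filter.Eventually.of_forall fun B => ?_)
      have h1 : ∑ i, (B.1.1 *ᵥ ξ) i * (B.1.1 *ᵥ ξ) i = 1 := (zon_orth_dot B.1 ξ ξ).trans hξ
      have h2 : ∑ i, (((B.1.1 *ᵥ ξ) i : ℝ) : ℂ) * (((B.1.1 *ᵥ ξ) i : ℝ) : ℂ) = 1 := by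
        exact_mod_cast h1
      simp only [zonEv, map_mul, map_sum, MvPolynomial.eval_X]
      rw [h2, one_mul])
    (fun i j Q => by
      rw [← zonV_eq_L]
      exact zon_integral_V ν _ (zonA_skew ξ₀ i j) (zonA_fix ξ₀ hξ₀ i j) Q ξ hξ)
    k P hP hD
  have hn' : (2 : ℝ) ≤ n := by exact_mod_cast hn
  have hpos := zon_geg_pos (((n : ℝ) - 1) / 2) (by linarith) k
  have hne : (((gegenbauer (((n : ℝ) - 1) / 2) k).eval 1 : ℝ) : ℂ) ≠ 0 := by
    exact_mod_cast hpos.ne'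
  have hI : ∫ B : soStabilizer (n + 1) ξ₀, Y (B.1.1 *ᵥ ξ) ∂ν = I P := by
    simp only [hYP]
    rfl
  rw [hI, hYP, div_mul_eq_mul_div, eq_div_iff hne]
  exact hmain

end
end

section
/- Funk-Hecke formula: let f : [-1,1] → ℂ be continuous and Y a spherical harmonic of degree k on Sⁿ. Then ∫_{Sⁿ} f(ξᵀη) Y(ξ) dξ = Y(η) · (|S^{n-1}| / C_k^{(n-1)/2}(1)) · ∫_{-1}^{1} f(t) C_k^{(n-1)/2}(t) (1-t²)^{n/2-1} dt for every η ∈ Sⁿ. -/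
open MeasureTheory
open scoped RealInnerProductSpace

noncomputable section

/-- The surface area `|Sᵐ|` of the unit sphere `Sᵐ ⊂ ℝ^{m+1}`. -/
def sphereArea (m : ℕ) : ℝ :=
  (((volume : Measure (EuclideanSpace ℝ (Fin (m + 1)))).toSphere) Set.univ).toReal


/-- Gaussian moments of Hermite polynomials. -/
def hmom : ℕ → ℕ → ℝ
  | 0, 0 => 1
  | 0, (_ + 1) => 0
  | 1, 0 => 0
  | (m + 2), 0 => ((m : ℝ) + 1) * hmom m 0
  | (m + 1), (k + 1) => ((m : ℝ) + 1) * hmom m k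

lemma hmom_succ_succ (m k : ℕ) : hmom (m + 1) (k + 1) = ((m : ℝ) + 1) * hmom m k := by
  cases m <;> simp [hmom]

lemma hmom_add_two (m k : ℕ) : hmom m (k + 2) = ((m : ℝ) - k) * hmom m k := by
  induction k generalizing m with
  | zero =>
    match m with
    | 0 => simp [hmom]
    | 1 => simp [hmom]
    | m + 2 =>
      rw [show 0 + 2 = 1 + 1 from rfl, hmom_succ_succ (m+1) 1, hmom_succ_succ m 0]
      simp only [hmom]
      push_cast; ring
  | succ k ih =>
    cases m with
    | zero => simp [hmom]
    | succ m =>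
      rw [show k + 1 + 2 = (k + 2) + 1 from rfl, hmom_succ_succ, hmom_succ_succ, ih]
      push_cast; ring

lemma hmom_step (m k : ℕ) :
    hmom (m + 1) k = (m : ℝ) * hmom (m - 1) k + k * hmom m (k - 1) := by
  cases m with
  | zero =>
    match k with
    | 0 => simp [hmom]
    | 1 => simp [hmom]
    | k + 2 => simp [hmom]
  | succ m =>
    simp only [Nat.add_sub_cancel]
    match k with
    | 0 => simp [hmom]
    | 1 =>
      rw [hmom_succ_succ (m+1) 0]
      cases m with
      | zero => simp [hmom]
      | succ m => 
        rw [hmom_succ_succ m 0]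
        simp [hmom]; ring
    | k + 2 =>
      rw [hmom_succ_succ (m+1) (k+1), hmom_add_two]
      simp only [show k + 2 - 1 = k + 1 from rfl]
      rw [hmom_succ_succ]
      push_cast; ring

section alg
open MvPolynomial
variable {ι : Type*} [Fintype ι]

lemma pderiv_comm' (i j : ι) (P : MvPolynomial ι ℂ) :
    pderiv i (pderiv j P) = pderiv j (pderiv i P) := by
  classical
  have h : ⁅(pderiv i : Derivation ℂ (MvPolynomial ι ℂ) (MvPolynomial ι ℂ)),
      (pderiv j : Derivation ℂ (MvPolynomial ι ℂ) (MvPolynomial ι ℂ))⁆ = 0 := by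
    apply MvPolynomial.derivation_ext
    intro l
    rw [Derivation.commutator_apply]
    simp [pderiv_X, Pi.single_apply]
    split_ifs <;> simp
  have := congrArg (fun D => D P) h
  rw [Derivation.commutator_apply] at this
  simpa [sub_eq_zero] using this

/-- directional derivative -/
def dirD (η : ι → ℂ) : Derivation ℂ (MvPolynomial ι ℂ) (MvPolynomial ι ℂ) :=
  ∑ i, η i • pderiv i

/-- The linear form. -/
def linL (η : ι → ℂ) : MvPolynomial ι ℂ := ∑ i, η i • X i

lemma dirD_apply (η : ι → ℂ) (P : MvPolynomial ι ℂ) : dirD η P = ∑ i, η i • pderiv i P := by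
  have := map_sum (Derivation.coeFnAddMonoidHom (R := ℂ) (A := MvPolynomial ι ℂ)
    (M := MvPolynomial ι ℂ)) (fun i => η i • pderiv i) Finset.univ
  have h2 := congrFun this P
  rw [Finset.sum_apply] at h2
  exact h2

lemma dirD_linL (η : ι → ℂ) (h : ∑ i, η i ^ 2 = 1) : dirD η (linL η) = 1 := by
  classical
  rw [dirD_apply]
  simp only [linL, map_sum, Derivation.map_smul, pderiv_X, Pi.single_apply]
  simp only [smul_ite, smul_zero, Finset.sum_ite_eq', Finset.mem_univ, if_true, smul_smul, ← Finset.sum_smul]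
  simp only [← pow_two, h, one_smul]

lemma dirD_homog (η : ι → ℂ) {P : MvPolynomial ι ℂ} {k : ℕ} (hP : P.IsHomogeneous k) :
    (dirD η P).IsHomogeneous (k - 1) := by
  rw [dirD_apply]
  apply MvPolynomial.IsHomogeneous.sum
  intro i _
  exact (MvPolynomial.homogeneousSubmodule ι ℂ (k-1)).smul_mem _ hP.pderiv

lemma dirD_harm (η : ι → ℂ) {P : MvPolynomial ι ℂ} 
    (hP : ∑ i, pderiv i (pderiv i P) = 0) :
    ∑ i, pderiv i (pderiv i (dirD η P)) = 0 := by
  simp only [dirD_apply, map_sum, Derivation.map_smul]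
  rw [Finset.sum_comm]
  have : ∀ j, ∑ i, η j • pderiv i (pderiv i (pderiv j P)) = 0 := by
    intro j
    rw [← Finset.smul_sum]
    have : ∑ i, pderiv i (pderiv i (pderiv j P)) = pderiv j (∑ i, pderiv i (pderiv i P)) := by
      rw [map_sum]
      refine Finset.sum_congr rfl fun i _ => ?_
      rw [pderiv_comm' i j P, pderiv_comm' i j]
    rw [this, hP]; simp
  simp [this]

lemma dirD_eval (η : ι → ℂ) {P : MvPolynomial ι ℂ} {k : ℕ} (hP : P.IsHomogeneous k) :
    eval η (dirD η P) = k * eval η P := by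
  have := congrArg (eval η) hP.sum_X_mul_pderiv
  simpa [dirD_apply, smul_eval] using this

lemma gauss_alg (E : MvPolynomial ι ℂ →ₗ[ℂ] ℂ)
    (hE : ∀ i Q, E (X i * Q) = E (pderiv i Q)) (η : ι → ℂ) (h : ∑ i, η i ^ 2 = 1)
    (m k : ℕ) (P : MvPolynomial ι ℂ) (hP : P.IsHomogeneous k)
    (hH : ∑ i, pderiv i (pderiv i P) = 0) :
    E (linL η ^ m * P) = hmom m k * eval η P * E 1 := by
  have hL : ∀ Q, E (linL η * Q) = E (dirD η Q) := by
    intro Q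
    simp [linL, dirD_apply, Finset.sum_mul, hE]
  induction m using Nat.strong_induction_on generalizing k P with
  | _ m ih =>
    cases m with
    | zero =>
      cases k with
      | zero =>
        obtain ⟨c, rfl⟩ : ∃ c, P = C c := ⟨_, (totalDegree_eq_zero_iff_eq_C.1 (by
          simpa using hP.totalDegree_le))⟩
        have : (C c : MvPolynomial ι ℂ) = c • 1 := by simp [smul_eq_C_mul]
        simp [hmom, this, smul_eval]
      | succ k =>
        have h1 := congrArg E hP.sum_X_mul_pderiv
        simp only [map_sum, hE, map_nsmul] at h1
        rw [← map_sum, hH] at h1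
        have : E P = 0 := by
          simp at h1
          rcases h1 with h1 | h1
          · exfalso; exact (Nat.cast_add_one_ne_zero (R := ℂ) k) h1
          · exact h1
        simp [this, hmom]
    | succ m =>
      rw [pow_succ', mul_assoc, hL, Derivation.leibniz, Derivation.leibniz_pow, dirD_linL η h]
      simp only [smul_eq_mul, mul_one, map_add, nsmul_eq_mul]
      rw [ih m (by omega) (k-1) _ (dirD_homog η hP) (dirD_harm η hH), dirD_eval η hP]
      have e2 : E (P * (↑m * linL η ^ (m-1))) = m * (hmom (m-1) k * eval η P * E 1) := by
        cases m with
        | zero => simp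
        | succ m =>
          rw [show m + 1 - 1 = m from rfl, ← ih m (by omega) k P hP hH]
          rw [show P * (((m+1 : ℕ) : MvPolynomial ι ℂ) * linL η ^ m) = ((m+1 : ℕ) : ℂ) • (linL η ^ m * P) by
            simp [smul_eq_C_mul]; ring]
          simp
      rw [e2, hmom_step]
      push_cast; ring
end alg


section gauss
open MvPolynomial
variable {ι : Type*} [Fintype ι]

lemma poly_cont (Q : MvPolynomial ι ℂ) :
    Continuous fun x : EuclideanSpace ℝ ι => eval (fun i => (x i : ℂ)) Q := by
  have := MvPolynomial.continuous_eval Q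
  exact this.comp (by fun_prop)

lemma poly_bound (Q : MvPolynomial ι ℂ) : ∀ b : ℝ, 0 < b → ∃ K : ℝ, 
    ∀ x : EuclideanSpace ℝ ι, ‖eval (fun i => (x i : ℂ)) Q‖ ≤ K * Real.exp (b * ‖x‖ ^ 2) := by
  induction Q using MvPolynomial.induction_on with
  | C a =>
    intro b hb
    refine ⟨‖a‖, fun x => ?_⟩
    simp only [eval_C]
    have : 1 ≤ Real.exp (b * ‖x‖ ^ 2) := Real.one_le_exp (by positivity)
    nlinarith [norm_nonneg a]
  | add p q hp hq =>
    intro b hb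
    obtain ⟨K, hK⟩ := hp b hb
    obtain ⟨K', hK'⟩ := hq b hb
    refine ⟨K + K', fun x => ?_⟩
    rw [map_add, add_mul]
    exact (norm_add_le _ _).trans (add_le_add (hK x) (hK' x))
  | mul_X p i hp =>
    intro b hb
    obtain ⟨K, hK⟩ := hp (b/2) (by positivity)
    refine ⟨K * (1 + 2 / b), fun x => ?_⟩
    rw [map_mul, norm_mul, eval_X, Complex.norm_real]
    have h1 : ‖x i‖ ≤ ‖x‖ := PiLp.norm_apply_le x i
    have h2 : ‖x‖ ≤ (1 + 2 / b) * Real.exp (b / 2 * ‖x‖ ^ 2) := by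
      have h3 : ‖x‖ ≤ 1 + ‖x‖ ^ 2 := by nlinarith [sq_nonneg (‖x‖ - 1), norm_nonneg x]
      have h4 := Real.add_one_le_exp (b / 2 * ‖x‖ ^ 2)
      have h5 : ‖x‖ ^ 2 = 2 / b * (b / 2 * ‖x‖ ^ 2) := by field_simp
      have h6 : 1 ≤ Real.exp (b / 2 * ‖x‖ ^ 2) := Real.one_le_exp (by positivity)
      have h7 : 0 < 2 / b := by positivity
      calc ‖x‖ ≤ 1 + ‖x‖ ^ 2 := h3
        _ ≤ 1 * Real.exp (b / 2 * ‖x‖ ^ 2) + 2 / b * Real.exp (b / 2 * ‖x‖ ^ 2) := by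
          have h8 : 2 / b * (b / 2 * ‖x‖ ^ 2) ≤ 2 / b * Real.exp (b / 2 * ‖x‖ ^ 2) :=
            mul_le_mul_of_nonneg_left (by linarith) h7.le
          linarith
        _ = _ := by ring
    calc _ ≤ (K * Real.exp (b / 2 * ‖x‖ ^ 2)) * ((1 + 2 / b) * Real.exp (b / 2 * ‖x‖ ^ 2)) :=
          mul_le_mul (hK x) (h1.trans h2) (norm_nonneg _) ((norm_nonneg _).trans (hK x))
      _ = K * (1 + 2 / b) * (Real.exp (b / 2 * ‖x‖ ^ 2) * Real.exp (b / 2 * ‖x‖ ^ 2)) := by ring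
      _ = _ := by rw [← Real.exp_add]; ring_nf

/-- Gaussian weight -/
def gw (x : EuclideanSpace ℝ ι) : ℂ := ((Real.exp (-(1 / 2) * ‖x‖ ^ 2) : ℝ) : ℂ)

lemma gw_cont : Continuous (gw (ι := ι)) := by unfold gw; fun_prop

lemma gauss_integrable (Q : MvPolynomial ι ℂ) :
    Integrable fun x : EuclideanSpace ℝ ι => eval (fun i => (x i : ℂ)) Q * gw x := by
  obtain ⟨K, hK⟩ := poly_bound Q (1/4) (by norm_num)
  have h0 : Integrable fun x : EuclideanSpace ℝ ι => K * Real.exp (-(1/4) * ‖x‖^2) := by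
    apply Integrable.const_mul
    have := (GaussianFourier.integrable_cexp_neg_mul_sq_norm_add (V := EuclideanSpace ℝ ι)
      (b := (1/4 : ℂ)) (by norm_num) 0 0).norm
    refine this.congr (Filter.Eventually.of_forall fun x => ?_)
    simp [Complex.norm_exp]
    norm_cast
  refine h0.mono' ((poly_cont Q).mul gw_cont).aestronglyMeasurable
    (Filter.Eventually.of_forall fun x => ?_)
  rw [norm_mul, gw, Complex.norm_real, Real.norm_of_nonneg (Real.exp_pos _).le]
  calc _ ≤ (K * Real.exp (1/4 * ‖x‖^2)) * Real.exp (-(1 / 2) * ‖x‖ ^ 2) := by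
        gcongr; exact hK x
    _ = _ := by rw [mul_assoc, ← Real.exp_add]; ring_nf

/-- Gaussian integration functional. -/
def gE : MvPolynomial ι ℂ →ₗ[ℂ] ℂ where
  toFun Q := ∫ x : EuclideanSpace ℝ ι, eval (fun i => (x i : ℂ)) Q * gw x
  map_add' P Q := by
    simp only [map_add, add_mul]
    exact integral_add (gauss_integrable P) (gauss_integrable Q)
  map_smul' c Q := by
    simp only [smul_eval, mul_assoc, RingHom.id_apply, smul_eq_mul]
    exact integral_const_mul _ _

lemma gE_apply (Q : MvPolynomial ι ℂ) :
  gE Q = ∫ x : EuclideanSpace ℝ ι, eval (fun i => (x i : ℂ)) Q * gw x := rfl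

lemma gE_one : gE (1 : MvPolynomial ι ℂ) = (((2 * Real.pi) ^ ((Fintype.card ι : ℝ) / 2) : ℝ) : ℂ) := by
  rw [gE_apply]
  simp only [map_one, one_mul, gw]
  rw [integral_complex_ofReal, GaussianFourier.integral_rexp_neg_mul_sq_norm (by norm_num)]
  simp
  congr 1; ring

lemma poly_lineDeriv [DecidableEq ι] (Q : MvPolynomial ι ℂ) (i : ι) (x : EuclideanSpace ℝ ι) :
    HasLineDerivAt ℝ (fun x : EuclideanSpace ℝ ι => eval (fun i => (x i : ℂ)) Q)
      (eval (fun i => (x i : ℂ)) (pderiv i Q)) x (EuclideanSpace.single i 1) := by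
  unfold HasLineDerivAt
  induction Q using MvPolynomial.induction_on with
  | C a => simpa using hasDerivAt_const _ _
  | add p q hp hq => 
    simp only [map_add]
    exact hp.add hq
  | mul_X p j hp =>
    have h1 : HasDerivAt (fun t : ℝ => (((x + t • EuclideanSpace.single i (1:ℝ)) j : ℝ) : ℂ))
      (if i = j then 1 else 0) 0 := by
      have : HasDerivAt (fun t : ℝ => (x + t • EuclideanSpace.single i (1:ℝ)) j)
         (if i = j then 1 else 0) 0 := by
        simp only [PiLp.add_apply, PiLp.smul_apply, PiLp.single_apply]
        have := ((hasDerivAt_id (0:ℝ)).smul_const (if j = i then (1:ℝ) else 0)).const_add (x j)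
        simpa [eq_comm] using this
      convert! this.ofReal_comp using 1
      split_ifs <;> simp
    have := hp.mul h1
    have e : ∀ y : EuclideanSpace ℝ ι, eval (fun i => (y i : ℂ)) (p * X j)
      = eval (fun i => (y i : ℂ)) p * (y j : ℂ) := fun y => by simp
    simp_rw [e]
    convert! this using 1
    by_cases hij : i = j
    · subst hij
      simp [pderiv_X]
      ring
    · simp [pderiv_X, hij, Pi.single_apply, Ne.symm hij]
      ring

lemma gw_lineDeriv [DecidableEq ι] (i : ι) (x : EuclideanSpace ℝ ι) :
    HasLineDerivAt ℝ (gw (ι := ι)) (-(x i : ℂ) * gw x) x (EuclideanSpace.single i 1) := by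
  unfold HasLineDerivAt gw
  have h0 : ∀ t : ℝ, ‖x + t • EuclideanSpace.single i (1:ℝ)‖^2 = ‖x‖^2 + 2 * t * x i + t^2 := by
    intro t
    rw [norm_add_sq_real, norm_smul]
    simp [inner_smul_right, EuclideanSpace.inner_single_right]
    ring
  simp only [h0]
  have : HasDerivAt (fun t : ℝ => Real.exp (-(1/2) * (‖x‖^2 + 2 * t * x i + t^2)))
      (Real.exp (-(1/2) * (‖x‖^2 + 2 * 0 * x i + 0^2)) * (-(1/2) * (2 * x i + 2 * 0))) 0 := by
    apply HasDerivAt.exp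
    apply HasDerivAt.const_mul
    apply HasDerivAt.add
    · apply HasDerivAt.const_add
      simpa using ((hasDerivAt_id (0:ℝ)).const_mul 2).mul_const (x i)
    · simpa using hasDerivAt_pow 2 (0:ℝ)
  convert! this.ofReal_comp using 1
  push_cast
  simp
  ring

lemma gE_ibp (i : ι) (Q : MvPolynomial ι ℂ) : gE (X i * Q) = gE (pderiv i Q) := by
  classical
  have h := integral_bilinear_hasLineDerivAt_right_eq_neg_left_of_integrable
    (μ := (volume : Measure (EuclideanSpace ℝ ι)))
    (B := ContinuousLinearMap.mul ℝ ℂ)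
    (f := fun x : EuclideanSpace ℝ ι => eval (fun i => (x i : ℂ)) Q)
    (f' := fun x : EuclideanSpace ℝ ι => eval (fun i => (x i : ℂ)) (pderiv i Q))
    (g := gw) (g' := fun x => -(x i : ℂ) * gw x) (v := EuclideanSpace.single i 1)
    (gauss_integrable _) ?_ (gauss_integrable _) (fun x _ => poly_lineDeriv Q i x) (fun x _ => gw_lineDeriv i x)
  · simp only [ContinuousLinearMap.mul_apply'] at h
    rw [gE_apply, gE_apply, ← neg_eq_iff_eq_neg.2 h.symm.symm, ← integral_neg]
    congr 1; ext x; simp; ring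
  · have := (gauss_integrable (X i * Q)).neg
    refine this.congr (Filter.Eventually.of_forall fun x => ?_)
    simp; ring
end gauss


/-- Radial integral. -/
def radI (p : ℕ) : ℝ := 2 ^ (((p : ℝ) - 1) / 2) * Real.Gamma (((p : ℝ) + 1) / 2)

lemma radI_pos (p : ℕ) : 0 < radI p := by
  unfold radI
  have : 0 < Real.Gamma (((p : ℝ) + 1) / 2) := Real.Gamma_pos_of_pos (by positivity)
  positivity

lemma radI_add_two (p : ℕ) : radI (p + 2) = ((p : ℝ) + 1) * radI p := by
  unfold radI
  rw [show (((p + 2 : ℕ) : ℝ) + 1) / 2 = ((p : ℝ) + 1) / 2 + 1 by push_cast; ring,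
    Real.Gamma_add_one (by positivity),
    show (((p + 2 : ℕ) : ℝ) - 1) / 2 = ((p : ℝ) - 1) / 2 + 1 by push_cast; ring,
    Real.rpow_add_one (by norm_num)]
  ring

lemma radI_eq (p : ℕ) : ∫ r in Set.Ioi (0:ℝ), r ^ p * Real.exp (-(1 / 2) * r ^ 2) = radI p := by
  have h := integral_rpow_mul_exp_neg_mul_rpow (p := 2) (q := p) (b := 1/2) (by norm_num)
    (by have : (0:ℝ) ≤ p := by positivity
        linarith) (by norm_num)
  simp only [Real.rpow_natCast, Real.rpow_two] at h
  rw [h, radI]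
  have : (1/2 : ℝ) ^ (-((p:ℝ) + 1) / 2) = 2 ^ (((p : ℝ) - 1) / 2) * 2 := by
    rw [← Real.rpow_add_one (by norm_num), one_div, Real.inv_rpow (by norm_num),
      ← Real.rpow_neg (by norm_num)]
    congr 1; ring
  rw [this]; ring

lemma polar_homog {N : ℕ} (hN : 0 < N) (d : ℕ) (F : EuclideanSpace ℝ (Fin N) → ℂ)
    (hF : ∀ (r : ℝ) x, F (r • x) = (r : ℂ) ^ d * F x) :
    ∫ x : EuclideanSpace ℝ (Fin N), F x * ((Real.exp (-(1 / 2) * ‖x‖ ^ 2) : ℝ) : ℂ)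
      = (∫ ξ : Metric.sphere (0 : EuclideanSpace ℝ (Fin N)) 1, F ξ
          ∂(volume : Measure (EuclideanSpace ℝ (Fin N))).toSphere) * radI (d + (N - 1)) := by
  set μ := (volume : Measure (EuclideanSpace ℝ (Fin N)))
  have : Nontrivial (EuclideanSpace ℝ (Fin N)) := by
    have : Nonempty (Fin N) := ⟨⟨0, hN⟩⟩
    infer_instance
  have hdim : Module.finrank ℝ (EuclideanSpace ℝ (Fin N)) = N := by simp
  calc
    ∫ x, F x * ((Real.exp (-(1 / 2) * ‖x‖ ^ 2) : ℝ) : ℂ) ∂μ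
      = ∫ x : ({(0)}ᶜ : Set (EuclideanSpace ℝ (Fin N))), 
         F x.1 * ((Real.exp (-(1 / 2) * ‖x.1‖ ^ 2) : ℝ) : ℂ) ∂(μ.comap (↑)) := by
      rw [integral_subtype_comap (measurableSet_singleton _).compl
        fun x ↦ F x * ((Real.exp (-(1 / 2) * ‖x‖ ^ 2) : ℝ) : ℂ),
        restrict_compl_singleton]
    _ = ∫ z, F z.1.1 * ((z.2.1 ^ d * Real.exp (-(1 / 2) * z.2.1 ^ 2) : ℝ) : ℂ) 
          ∂μ.toSphere.prod (.volumeIoiPow (Module.finrank ℝ (EuclideanSpace ℝ (Fin N)) - 1)) := by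
      rw [← μ.measurePreserving_homeomorphUnitSphereProd.integral_comp
        (Homeomorph.measurableEmbedding _)]
      congr 1; ext x
      have hx : (x : EuclideanSpace ℝ (Fin N)) = ‖x.1‖ • (‖x.1‖⁻¹ • x.1) := by
        rw [smul_smul, mul_inv_cancel₀ (norm_ne_zero_iff.2 x.2), one_smul]
      simp only [homeomorphUnitSphereProd_apply_snd_coe, homeomorphUnitSphereProd_apply_fst_coe]
      nth_rewrite 1 [hx]
      rw [hF]
      push_cast
      ring
    _ = (∫ ξ, F ξ.1 ∂μ.toSphere) * ∫ r : Set.Ioi (0:ℝ), ((r.1 ^ d * Real.exp (-(1 / 2) * r.1 ^ 2) : ℝ) : ℂ) 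
         ∂.volumeIoiPow (Module.finrank ℝ (EuclideanSpace ℝ (Fin N)) - 1) := 
      integral_prod_mul (fun ξ : Metric.sphere (0 : EuclideanSpace ℝ (Fin N)) 1 => F ξ.1)
        (fun r : Set.Ioi (0:ℝ) => ((r.1 ^ d * Real.exp (-(1 / 2) * r.1 ^ 2) : ℝ) : ℂ))
    _ = _ := by
      congr 1
      rw [integral_complex_ofReal, hdim]
      congr 1
      rw [← radI_eq]
      simp only [Measure.volumeIoiPow, ENNReal.ofReal]
      rw [integral_withDensity_eq_integral_smul,
        integral_subtype_comap measurableSet_Ioi fun a : ℝ ↦ Real.toNNReal (a ^ (N - 1)) • 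
          (a ^ d * Real.exp (-(1 / 2) * a ^ 2)),
        setIntegral_congr_fun measurableSet_Ioi fun x hx ↦ ?_]
      · rw [NNReal.smul_def, Real.coe_toNNReal _ (pow_nonneg (Set.mem_Ioi.1 hx).le _), smul_eq_mul]
        ring
      · exact (measurable_subtype_coe.pow_const _).real_toNNReal

lemma sphereArea_aux (m : ℕ) :
    (((volume : Measure (EuclideanSpace ℝ (Fin (m + 1)))).toSphere) Set.univ).toReal * radI m = 
      (2 * Real.pi) ^ (((m : ℝ) + 1) / 2) := by
  have h := polar_homog (N := m+1) (by omega) 0 (fun _ => 1) (by simp)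
  simp only [one_mul] at h
  rw [integral_complex_ofReal, GaussianFourier.integral_rexp_neg_mul_sq_norm (by norm_num)] at h
  simp only [integral_const, Measure.real, zero_add, Nat.add_sub_cancel] at h
  have h' : (Real.pi / (1 / 2)) ^ ((Module.finrank ℝ (EuclideanSpace ℝ (Fin (m + 1))) : ℝ) / 2) =
    (((volume : Measure (EuclideanSpace ℝ (Fin (m + 1)))).toSphere) Set.univ).toReal * radI m := by
    rw [Complex.real_smul, mul_one] at h
    exact_mod_cast h
  rw [← h']
  simp
  congr 1; ring

/-- The weight. -/
def wt (n : ℕ) (t : ℝ) : ℝ := (1 - t ^ 2) ^ ((n : ℝ) / 2 - 1)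

lemma wt_cont {n : ℕ} (hn : 2 ≤ n) : Continuous (wt n) := by
  unfold wt
  have : (2:ℝ) ≤ n := by exact_mod_cast hn
  exact Continuous.rpow_const (by fun_prop) fun x => Or.inr (by linarith)

/-- Moments of the weight -/
def wmom (n m : ℕ) : ℝ := ∫ t in (-1:ℝ)..1, t ^ m * wt n t

lemma beta_real {s : ℝ} (hs : 0 ≤ s) :
    ∫ u in (0:ℝ)..1, u ^ s * (1 - u) ^ s = Real.Gamma (s+1) * Real.Gamma (s+1) / Real.Gamma (2 * (s + 1)) := by
  have h := Complex.betaIntegral_eq_Gamma_mul_div ((s + 1 : ℝ) : ℂ) ((s + 1 : ℝ) : ℂ)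
    (by simp; linarith) (by simp; linarith)
  rw [Complex.betaIntegral] at h
  apply Complex.ofReal_injective
  rw [← intervalIntegral.integral_ofReal]
  rw [← Complex.ofReal_add, Complex.Gamma_ofReal, Complex.Gamma_ofReal, ← two_mul] at h
  push_cast at h ⊢
  rw [← h]
  apply intervalIntegral.integral_congr
  intro u hu
  rw [Set.uIcc_of_le zero_le_one] at hu
  simp only [add_sub_cancel_right]
  rw [Complex.ofReal_cpow hu.1, Complex.ofReal_cpow (by linarith [hu.2])]
  push_cast; rfl

lemma wmom_zero {n : ℕ} (hn : 2 ≤ n) : wmom n 0 * radI n = Real.sqrt (2 * Real.pi) * radI (n - 1) := by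
  have hn' : (2:ℝ) ≤ n := by exact_mod_cast hn
  set s : ℝ := (n:ℝ)/2 - 1 with hs
  have hs0 : 0 ≤ s := by rw [hs]; linarith
  have h1 : wmom n 0 = 2 * (4 ^ s * ∫ u in (0:ℝ)..1, u ^ s * (1 - u) ^ s) := by
    have h2 := intervalIntegral.integral_comp_mul_sub (a := 0) (b := 1) (wt n) (c := 2) (by norm_num) 1
    simp only [mul_zero, zero_sub, mul_one, smul_eq_mul, show (2:ℝ) - 1 = 1 by norm_num] at h2
    rw [← intervalIntegral.integral_const_mul]
    have : wmom n 0 = ∫ t in (-1:ℝ)..1, wt n t := by simp [wmom]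
    rw [this, show ∫ t in (-1:ℝ)..1, wt n t = 2 * (2⁻¹ * ∫ t in (-1:ℝ)..1, wt n t) by ring, ← h2]
    congr 1
    apply intervalIntegral.integral_congr
    intro u hu
    rw [Set.uIcc_of_le zero_le_one] at hu
    have : 0 ≤ 1 - u := by linarith [hu.2]
    simp only [wt, ← hs]
    rw [show 1 - (2 * u - 1)^2 = 4 * (u * (1 - u)) by ring, 
      Real.mul_rpow (by norm_num) (mul_nonneg hu.1 this), Real.mul_rpow hu.1 this]
  rw [h1, beta_real hs0]
  have h3 := Real.Gamma_mul_Gamma_add_half (s + 1)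
  unfold radI
  rw [Nat.cast_sub (by omega)]
  rw [show ((n:ℝ) + 1) / 2 = s + 1 + 1/2 by rw [hs]; ring,
    show (((n:ℝ) - (1:ℕ)) + 1) / 2 = s + 1 by rw [hs]; push_cast; ring,
    show ((n:ℝ) - 1) / 2 = s + 1 / 2 by rw [hs]; ring,
    show ((n:ℝ) - (1:ℕ) - 1) / 2 = s by rw [hs]; push_cast; ring]
  have hG : Real.Gamma (2 * (s+1)) ≠ 0 := (Real.Gamma_pos_of_pos (by positivity)).ne'
  have h4 : (4:ℝ) ^ s = 2 ^ s * 2 ^ s := by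
    rw [← Real.mul_rpow (by norm_num) (by norm_num)]; norm_num
  have h5 : (2:ℝ) ^ (1 - 2 * (s+1)) = (2 ^ s * 2 ^ s * 2)⁻¹ := by
    rw [← Real.rpow_add (by norm_num), ← Real.rpow_add_one (by norm_num), ← Real.rpow_neg (by norm_num)]
    congr 1; ring
  have h6 : (2:ℝ) ^ (s + 1/2) = 2 ^ s * Real.sqrt 2 := by
    rw [Real.rpow_add (by norm_num), Real.sqrt_eq_rpow]
  rw [h5] at h3
  rw [h4, h6, Real.sqrt_mul (by norm_num)]
  have h7 : (2:ℝ) ^ s ≠ 0 := by positivity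
  field_simp at h3 ⊢
  linear_combination h3

lemma wmom_step {n : ℕ} (hn : 2 ≤ n) (m : ℕ) :
    ((m:ℝ) + n + 1) * wmom n (m + 2) = ((m:ℝ) + 1) * wmom n m := by
  have hn' : (2:ℝ) ≤ n := by exact_mod_cast hn
  have hw := wt_cont hn
  have h := intervalIntegral.integral_eq_sub_of_hasDerivAt (a := (-1:ℝ)) (b := 1)
    (f := fun t => t ^ (m+1) * (1 - t^2) ^ ((n:ℝ)/2))
    (f' := fun t => ((m:ℝ)+1) * (t ^ m * wt n t) - ((m:ℝ) + n + 1) * (t ^ (m+2) * wt n t)) ?_ ?_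
  · rw [intervalIntegral.integral_sub, intervalIntegral.integral_const_mul,
      intervalIntegral.integral_const_mul] at h
    · simp only [wmom]
      have h0 : (0:ℝ) ^ ((n:ℝ)/2) = 0 := Real.zero_rpow (by positivity)
      norm_num [h0] at h
      linarith
    · apply Continuous.intervalIntegrable; fun_prop
    · apply Continuous.intervalIntegrable; fun_prop
  · intro t ht
    rw [Set.uIcc_of_le (by norm_num)] at ht
    have hnn : 0 ≤ 1 - t^2 := by nlinarith [ht.1, ht.2]
    have h1 : HasDerivAt (fun t : ℝ => (1 - t^2) ^ ((n:ℝ)/2)) 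
      ((-(2 * t)) * ((n:ℝ)/2) * (1 - t^2) ^ ((n:ℝ)/2 - 1)) t := by
      have h2 : HasDerivAt (fun t : ℝ => 1 - t^2) (-(2*t)) t := by
        simpa using (hasDerivAt_pow 2 t).const_sub 1
      exact h2.rpow_const (Or.inr (by linarith))
    have h3 := (hasDerivAt_pow (m+1) t).mul h1
    convert! h3 using 1
    have h4 : (1 - t^2) ^ ((n:ℝ)/2) = (1 - t^2) * wt n t := by
      unfold wt
      rcases hnn.eq_or_lt with h5 | h5
      · rw [← h5, zero_mul, Real.zero_rpow (by positivity)]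
      · rw [← Real.rpow_one_add' hnn (by linarith)]; congr 1; ring
    rw [h4]
    simp only [wt]
    push_cast
    ring
  · apply Continuous.intervalIntegrable; fun_prop

lemma wmom_one (n : ℕ) : wmom n 1 = 0 := by
  have h := intervalIntegral.integral_comp_neg (a := (-1:ℝ)) (b := 1) (fun t => t ^ 1 * wt n t)
  simp only [neg_neg] at h
  have h2 : ∫ t in (-1:ℝ)..1, (-t)^1 * wt n (-t) = - wmom n 1 := by
    rw [wmom, ← intervalIntegral.integral_neg]
    congr 1; ext t; simp [wt]
  rw [h2] at h
  have h3 : - wmom n 1 = wmom n 1 := h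
  linarith

lemma weier (f : ℝ → ℂ) (hf : Continuous f) (ε : ℝ) (hε : 0 < ε) :
    ∃ q : Polynomial ℂ, ∀ t ∈ Set.Icc (-1:ℝ) 1, ‖f t - q.eval (t : ℂ)‖ ≤ ε := by
  obtain ⟨p, hp⟩ := exists_polynomial_near_of_continuousOn (-1) 1 (fun t => (f t).re)
    (Complex.continuous_re.comp hf).continuousOn (ε/2) (by positivity)
  obtain ⟨p', hp'⟩ := exists_polynomial_near_of_continuousOn (-1) 1 (fun t => (f t).im)
    (Complex.continuous_im.comp hf).continuousOn (ε/2) (by positivity)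
  refine ⟨p.map (algebraMap ℝ ℂ) + Polynomial.C Complex.I * p'.map (algebraMap ℝ ℂ), fun t ht => ?_⟩
  have h1 : ∀ p : Polynomial ℝ, (p.map (algebraMap ℝ ℂ)).eval (t : ℂ) = ((p.eval t : ℝ) : ℂ) := by
    intro p
    rw [Polynomial.eval_map]
    exact Polynomial.eval₂_at_apply (algebraMap ℝ ℂ) t
  have h2 : f t - (p.map (algebraMap ℝ ℂ) + Polynomial.C Complex.I * p'.map (algebraMap ℝ ℂ)).eval (t : ℂ)
    = ((f t).re - p.eval t : ℝ) + Complex.I * ((f t).im - p'.eval t : ℝ) := by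
    rw [Polynomial.eval_add, Polynomial.eval_mul, Polynomial.eval_C, h1, h1]
    nth_rewrite 1 [← Complex.re_add_im (f t)]
    push_cast; ring
  rw [h2]
  refine (norm_add_le _ _).trans ?_
  rw [norm_mul, Complex.norm_I, one_mul, Complex.norm_real, Complex.norm_real, Real.norm_eq_abs,
    Real.norm_eq_abs, abs_sub_comm, abs_sub_comm (f t).im]
  linarith [hp t ht, hp' t ht]

section approx
variable {X : Type*} [MeasurableSpace X] (μ : Measure X) (φ : X → ℝ)
    (g : X → ℂ)

lemma approx_int (hφ : Measurable φ) (hφ1 : ∀ᵐ x ∂μ, φ x ∈ Set.Icc (-1:ℝ) 1) (hg : Integrable g μ)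
    (f : ℝ → ℂ) (hf : Continuous f) : Integrable (fun x => f (φ x) * g x) μ := by
  obtain ⟨K, hK⟩ := isCompact_Icc.exists_bound_of_continuousOn (s := Set.Icc (-1:ℝ) 1) hf.continuousOn
  exact hg.bdd_mul (hf.measurable.comp hφ).aestronglyMeasurable (c := K)
    (hφ1.mono fun x hx => hK _ hx)

lemma approx_poly (hφ : Measurable φ) (hφ1 : ∀ᵐ x ∂μ, φ x ∈ Set.Icc (-1:ℝ) 1) (hg : Integrable g μ)
    (q : Polynomial ℂ) : ∫ x, q.eval (φ x : ℂ) * g x ∂μ =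
      ∑ m ∈ q.support, q.coeff m * ∫ x, (φ x : ℂ) ^ m * g x ∂μ := by
  simp only [← integral_const_mul]
  rw [← integral_finsetSum]
  · congr 1; ext x
    rw [Polynomial.eval_eq_sum, Polynomial.sum, Finset.sum_mul]
    simp only [mul_assoc]
  · intro m _
    apply Integrable.const_mul
    exact approx_int μ φ g hφ hφ1 hg (fun t => (t : ℂ) ^ m) (by fun_prop)

lemma approx_eq {X' : Type*} [MeasurableSpace X'] (μ' : Measure X') (φ' : X' → ℝ)
    (g' : X' → ℂ) (hφ : Measurable φ) (hφ1 : ∀ᵐ x ∂μ, φ x ∈ Set.Icc (-1:ℝ) 1) (hg : Integrable g μ)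
    (hφ' : Measurable φ') (hφ1' : ∀ᵐ x ∂μ', φ' x ∈ Set.Icc (-1:ℝ) 1) (hg' : Integrable g' μ')
    (hm : ∀ m : ℕ, ∫ x, (φ x : ℂ) ^ m * g x ∂μ = ∫ x, (φ' x : ℂ) ^ m * g' x ∂μ')
    (f : ℝ → ℂ) (hf : Continuous f) :
    ∫ x, f (φ x) * g x ∂μ = ∫ x, f (φ' x) * g' x ∂μ' := by
  have key : ∀ {Z : Type _} [MeasurableSpace Z] (μ : Measure Z) (φ : Z → ℝ) (g : Z → ℂ)
    (hφ : Measurable φ) (hφ1 : ∀ᵐ x ∂μ, φ x ∈ Set.Icc (-1:ℝ) 1) (hg : Integrable g μ)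
    (q : Polynomial ℂ) (ε : ℝ) (hq : ∀ t ∈ Set.Icc (-1:ℝ) 1, ‖f t - q.eval (t : ℂ)‖ ≤ ε),
    ‖∫ x, f (φ x) * g x ∂μ - ∫ x, q.eval (φ x : ℂ) * g x ∂μ‖ ≤ ε * ∫ x, ‖g x‖ ∂μ := by
    intro Z _ μ φ g hφ hφ1 hg q ε hq
    rw [← integral_sub (approx_int μ φ g hφ hφ1 hg f hf)
      (approx_int μ φ g hφ hφ1 hg (fun t => q.eval (t:ℂ)) (by fun_prop)), ← integral_const_mul]
    apply norm_integral_le_of_norm_le (hg.norm.const_mul _)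
    filter_upwards [hφ1] with x hx
    rw [← sub_mul, norm_mul]
    gcongr
    exact hq _ hx
  have key' : ∀ {Z : Type _} [MeasurableSpace Z] (μ : Measure Z) (φ : Z → ℝ) (g : Z → ℂ)
    (hφ : Measurable φ) (hφ1 : ∀ᵐ x ∂μ, φ x ∈ Set.Icc (-1:ℝ) 1) (hg : Integrable g μ)
    (q : Polynomial ℂ) (ε : ℝ) (hq : ∀ t ∈ Set.Icc (-1:ℝ) 1, ‖f t - q.eval (t : ℂ)‖ ≤ ε),
    ‖∫ x, f (φ x) * g x ∂μ - ∫ x, q.eval (φ x : ℂ) * g x ∂μ‖ ≤ ε * ∫ x, ‖g x‖ ∂μ := by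
    intro Z _ μ φ g hφ hφ1 hg q ε hq
    rw [← integral_sub (approx_int μ φ g hφ hφ1 hg f hf)
      (approx_int μ φ g hφ hφ1 hg (fun t => q.eval (t:ℂ)) (by fun_prop)), ← integral_const_mul]
    apply norm_integral_le_of_norm_le (hg.norm.const_mul _)
    filter_upwards [hφ1] with x hx
    rw [← sub_mul, norm_mul]
    gcongr
    exact hq _ hx
  set K := ∫ x, ‖g x‖ ∂μ + ∫ x, ‖g' x‖ ∂μ' with hKdef
  have hK : 0 ≤ K := add_nonneg (integral_nonneg fun _ => norm_nonneg _)
    (integral_nonneg fun _ => norm_nonneg _)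
  rw [← sub_eq_zero, ← norm_le_zero_iff]
  apply le_of_forall_pos_le_add
  intro δ hδ
  obtain ⟨q, hq⟩ := weier f hf (δ / (K + 1)) (by positivity)
  have h1 := key μ φ g hφ hφ1 hg q _ hq
  have h2 := key' μ' φ' g' hφ' hφ1' hg' q _ hq
  have h3 : ∫ x, q.eval (φ x : ℂ) * g x ∂μ = ∫ x, q.eval (φ' x : ℂ) * g' x ∂μ' := by
    rw [approx_poly μ φ g hφ hφ1 hg, approx_poly μ' φ' g' hφ' hφ1' hg']
    simp only [hm]
  rw [h3] at h1
  have h4 : δ / (K + 1) * K ≤ δ := by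
    rw [div_mul_eq_mul_div, div_le_iff₀ (by positivity)]; nlinarith
  rw [norm_sub_rev] at h2
  have h5 := norm_sub_le_norm_sub_add_norm_sub (∫ x, f (φ x) * g x ∂μ)
    (∫ x, q.eval (φ' x : ℂ) * g' x ∂μ') (∫ x, f (φ' x) * g' x ∂μ')
  have h6 : δ / (K + 1) * K = δ / (K + 1) * (∫ x, ‖g x‖ ∂μ) + δ / (K + 1) * ∫ x, ‖g' x‖ ∂μ' := by
    rw [hKdef]; ring
  linarith
end approx

lemma geg_one_succ {lam : ℝ} (k : ℕ) :
    ((k:ℝ) + 1) * (gegenbauer lam (k+1)).eval 1 = ((k:ℝ) + 2 * lam) * (gegenbauer lam k).eval 1 := by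
  induction k with
  | zero => simp [gegenbauer]
  | succ k ih =>
    simp only [gegenbauer, Polynomial.eval_sub, Polynomial.eval_mul, Polynomial.eval_C, Polynomial.eval_X]
    push_cast
    have : (k:ℝ) + 2 ≠ 0 := by positivity
    have : (k:ℝ) + 1 + 1 ≠ 0 := by positivity
    field_simp
    linear_combination ((k:ℝ)+2) * ih

lemma geg_one_pos {lam : ℝ} (h : 0 < lam) (k : ℕ) : 0 < (gegenbauer lam k).eval 1 := by
  induction k with
  | zero => simp [gegenbauer]
  | succ k ih =>
    have := geg_one_succ (lam := lam) k
    have h2 : 0 < ((k:ℝ) + 2 * lam) * (gegenbauer lam k).eval 1 := by positivity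
    rw [← this] at h2
    exact pos_of_mul_pos_right h2 (by positivity)

/-- Gegenbauer moments -/
def gm (n k m : ℕ) : ℝ :=
  ∫ t in (-1:ℝ)..1, t ^ m * ((gegenbauer (((n:ℝ) - 1) / 2) k).eval t * wt n t)

lemma gm_eq {n : ℕ} (hn : 2 ≤ n) (k m : ℕ) :
    sphereArea (n - 1) * gm n k m * radI (m + k + n) =
      (gegenbauer (((n:ℝ) - 1) / 2) k).eval 1 * hmom m k * (2 * Real.pi) ^ (((n:ℝ) + 1) / 2) := by
  have hw := wt_cont hn
  have hA : sphereArea (n - 1) * radI (n - 1) = (2 * Real.pi) ^ ((n:ℝ) / 2) := by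
    have := sphereArea_aux (n - 1)
    rw [sphereArea, this, Nat.cast_sub (by omega)]
    congr 1; push_cast; ring
  set A := sphereArea (n - 1)
  set Z := (2 * Real.pi) ^ (((n:ℝ) + 1) / 2) with hZ
  have hZ' : Z = (2 * Real.pi) ^ ((n:ℝ) / 2) * Real.sqrt (2 * Real.pi) := by
    rw [hZ, Real.sqrt_eq_rpow, ← Real.rpow_add (by positivity)]
    congr 1; ring
  have h0 : ∀ m, A * wmom n m * radI (m + n) = hmom m 0 * Z := by
    intro m
    induction m using Nat.twoStepInduction with
    | zero =>
      have := wmom_zero hn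
      rw [zero_add, hZ', ← hA]
      simp only [hmom]
      linear_combination A * this
    | one => simp [wmom_one, hmom]
    | more m ih _ =>
      have h1 := wmom_step hn m
      rw [show m + 2 + n = (m + n) + 2 by ring, radI_add_two]
      simp only [hmom]
      push_cast
      linear_combination ((m:ℝ) + 1) * ih + A * radI (m+n) * h1
  set lam := ((n:ℝ) - 1) / 2 with hlam
  have hn2 : (n:ℝ) = 2 * lam + 1 := by rw [hlam]; ring
  have hg0 : ∀ m, gm n 0 m = wmom n m := by intro m; simp [gm, wmom, gegenbauer]
  induction k using Nat.twoStepInduction generalizing m with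
  | zero =>
    rw [hg0, add_zero, h0]
    simp [gegenbauer]
  | one =>
    have h1 : gm n 1 m = 2 * lam * wmom n (m+1) := by
      rw [wmom, ← intervalIntegral.integral_const_mul, gm]
      congr 1; ext t
      simp [gegenbauer, ← hlam]; ring
    have h2 : hmom m 1 = hmom (m+1) 0 := by
      cases m with
      | zero => simp [hmom]
      | succ m => rw [hmom_succ_succ m 0]; simp [hmom]
    rw [h1, h2]
    simp [gegenbauer]
    linear_combination 2 * lam * h0 (m+1)
  | more k ih1 ih2 =>
    have h1 : gm n (k+2) m = (2 * ((k : ℝ) + 1 + lam) / ((k : ℝ) + 2)) * gm n (k+1) (m+1)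
        - (((k : ℝ) + 2 * lam) / ((k : ℝ) + 2)) * gm n k m := by
      simp only [gm, ← intervalIntegral.integral_const_mul]
      rw [← intervalIntegral.integral_sub]
      · congr 1; ext t
        simp [gegenbauer, ← hlam]; ring
      · apply Continuous.intervalIntegrable; fun_prop
      · apply Continuous.intervalIntegrable; fun_prop
    have e1 := ih1 m
    have e2 := ih2 (m+1)
    have c1 := geg_one_succ (lam := lam) k
    have c2 := geg_one_succ (lam := lam) (k+1)
    rw [show m + 1 + (k + 1) + n = (m + k + n) + 2 by ring, radI_add_two, hmom_succ_succ] at e2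
    rw [show m + (k + 2) + n = (m + k + n) + 2 by ring, radI_add_two, hmom_add_two, h1]
    rw [show k + 1 + 1 = k + 2 from rfl] at c2
    generalize (gegenbauer lam (k+2)).eval 1 = G2 at *
    generalize (gegenbauer lam (k+1)).eval 1 = G1 at *
    generalize (gegenbauer lam k).eval 1 = G0 at *
    push_cast at *
    rw [hn2] at e2 ⊢
    have hk : (k:ℝ) + 2 ≠ 0 := by positivity
    have hk1 : (k:ℝ) + 1 ≠ 0 := by positivity
    have c1' : G1 = ((k:ℝ) + 2 * lam) * G0 / (k + 1) := by field_simp; linarith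
    have c2' : G2 = ((k:ℝ) + 1 + 2 * lam) * G1 / (k + 2) := by field_simp; linarith
    have key : A * (2 * ((k:ℝ) + 1 + lam) / (k + 2) * gm n (k + 1) (m + 1) - (k + 2 * lam) / (k + 2) * gm n k m) *
      ((m + k + (2 * lam + 1) + 1) * radI (m + k + n)) = 
      2 * ((k:ℝ) + 1 + lam) / (k + 2) * (G1 * (((m:ℝ) + 1) * hmom m k) * Z)
      - (k + 2 * lam) / (k + 2) * (m + k + (2 * lam + 1) + 1) * (G0 * hmom m k * Z) := by
      rw [← e1, ← e2]; ring
    rw [key, c2', c1']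
    field_simp
    ring

lemma sphere_moment {n : ℕ} (k m : ℕ) (P : MvPolynomial (Fin (n + 1)) ℂ) (hP : P.IsHomogeneous k)
    (hH : (∑ i, MvPolynomial.pderiv i (MvPolynomial.pderiv i P)) = 0)
    (η : Metric.sphere (0 : EuclideanSpace ℝ (Fin (n + 1))) 1) :
    (∫ ξ : Metric.sphere (0 : EuclideanSpace ℝ (Fin (n + 1))) 1,
        ((⟪(ξ : EuclideanSpace ℝ (Fin (n + 1))), (η : EuclideanSpace ℝ (Fin (n + 1)))⟫ : ℝ) : ℂ) ^ m
          * MvPolynomial.eval (fun i => ((ξ : EuclideanSpace ℝ (Fin (n + 1))) i : ℂ)) P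
        ∂(volume : Measure (EuclideanSpace ℝ (Fin (n + 1)))).toSphere) * radI (m + k + n)
      = hmom m k * MvPolynomial.eval (fun i => ((η : EuclideanSpace ℝ (Fin (n + 1))) i : ℂ)) P
        * (((2 * Real.pi) ^ (((n:ℝ) + 1) / 2) : ℝ) : ℂ) := by
  have hη : ∑ i, (((η : EuclideanSpace ℝ (Fin (n + 1))) i : ℝ) : ℂ) ^ 2 = 1 := by
    have h1 : ‖(η : EuclideanSpace ℝ (Fin (n + 1)))‖ = 1 := by simp
    have h2 := EuclideanSpace.real_norm_sq_eq (η : EuclideanSpace ℝ (Fin (n + 1)))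
    rw [h1] at h2
    have h3 : ((∑ i, (η : EuclideanSpace ℝ (Fin (n + 1))) i ^ 2 : ℝ) : ℂ) = 1 := by
      rw [← h2]; simp
    rw [← h3]; push_cast; rfl
  have h := gauss_alg gE gE_ibp (fun i => (((η : EuclideanSpace ℝ (Fin (n + 1))) i : ℝ) : ℂ)) hη m k P hP hH
  rw [gE_one] at h
  simp only [Fintype.card_fin, Nat.cast_add, Nat.cast_one] at h
  rw [← h, gE_apply]
  have hL : ∀ x : EuclideanSpace ℝ (Fin (n + 1)),
      MvPolynomial.eval (fun i => (x i : ℂ))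
        (linL (fun i => (((η : EuclideanSpace ℝ (Fin (n + 1))) i : ℝ) : ℂ)))
      = ((⟪x, (η : EuclideanSpace ℝ (Fin (n + 1)))⟫ : ℝ) : ℂ) := by
    intro x
    simp only [linL, map_sum, MvPolynomial.smul_eval, MvPolynomial.eval_X]
    simp [PiLp.inner_apply]
  simp only [map_mul, map_pow, hL, gw]
  rw [polar_homog (by omega) (m + k)]
  · simp only [Nat.add_sub_cancel]
  · intro r x
    have h1 : MvPolynomial.eval (fun i => (((r • x) i : ℝ) : ℂ)) P
        = (r : ℂ) ^ k * MvPolynomial.eval (fun i => (x i : ℂ)) P := by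
      rw [MvPolynomial.eval_eq', MvPolynomial.eval_eq', Finset.mul_sum]
      refine Finset.sum_congr rfl fun d hd => ?_
      have hdk : ∑ i, d i = k := by
        have h2 := hP (MvPolynomial.mem_support_iff.1 hd)
        rw [← h2, Finsupp.weight_apply, Finsupp.sum_fintype _ _ (by simp)]
        simp
      simp only [PiLp.smul_apply, smul_eq_mul, Complex.ofReal_mul, mul_pow,
        Finset.prod_mul_distrib, Finset.prod_pow_eq_pow_sum, hdk]
      ring
    rw [h1, real_inner_smul_left]
    push_cast
    ring

/-- The Funk–Hecke formula on `Sⁿ`: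
`∫_{Sⁿ} f(ξᵀη) Y(ξ) dξ = Y(η) (|S^{n-1}|/C_k^{(n-1)/2}(1)) ∫_{-1}^1 f(t) C_k^{(n-1)/2}(t) (1-t²)^{n/2-1} dt`. -/
theorem funk_hecke
    (n k : ℕ) (hn : 2 ≤ n)
    (σ : Measure (Metric.sphere (0 : EuclideanSpace ℝ (Fin (n + 1))) 1))
    (hσ : σ = (volume : Measure (EuclideanSpace ℝ (Fin (n + 1)))).toSphere)
    (f : ℝ → ℂ) (hf : ContinuousOn f (Set.Icc (-1) 1))
    (Y : EuclideanSpace ℝ (Fin (n + 1)) → ℂ) (hY : IsSphericalHarmonic n k Y)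
    (η : Metric.sphere (0 : EuclideanSpace ℝ (Fin (n + 1))) 1) :
    ∫ ξ : Metric.sphere (0 : EuclideanSpace ℝ (Fin (n + 1))) 1,
        f ⟪(ξ : EuclideanSpace ℝ (Fin (n + 1))), (η : EuclideanSpace ℝ (Fin (n + 1)))⟫ * Y ξ ∂σ
      = Y η * ((sphereArea (n - 1) / (gegenbauer (((n : ℝ) - 1) / 2) k).eval 1 : ℝ) : ℂ)
          * ∫ t in (-1 : ℝ)..1,
              f t * (((gegenbauer (((n : ℝ) - 1) / 2) k).eval t : ℝ) : ℂ)
                * (((1 - t ^ 2) ^ ((n : ℝ) / 2 - 1) : ℝ) : ℂ) := by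
  obtain ⟨P, hP, hH, hYP⟩ := hY
  subst hσ
  have hn' : (2:ℝ) ≤ n := by exact_mod_cast hn
  have hc : 0 < (gegenbauer (((n : ℝ) - 1) / 2) k).eval 1 := geg_one_pos (by linarith) k
  have hw := wt_cont hn
  have hYc : Continuous Y := by
    have : Y = fun x => MvPolynomial.eval (fun i => (x i : ℂ)) P := funext hYP
    rw [this]; exact poly_cont P
  have hin : ∀ ξ : Metric.sphere (0 : EuclideanSpace ℝ (Fin (n + 1))) 1,
      ⟪(ξ : EuclideanSpace ℝ (Fin (n + 1))), (η : EuclideanSpace ℝ (Fin (n + 1)))⟫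
        ∈ Set.Icc (-1:ℝ) 1 := by
    intro ξ
    have := abs_real_inner_le_norm (ξ : EuclideanSpace ℝ (Fin (n + 1))) η
    simp only [norm_eq_of_mem_sphere, mul_one] at this
    exact abs_le.1 this
  -- replace `f` by a continuous extension
  set F : ℝ → ℂ := Set.IccExtend (by norm_num : (-1:ℝ) ≤ 1) (Set.domRestrict (Set.Icc (-1:ℝ) 1) f) with hF
  have hFc : Continuous F := (continuousOn_iff_continuous_domRestrict.1 hf).Icc_extend'
  have hFf : ∀ t ∈ Set.Icc (-1:ℝ) 1, f t = F t := by
    intro t ht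
    rw [hF, Set.IccExtend_of_mem _ _ ht]; rfl
  set κ : ℂ := Y η * ((sphereArea (n - 1) / (gegenbauer (((n : ℝ) - 1) / 2) k).eval 1 : ℝ) : ℂ) with hκ
  set g' : ℝ → ℂ := fun t => κ * (((gegenbauer (((n : ℝ) - 1) / 2) k).eval t * wt n t : ℝ) : ℂ) with hg'
  have hg'c : Continuous g' := by rw [hg']; fun_prop
  have hL : ∫ ξ : Metric.sphere (0 : EuclideanSpace ℝ (Fin (n + 1))) 1,
        f ⟪(ξ : EuclideanSpace ℝ (Fin (n + 1))), (η : EuclideanSpace ℝ (Fin (n + 1)))⟫ * Y ξ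
          ∂(volume : Measure (EuclideanSpace ℝ (Fin (n + 1)))).toSphere
      = ∫ ξ : Metric.sphere (0 : EuclideanSpace ℝ (Fin (n + 1))) 1,
        F ⟪(ξ : EuclideanSpace ℝ (Fin (n + 1))), (η : EuclideanSpace ℝ (Fin (n + 1)))⟫ * Y ξ
          ∂(volume : Measure (EuclideanSpace ℝ (Fin (n + 1)))).toSphere := by
    congr 1; ext ξ
    rw [hFf _ (hin ξ)]
  have hR : κ * (∫ t in (-1 : ℝ)..1,
              f t * (((gegenbauer (((n : ℝ) - 1) / 2) k).eval t : ℝ) : ℂ)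
                * (((1 - t ^ 2) ^ ((n : ℝ) / 2 - 1) : ℝ) : ℂ))
      = ∫ t in Set.Ioc (-1:ℝ) 1, F t * g' t := by
    rw [← intervalIntegral.integral_const_mul, ← intervalIntegral.integral_of_le (by norm_num)]
    apply intervalIntegral.integral_congr
    intro t ht
    rw [Set.uIcc_of_le (by norm_num)] at ht
    simp only [hg', wt, hFf t ht]
    push_cast
    ring
  rw [hL, hR]
  have hYi : Integrable (fun ξ : Metric.sphere (0 : EuclideanSpace ℝ (Fin (n + 1))) 1 => Y ξ)
      (volume : Measure (EuclideanSpace ℝ (Fin (n + 1)))).toSphere := by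
    have hc2 : Continuous (fun ξ : Metric.sphere (0 : EuclideanSpace ℝ (Fin (n + 1))) 1 => Y ξ) :=
      hYc.comp continuous_subtype_val
    exact hc2.integrable_of_hasCompactSupport (HasCompactSupport.of_compactSpace _)
  refine approx_eq _ (fun ξ : Metric.sphere (0 : EuclideanSpace ℝ (Fin (n + 1))) 1 =>
      ⟪(ξ : EuclideanSpace ℝ (Fin (n + 1))), (η : EuclideanSpace ℝ (Fin (n + 1)))⟫)
    (fun ξ => Y ξ) _ (fun t => t) g' ?_ (Filter.Eventually.of_forall hin) hYi measurable_id
    ?_ ?_ ?_ F hFc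
  · exact (continuous_subtype_val.inner continuous_const).measurable
  · filter_upwards [ae_restrict_mem measurableSet_Ioc] with t ht
    exact Set.Ioc_subset_Icc_self ht
  · exact (hg'c.integrableOn_Icc).mono_set Set.Ioc_subset_Icc_self
  · intro m
    have hrad : (radI (m + k + n) : ℂ) ≠ 0 := by exact_mod_cast (radI_pos _).ne'
    have h1 := sphere_moment k m P hP hH η
    simp only [← hYP] at h1
    have h2 := gm_eq hn k m
    have h3 : ∫ t in Set.Ioc (-1:ℝ) 1, (t : ℂ) ^ m * g' t = κ * (gm n k m : ℂ) := by
      rw [gm, ← intervalIntegral.integral_ofReal, ← intervalIntegral.integral_const_mul,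
        ← intervalIntegral.integral_of_le (by norm_num)]
      congr 1; ext t
      simp only [hg']
      push_cast
      ring
    rw [h3]
    apply mul_right_cancel₀ hrad
    rw [h1, hκ]
    have h4 : sphereArea (n - 1) / (gegenbauer (((n : ℝ) - 1) / 2) k).eval 1 * gm n k m
        * radI (m + k + n) = hmom m k * (2 * Real.pi) ^ (((n:ℝ) + 1) / 2) := by
      rw [div_mul_eq_mul_div, div_mul_eq_mul_div, h2]
      field_simp
    have h5 := congrArg (fun x : ℝ => (x : ℂ)) h4
    simp only [Complex.ofReal_mul] at h5
    linear_combination (-(Y η)) * h5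

end
end

section
/- For the group S³ of unit quaternions, the character of the (n+1)-dimensional irreducible representation t_n depends only on the scalar part: tr t_n(x) = C_n^1(x₀) where x₀ = Sc(x) is the real (scalar) part of the unit quaternion x; equivalently, tr t_n(x) = sin((n+1)θ)/sin(θ) when x₀ = cos θ. -/
open Matrix

noncomputable section

/-- The group `S³` of unit quaternions. -/
abbrev unitQuaternions := Metric.sphere (0 : Quaternion ℝ) 1


namespace CharQ
open MeasureTheory Measure Set Metric
open scoped ENNReal Pointwise

instance instMeasH : MeasurableSpace (Quaternion ℝ) := borel _
instance instBorelH : BorelSpace (Quaternion ℝ) := ⟨rfl⟩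

lemma lintegral_volumeIoiPow (n : ℕ) (f : ℝ → ℝ≥0∞) (hf : Measurable f) :
    ∫⁻ r, f r.1 ∂(volumeIoiPow n) = ∫⁻ r in Ioi (0:ℝ), ENNReal.ofReal (r ^ n) * f r := by
  rw [volumeIoiPow, lintegral_withDensity_eq_lintegral_mul _ (by fun_prop) (by fun_prop)]
  exact lintegral_subtype_comap measurableSet_Ioi (fun r : ℝ => ENNReal.ofReal (r ^ n) * f r)

lemma lintegral_polar {E : Type*} [NormedAddCommGroup E] [NormedSpace ℝ E] [MeasurableSpace E]
    [BorelSpace E] [FiniteDimensional ℝ E] [Nontrivial E] (μ : Measure E) [μ.IsAddHaarMeasure]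
    (f : E → ℝ≥0∞) :
    ∫⁻ x, f x ∂μ = ∫⁻ p, f (p.2.1 • p.1.1)
      ∂(μ.toSphere.prod (volumeIoiPow (Module.finrank ℝ E - 1))) := by
  have h := μ.measurePreserving_homeomorphUnitSphereProd
  have h2 := h.symm (homeomorphUnitSphereProd E).toMeasurableEquiv
  have h3 := h2.lintegral_comp_emb (MeasurableEquiv.measurableEmbedding _)
    (fun x : ({0}ᶜ : Set E) => f x)
  have h4 : ∫⁻ x, f x ∂μ = ∫⁻ x : ({0}ᶜ : Set E), f x ∂(μ.comap (↑)) := by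
    rw [lintegral_subtype_comap (measurableSet_singleton _).compl f, restrict_compl_singleton]
  rw [h4, ← h3]
  rfl

lemma lintegral_norm {E : Type*} [NormedAddCommGroup E] [NormedSpace ℝ E] [MeasurableSpace E]
    [BorelSpace E] [FiniteDimensional ℝ E] [Nontrivial E] (μ : Measure E) [μ.IsAddHaarMeasure]
    (f : ℝ → ℝ≥0∞) (hf : Measurable f) :
    ∫⁻ x, f ‖x‖ ∂μ = μ.toSphere univ *
      ∫⁻ r in Ioi (0:ℝ), ENNReal.ofReal (r ^ (Module.finrank ℝ E - 1)) * f r := by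
  rw [lintegral_polar, ← lintegral_volumeIoiPow _ _ hf]
  have : ∀ p : sphere (0:E) 1 × Ioi (0:ℝ), f ‖p.2.1 • p.1.1‖ = 1 * f p.2.1 := by
    intro p
    rw [norm_smul, mem_sphere_zero_iff_norm.1 p.1.2, Real.norm_of_nonneg (le_of_lt p.2.2)]; simp
  simp_rw [this]
  have := lintegral_prod_mul (μ := μ.toSphere) (ν := volumeIoiPow (Module.finrank ℝ E - 1))
    (f := fun _ => 1) (g := fun r => f r.1) (by fun_prop) (by fun_prop)
  rw [this]
  simp

lemma lintegral_even (h : ℝ → ℝ≥0∞) (he : ∀ x, h (-x) = h x) :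
    ∫⁻ r, h r = 2 * ∫⁻ r in Ioi (0:ℝ), h r := by
  have h1 : ∫⁻ r in Iic (0:ℝ), h r = ∫⁻ r in Ioi (0:ℝ), h r := by
    have := (Measure.measurePreserving_neg (volume : Measure ℝ)).setLIntegral_comp_preimage_emb
      (MeasurableEquiv.neg ℝ).measurableEmbedding h (Iio 0)
    rw [setLIntegral_congr Iio_ae_eq_Iic.symm, ← this]
    simp [he]
  rw [← lintegral_add_compl h (measurableSet_Ioi (a := (0:ℝ))), compl_Ioi, h1, two_mul]

abbrev E3 := EuclideanSpace ℝ (Fin 3)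

def eqv : (ℝ × E3) ≃ₗ[ℝ] Quaternion ℝ where
  toFun p := ⟨p.1, p.2 0, p.2 1, p.2 2⟩
  map_add' p q := by ext <;> rfl
  map_smul' c p := by ext <;> rfl
  invFun x := (x.re, !₂[x.imI, x.imJ, x.imK])
  left_inv p := by
    ext i
    · rfl
    · fin_cases i <;> rfl
  right_inv x := by ext <;> rfl

instance : FiniteDimensional ℝ (Quaternion ℝ) := eqv.finiteDimensional

def eqvL : (ℝ × E3) ≃L[ℝ] Quaternion ℝ := eqv.toContinuousLinearEquiv

lemma norm_eqvL (a : ℝ) (v : E3) : ‖eqvL (a, v)‖ = Real.sqrt (a ^ 2 + ‖v‖ ^ 2) := by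
  rw [← Real.sqrt_sq (norm_nonneg (eqvL (a, v))), sq, ← Quaternion.normSq_eq_norm_mul_self,
    Quaternion.normSq_def', EuclideanSpace.real_norm_sq_eq, Fin.sum_univ_three]
  congr 1
  change a^2 + v 0 ^2 + v 1 ^ 2 + v 2 ^ 2 = _
  ring

lemma re_eqvL (a : ℝ) (v : E3) : (eqvL (a, v)).re = a := rfl

def muH : Measure (Quaternion ℝ) := Measure.map eqvL volume

instance : muH.IsAddHaarMeasure := by
  unfold muH
  have : (volume : Measure (ℝ × E3)).IsAddHaarMeasure :=
    inferInstanceAs ((volume : Measure ℝ).prod (volume : Measure E3)).IsAddHaarMeasure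
  exact ContinuousLinearEquiv.isAddHaarMeasure_map eqvL volume

abbrev nu : Measure unitQuaternions := muH.toSphere

/-- unnormalized Weyl formula -/
lemma weyl_aux : ∃ D : ℝ≥0∞, ∀ g : ℝ → ℝ≥0∞, Measurable g →
    ∫⁻ x : unitQuaternions, g (x : Quaternion ℝ).re ∂nu =
      D * ∫⁻ θ in Ioo (-Real.pi) Real.pi, ENNReal.ofReal (Real.sin θ ^ 2) * g (Real.cos θ) := by
  have hfin : Module.finrank ℝ (Quaternion ℝ) - 1 = 3 := by
    rw [Quaternion.finrank_eq_four]
  set w : ℝ → ℝ≥0∞ := indicator (Iio 1) 1 with hw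
  have hwm : Measurable w := measurable_one.indicator measurableSet_Iio
  set K : ℝ≥0∞ := ∫⁻ r, w r.1 ∂(volumeIoiPow 3) with hK
  have hK4 : K = ENNReal.ofReal (1/4) := by
    have : K = volumeIoiPow 3 (Iio (⟨1, mem_Ioi.2 one_pos⟩ : Ioi (0:ℝ))) := by
      rw [← lintegral_indicator_one measurableSet_Iio]
      rfl
    rw [this, volumeIoiPow_apply_Iio]; norm_num
  have hK0 : K ≠ 0 := by rw [hK4]; simp
  have hKt : K ≠ ∞ := by rw [hK4]; simp
  set V := (volume : Measure E3).toSphere univ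
  set K2 : ℝ≥0∞ := ∫⁻ r in Ioi (0:ℝ), ENNReal.ofReal (r ^ 3) * w r
  refine ⟨V * 2⁻¹ * K2 * K⁻¹, fun g hg => ?_⟩
  set f : Quaternion ℝ → ℝ≥0∞ := fun x => g (x.re / ‖x‖) * w ‖x‖ with hf
  have h1 : ∫⁻ x, f x ∂muH = (∫⁻ x : unitQuaternions, g (x : Quaternion ℝ).re ∂nu) * K := by
    rw [lintegral_polar, hfin, hK, ← lintegral_prod_mul]
    · refine lintegral_congr fun p => ?_
      have hn : ‖p.2.1 • p.1.1‖ = p.2.1 := by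
        rw [norm_smul, mem_sphere_zero_iff_norm.1 p.1.2, Real.norm_of_nonneg (le_of_lt p.2.2)]; simp
      simp only [hf, hn]
      congr 2
      have : p.2.1 ≠ 0 := (ne_of_gt p.2.2)
      rw [Quaternion.re_smul, smul_eq_mul]; field_simp
    · exact (hg.comp (Quaternion.continuous_re.comp continuous_subtype_val).measurable).aemeasurable
    · fun_prop
  have hgm : Measurable f := by
    have := Quaternion.continuous_re.measurable
    fun_prop
  set F : ℝ → ℝ → ℝ≥0∞ := fun a r => g (a / √(a^2+r^2)) * w (√(a^2+r^2)) with hF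
  have hFm : Measurable (Function.uncurry F) := by
    simp only [hF, Function.uncurry_def]; fun_prop
  have h2 : ∫⁻ x, f x ∂muH = ∫⁻ a : ℝ, ∫⁻ v : E3, F a ‖v‖ := by
    rw [muH, lintegral_map hgm eqvL.continuous.measurable, volume_eq_prod, lintegral_prod]
    · simp only [hf, norm_eqvL, re_eqvL, hF]
    · exact (hgm.comp eqvL.continuous.measurable).aemeasurable
  have h3 : ∀ a, ∫⁻ v : E3, F a ‖v‖ = V * (2⁻¹ * ∫⁻ r, ENNReal.ofReal (r ^ 2) * F a r) := by
    intro a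
    rw [lintegral_norm volume (F a) (hFm.comp measurable_prodMk_left)]
    congr 1
    rw [lintegral_even, ← mul_assoc, ENNReal.inv_mul_cancel (by simp) (by simp), one_mul]
    · simp
    · intro x; simp [hF]
  have h4 : ∫⁻ a : ℝ, ∫⁻ r : ℝ, ENNReal.ofReal (r ^ 2) * F a r =
      K2 * ∫⁻ θ in Ioo (-Real.pi) Real.pi, ENNReal.ofReal (Real.sin θ ^ 2) * g (Real.cos θ) := by
    have hm : Measurable (fun p : ℝ × ℝ => ENNReal.ofReal (p.2 ^ 2) * F p.1 p.2) := by
      have : Measurable fun p : ℝ × ℝ => F p.1 p.2 := hFm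
      fun_prop
    rw [← lintegral_prod (fun p : ℝ × ℝ => ENNReal.ofReal (p.2 ^ 2) * F p.1 p.2) hm.aemeasurable,
      ← volume_eq_prod, ← lintegral_comp_polarCoord_symm, polarCoord_target, volume_eq_prod,
      ← Measure.prod_restrict, ← lintegral_prod_mul]
    · rw [Measure.prod_restrict]
      refine setLIntegral_congr_fun (measurableSet_Ioi.prod measurableSet_Ioo) ?_
      rintro ⟨r, θ⟩ ⟨hr, -⟩
      have hr : 0 < r := hr
      have e1 : √((r * Real.cos θ)^2 + (r * Real.sin θ)^2) = r := by
        rw [← Real.sqrt_sq hr.le]; congr 1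
        rw [Real.sqrt_sq hr.le]
        linear_combination r^2 * Real.sin_sq_add_cos_sq θ
      simp only [polarCoord_symm_apply, hF, e1, smul_eq_mul]
      have e2 : r * Real.cos θ / r = Real.cos θ := by field_simp
      rw [e2, mul_pow, ENNReal.ofReal_mul (by positivity), pow_succ' r 2, ENNReal.ofReal_mul hr.le]
      ring
    · fun_prop
    · fun_prop
  have h5 : (∫⁻ x : unitQuaternions, g (x : Quaternion ℝ).re ∂nu) * K = V * 2⁻¹ * (K2 *
      ∫⁻ θ in Ioo (-Real.pi) Real.pi, ENNReal.ofReal (Real.sin θ ^ 2) * g (Real.cos θ)) := by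
    rw [← h1, h2, ← h4]
    simp_rw [h3, ← mul_assoc]
    have hm : Measurable fun a : ℝ => ∫⁻ r : ℝ, ENNReal.ofReal (r ^ 2) * F a r := by
      apply Measurable.lintegral_prod_right'
        (f := fun p : ℝ × ℝ => ENNReal.ofReal (p.2 ^ 2) * F p.1 p.2)
      have : Measurable fun p : ℝ × ℝ => F p.1 p.2 := hFm
      fun_prop
    rw [lintegral_const_mul _ hm]
  calc _ = (∫⁻ x : unitQuaternions, g (x : Quaternion ℝ).re ∂nu) * K * K⁻¹ := by
        rw [mul_assoc, ENNReal.mul_inv_cancel hK0 hKt, mul_one]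
    _ = _ := by rw [h5]; ring

lemma sin_sq_int : ∫⁻ θ in Ioo (-Real.pi) Real.pi, ENNReal.ofReal (Real.sin θ ^ 2) =
    ENNReal.ofReal Real.pi := by
  rw [setLIntegral_congr Ioo_ae_eq_Ioc, ← ofReal_integral_eq_lintegral_ofReal,
    ← intervalIntegral.integral_of_le (by linarith [Real.pi_pos]), integral_sin_sq]
  · simp
  · exact (Continuous.integrableOn_Icc (by fun_prop)).mono_set Ioc_subset_Icc_self
  · filter_upwards with x using sq_nonneg _

lemma weyl (g : ℝ → ℝ) (hg : Continuous g) (hg0 : ∀ x, 0 ≤ g x) :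
    ∫ x : unitQuaternions, g (x : Quaternion ℝ).re ∂nu =
      nu.real univ / Real.pi *
        ∫ θ in (-Real.pi)..Real.pi, Real.sin θ ^ 2 * g (Real.cos θ) := by
  obtain ⟨D, hD⟩ := weyl_aux
  have h1 := hD 1 measurable_one
  simp only [Pi.one_apply, lintegral_const, one_mul, mul_one, sin_sq_int] at h1
  have h2 := hD (fun x => ENNReal.ofReal (g x)) (by fun_prop)
  have hDr : nu.real univ = D.toReal * Real.pi := by
    rw [measureReal_def, h1, ENNReal.toReal_mul, ENNReal.toReal_ofReal Real.pi_pos.le]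
  rw [integral_eq_lintegral_of_nonneg_ae (by filter_upwards with x using hg0 _)
    (by
      have := Quaternion.continuous_re
      exact Continuous.aestronglyMeasurable (by fun_prop)), h2, ENNReal.toReal_mul, hDr,
    mul_div_cancel_right₀ _ Real.pi_pos.ne']
  congr 1
  rw [intervalIntegral.integral_of_le (by linarith [Real.pi_pos]),
    integral_eq_lintegral_of_nonneg_ae
      (by filter_upwards with x using mul_nonneg (sq_nonneg _) (hg0 _))
      (Continuous.aestronglyMeasurable (by fun_prop)),
    setLIntegral_congr Ioo_ae_eq_Ioc]
  simp_rw [ENNReal.ofReal_mul (sq_nonneg _)]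

lemma map_nu (y : unitQuaternions) : MeasurePreserving (fun x => y * x) nu nu := by
  have hy : ‖(y : Quaternion ℝ)‖ = 1 := mem_sphere_zero_iff_norm.1 y.2
  have hc : Continuous fun x : unitQuaternions => y * x := by fun_prop
  let L : Quaternion ℝ ≃ₗᵢ[ℝ] Quaternion ℝ :=
    { toFun := fun x => y * x
      map_add' := fun a b => mul_add _ _ _
      map_smul' := fun c a => by simp
      invFun := fun x => (y⁻¹ : unitQuaternions) * x
      left_inv := fun x => by
        dsimp only
        rw [← mul_assoc, ← Metric.unitSphere.coe_mul, inv_mul_cancel]; simp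
      right_inv := fun x => by
        dsimp only
        rw [← mul_assoc, ← Metric.unitSphere.coe_mul, mul_inv_cancel]; simp
      norm_map' := fun x => by simp [hy] }
  have hL : Measure.map L muH = muH := by
    have : (Measure.map L muH).IsAddHaarMeasure :=
      L.toContinuousLinearEquiv.isAddHaarMeasure_map muH
    have hc := isAddLeftInvariant_eq_smul (Measure.map L muH) muH
    set c := addHaarScalarFactor (Measure.map L muH) muH
    have hb : Measure.map L muH (ball 0 1) = muH (ball 0 1) := by
      rw [Measure.map_apply L.continuous.measurable measurableSet_ball]
      congr 1
      ext x; simp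
    rw [hc, Measure.smul_apply, ENNReal.smul_def, smul_eq_mul] at hb
    have h0 : muH (ball (0: Quaternion ℝ) 1) ≠ 0 := (measure_ball_pos _ _ one_pos).ne'
    have ht : muH (ball (0: Quaternion ℝ) 1) ≠ ∞ := measure_ball_lt_top.ne
    have : c = 1 := by
      rw [← ENNReal.coe_inj, ← ENNReal.mul_left_inj h0 ht, hb, ENNReal.coe_one, one_mul]
    rw [hc, this, one_smul]
  refine ⟨hc.measurable, ?_⟩
  ext s hs
  rw [Measure.map_apply hc.measurable hs, toSphere_apply' _ (hc.measurable hs), toSphere_apply' _ hs]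
  congr 1
  have : (fun x => L x) ⁻¹' (Ioo (0:ℝ) 1 • (Subtype.val '' s)) =
      Ioo (0:ℝ) 1 • (Subtype.val '' ((fun x : unitQuaternions => y * x) ⁻¹' s)) := by
    ext x
    simp only [Set.mem_preimage, Set.mem_smul, Set.mem_image]
    constructor
    · rintro ⟨r, hr, _, ⟨z, hz, rfl⟩, h⟩
      refine ⟨r, hr, _, ⟨y⁻¹ * z, by simpa using hz, rfl⟩, ?_⟩
      apply L.injective
      rw [← h, map_smul]
      congr 1
      change (y : Quaternion ℝ) * ((y⁻¹ * z : unitQuaternions) : Quaternion ℝ) = z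
      rw [← Metric.unitSphere.coe_mul, mul_inv_cancel_left]
    · rintro ⟨r, hr, _, ⟨z, hz, rfl⟩, rfl⟩
      exact ⟨r, hr, _, ⟨y * z, hz, rfl⟩, by rw [map_smul]; rfl⟩
  rw [← this]
  have hmp : MeasurePreserving L muH muH := ⟨L.continuous.measurable, hL⟩
  exact hmp.measure_preimage_emb L.toHomeomorph.measurableEmbedding _

end CharQ
namespace CharQ
open MeasureTheory Measure Set Metric AddCircle

lemma gegenbauer_eq (n : ℕ) : gegenbauer 1 n = Polynomial.Chebyshev.U ℝ n ∧
    gegenbauer 1 (n+1) = Polynomial.Chebyshev.U ℝ (n+1) := by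
  induction n with
  | zero => simp [gegenbauer]; rfl
  | succ n ih =>
    refine ⟨by exact_mod_cast ih.2, ?_⟩
    have h : ((n:ℝ) + 2) ≠ 0 := by positivity
    have e1 : 2 * ((n : ℝ) + 1 + 1) / ((n : ℝ) + 2) = 2 := by field_simp; ring
    have e2 : ((n : ℝ) + 2 * 1) / ((n : ℝ) + 2) = 1 := by field_simp
    rw [gegenbauer, e1, e2, ih.1, ih.2]
    have := Polynomial.Chebyshev.U_add_two ℝ n
    push_cast
    rw [add_assoc, one_add_one_eq_two, this, map_one, one_mul]
    rfl

instance instFactTwoPi : Fact (0 < 2 * Real.pi) := Fact.mk Real.two_pi_pos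

abbrev Circ := AddCircle (2 * Real.pi)

def circ (s : Circ) : unitQuaternions :=
  ⟨Quaternion.ofComplex (toCircle s : ℂ), by
    rw [mem_sphere_zero_iff_norm, ← sq_eq_sq₀ (norm_nonneg _) zero_le_one, sq,
      ← Quaternion.normSq_eq_norm_mul_self, Quaternion.normSq_def']
    have := Circle.normSq_coe (toCircle s)
    rw [Complex.normSq_apply] at this
    simp
    linarith⟩

lemma circ_coe (s : Circ) : (circ s : Quaternion ℝ) = Quaternion.ofComplex (toCircle s : ℂ) := rfl

lemma circ_add (s u : Circ) : circ (s + u) = circ s * circ u := by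
  apply Subtype.ext
  rw [Metric.unitSphere.coe_mul, circ_coe, circ_coe, circ_coe, toCircle_add, Circle.coe_mul, map_mul]

lemma circ_zero : circ 0 = 1 := by
  apply Subtype.ext
  rw [circ_coe]
  simp

lemma continuous_circ : Continuous circ := by
  refine Continuous.subtype_mk ?_ _
  have h1 : Continuous (Quaternion.ofComplex : ℂ → Quaternion ℝ) :=
    Quaternion.ofComplex.toLinearMap.continuous_of_finiteDimensional
  have h2 : Continuous (toCircle : Circ → Circle) := AddCircle.continuous_toCircle
  exact h1.comp (continuous_subtype_val.comp h2)

lemma re_circ (θ : ℝ) : (circ (θ : Circ) : Quaternion ℝ).re = Real.cos θ := by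
  rw [circ_coe, toCircle_apply_mk]
  simp [Circle.coe_exp, Complex.exp_ofReal_mul_I_re]

lemma exists_conj (x y : unitQuaternions) (h : (x : Quaternion ℝ).re = (y : Quaternion ℝ).re)
    (hj : (y : Quaternion ℝ).imJ = 0) (hk : (y : Quaternion ℝ).imK = 0) :
    ∃ z : unitQuaternions, z * x = y * z := by
  suffices ∃ z : Quaternion ℝ, z ≠ 0 ∧ z * x = y * z by
    obtain ⟨z, hz, hzz⟩ := this
    refine ⟨⟨‖z‖⁻¹ • z, by
      rw [mem_sphere_zero_iff_norm, norm_smul, norm_inv, norm_norm,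
        inv_mul_cancel₀ (norm_ne_zero_iff.2 hz)]⟩, ?_⟩
    apply Subtype.ext
    simp only [Metric.unitSphere.coe_mul]
    rw [smul_mul_assoc, mul_smul_comm, hzz]
  have hx : Quaternion.normSq (x : Quaternion ℝ) = 1 := by
    rw [Quaternion.normSq_eq_norm_mul_self, mem_sphere_zero_iff_norm.1 x.2, one_mul]
  have hy : Quaternion.normSq (y : Quaternion ℝ) = 1 := by
    rw [Quaternion.normSq_eq_norm_mul_self, mem_sphere_zero_iff_norm.1 y.2, one_mul]
  rw [Quaternion.normSq_def'] at hx hy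
  generalize (x : Quaternion ℝ) = x at *
  generalize (y : Quaternion ℝ) = y at *
  have mk : ∀ b c d : ℝ, ∃ z : Quaternion ℝ, z.re = 0 ∧ z.imI = b ∧ z.imJ = c ∧ z.imK = d :=
    fun b c d => ⟨⟨0, b, c, d⟩, rfl, rfl, rfl, rfl⟩
  by_cases h0 : x.imI + y.imI = 0 ∧ x.imJ = 0 ∧ x.imK = 0
  · obtain ⟨h1, h2, h3⟩ := h0
    have h1 : x.imI = - y.imI := by linarith
    obtain ⟨z, z0, z1, z2, z3⟩ := mk 0 1 0
    refine ⟨z, fun hh => by rw [hh] at z2; exact zero_ne_one z2, ?_⟩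
    apply Quaternion.ext <;> simp [h1, h2, h3, hj, hk, h, z0, z1, z2, z3]
  · obtain ⟨z, z0, z1, z2, z3⟩ := mk (x.imI + y.imI) x.imJ x.imK
    refine ⟨z, fun hh => h0 ⟨?_, ?_, ?_⟩, ?_⟩
    · rw [← z1, hh]; rfl
    · rw [← z2, hh]; rfl
    · rw [← z3, hh]; rfl
    · rw [hj, hk, ← h] at hy
      apply Quaternion.ext <;> simp [hj, hk, h, z0, z1, z2, z3] <;> nlinarith

variable {n : ℕ} (t : unitQuaternions →* Matrix (Fin (n + 1)) (Fin (n + 1)) ℂ)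

lemma trace_circ (x : unitQuaternions) (s : Circ)
    (h : (x : Quaternion ℝ).re = (circ s : Quaternion ℝ).re) :
    (t x).trace = (t (circ s)).trace := by
  obtain ⟨z, hz⟩ := exists_conj x (circ s) h rfl rfl
  have hx : x = z⁻¹ * (circ s * z) := by rw [← hz, inv_mul_cancel_left]
  rw [hx, map_mul, Matrix.trace_mul_comm, ← map_mul, mul_inv_cancel_right]

lemma schur (hcont : ∀ i j, Continuous fun x => t x i j)
    (hunitary : ∀ x, (t x)ᴴ * t x = 1)
    (hirred : ∀ A : Matrix (Fin (n + 1)) (Fin (n + 1)) ℂ,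
      (∀ x, t x * A = A * t x) → ∃ c : ℂ, A = c • 1) :
    ∫ x, ‖(t x).trace‖ ^ 2 ∂nu = nu.real univ := by
  have hint : ∀ i j k l, Integrable (fun x => t x i j * star (t x k l)) nu := by
    intro i j k l
    have h1 := hcont i j
    have h2 := hcont k l
    have : Continuous (fun x => t x i j * star (t x k l)) := by fun_prop
    exact this.integrable_of_hasCompactSupport (HasCompactSupport.of_compactSpace _)
  set A : Fin (n+1) → Fin (n+1) → Matrix (Fin (n + 1)) (Fin (n + 1)) ℂ :=
    fun j l => Matrix.of fun a b => ∫ x, t x a j * star (t x b l) ∂nu with hA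
  have hinv : ∀ j l y, t y * A j l * (t y)ᴴ = A j l := by
    intro j l y
    ext c d
    have h1 : A j l c d = ∫ x, t (y * x) c j * star (t (y * x) d l) ∂nu := by
      have := (map_nu y).integral_comp
        (Homeomorph.mulLeft y).measurableEmbedding (fun x => t x c j * star (t x d l))
      rw [this]; rfl
    rw [h1]
    simp_rw [map_mul, Matrix.mul_apply, star_sum, Finset.sum_mul_sum, star_mul']
    have hint2 : ∀ a b, Integrable
        (fun x => t y c a * t x a j * (star (t y d b) * star (t x b l))) nu := by
      intro a b
      convert (hint a j b l).const_mul (t y c a * star (t y d b)) using 2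
      ring
    rw [integral_finsetSum _ (fun a _ => integrable_finsetSum _ fun b _ => hint2 a b)]
    simp_rw [Finset.sum_mul]
    rw [Finset.sum_comm]
    refine Finset.sum_congr rfl fun a _ => ?_
    rw [integral_finsetSum _ (fun b _ => hint2 a b)]
    refine Finset.sum_congr rfl fun b _ => ?_
    have hAe : A j l a b = ∫ x, t x a j * star (t x b l) ∂nu := rfl
    rw [Matrix.conjTranspose_apply, hAe, mul_assoc, mul_comm _ (star _),
      ← mul_assoc, ← integral_const_mul]
    refine integral_congr_ae (ae_of_all _ fun x => ?_)
    simp only; ring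
  have hsc : ∀ j l, ∃ c : ℂ, A j l = c • 1 := by
    intro j l
    refine hirred _ fun y => ?_
    calc t y * A j l = t y * A j l * ((t y)ᴴ * t y) := by rw [hunitary, mul_one]
      _ = (t y * A j l * (t y)ᴴ) * t y := by noncomm_ring
      _ = _ := by rw [hinv]
  have htr : ∀ j l, (A j l).trace = if j = l then (nu.real univ : ℂ) else 0 := by
    intro j l
    simp only [Matrix.trace, Matrix.diag_apply, hA, Matrix.of_apply]
    rw [← integral_finsetSum _ (fun a _ => hint _ _ _ _)]
    have : ∀ x, ∑ a, t x a j * star (t x a l) = if j = l then 1 else 0 := by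
      intro x
      have := congrFun (congrFun (hunitary x) l) j
      rw [Matrix.mul_apply, Matrix.one_apply] at this
      simp_rw [eq_comm (a := j), ← this, Matrix.conjTranspose_apply, mul_comm]
    simp_rw [this]
    split_ifs <;> simp
  have hval : ∀ a b, A a b a b = if a = b then (nu.real univ : ℂ) / (n+1) else 0 := by
    intro a b
    obtain ⟨c, hc⟩ := hsc a b
    have h1 := htr a b
    rw [hc] at h1 ⊢
    have hn : (n:ℂ) + 1 ≠ 0 := by exact_mod_cast n.succ_ne_zero
    split_ifs at h1 ⊢ with hab
    · subst hab
      simp at h1 ⊢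
      rw [← h1]; field_simp
    · simp [hab]
  have hC : ((∫ x, ‖(t x).trace‖ ^ 2 ∂nu : ℝ) : ℂ) = (nu.real univ : ℂ) := by
    rw [← integral_complex_ofReal]
    have : ∀ x, ((‖(t x).trace‖ ^ 2 : ℝ) : ℂ) = ∑ a, ∑ b, t x a a * star (t x b b) := by
      intro x
      rw [← Finset.sum_mul_sum, ← star_sum]
      push_cast
      rw [← Complex.mul_conj']
      rfl
    simp_rw [this]
    rw [integral_finsetSum _ (fun a _ => integrable_finsetSum _ fun b _ => hint _ _ _ _)]
    have h2 : ∀ a, ∫ x, ∑ b, t x a a * star (t x b b) ∂nu = (nu.real univ : ℂ) / (n+1) := by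
      intro a
      rw [integral_finsetSum _ (fun b _ => hint _ _ _ _)]
      have : ∀ b, ∫ x, t x a a * star (t x b b) ∂nu = A a b a b := fun b => rfl
      simp_rw [this, hval]
      simp
    simp_rw [h2]
    have hn : (n:ℂ) + 1 ≠ 0 := by exact_mod_cast n.succ_ne_zero
    simp
    field_simp
  exact_mod_cast hC

end CharQ
namespace CharQ
open MeasureTheory Measure Set Metric AddCircle

lemma fourierCoeff_shift (h : Circ → ℂ) (k : ℤ) (u : Circ) :
    fourierCoeff (fun s => h (s + u)) k = fourier k u * fourierCoeff h k := by
  unfold fourierCoeff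
  rw [← integral_add_right_eq_self (fun s => fourier (-k) s • h s) u, ← integral_const_mul]
  refine integral_congr_ae (ae_of_all _ fun s => ?_)
  have h1 : (fourier k u : ℂ) * fourier (-k) u = 1 := by
    rw [← fourier_add]; simp
  have h2 : (fourier (-k) (s + u) : ℂ) = fourier (-k) s * fourier (-k) u := by
    simp [fourier_apply, smul_add, toCircle_add]
  simp only [smul_eq_mul, h2]
  linear_combination (-fourier (-k) s * h (s+u)) * h1

section
variable {n : ℕ} (t : unitQuaternions →* Matrix (Fin (n + 1)) (Fin (n + 1)) ℂ)

lemma int_circ (h : Circ → ℂ) (hc : Continuous h) : Integrable h haarAddCircle :=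
  hc.integrable_of_hasCompactSupport (HasCompactSupport.of_compactSpace _)

lemma coeff_nat (hcont : ∀ i j, Continuous fun x => t x i j) (k : ℤ) :
    ∃ m : ℕ, fourierCoeff (fun s => (t (circ s)).trace) k = m := by
  have hc : ∀ i j, Continuous fun s => t (circ s) i j :=
    fun i j => (hcont i j).comp continuous_circ
  have hi : ∀ i j, Integrable (fun s => t (circ s) i j) haarAddCircle :=
    fun i j => int_circ _ (hc i j)
  set P : Matrix (Fin (n + 1)) (Fin (n + 1)) ℂ :=
    Matrix.of fun i j => fourierCoeff (fun s => t (circ s) i j) k with hP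
  have hPe : ∀ i j, P i j = fourierCoeff (fun s => t (circ s) i j) k := fun _ _ => rfl
  have h1 : ∀ u i l, (P * t (circ u)) i l = fourier k u * P i l := by
    intro u i l
    rw [hPe i l, ← fourierCoeff_shift]
    simp_rw [circ_add, map_mul, Matrix.mul_apply]
    have := fourierCoeff.sum (T := 2 * Real.pi) Finset.univ
      (fun j s => t (circ s) i j * t (circ u) j l) (fun j _ => (hi i j).mul_const _)
    have h2 := congrFun this k
    simp only [Finset.sum_apply] at h2
    convert h2.symm using 2
    · rename_i j _
      rw [hPe, mul_comm, ← fourierCoeff.const_mul]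
      simp_rw [mul_comm]
    · ext s; simp
  have h2 : P * P = P := by
    ext i l
    rw [Matrix.mul_apply]
    have h3 : ∀ j, P i j * P j l = ∫ u, P i j * (fourier (-k) u * t (circ u) j l) ∂haarAddCircle := by
      intro j
      rw [integral_const_mul]; rfl
    simp_rw [h3]
    rw [← integral_finsetSum]
    · have h4 : ∀ u, ∑ j, P i j * (fourier (-k) u * t (circ u) j l) = P i l := by
        intro u
        have h5 := h1 u i l
        rw [Matrix.mul_apply] at h5
        have h6 : (fourier (-k) u : ℂ) * fourier k u = 1 := by
          rw [← fourier_add]; simp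
        calc _ = fourier (-k) u * ∑ j, P i j * t (circ u) j l := by
              rw [Finset.mul_sum]; refine Finset.sum_congr rfl fun j _ => by ring
          _ = _ := by rw [h5, ← mul_assoc, h6, one_mul]
      simp_rw [h4]
      simp
    · intro j _
      exact ((hi j l).fourier_smul (-k)).const_mul _
  have h3 : IsIdempotentElem (Matrix.toLin' P) := by
    change Matrix.toLin' P ∘ₗ Matrix.toLin' P = Matrix.toLin' P
    rw [← Matrix.toLin'_mul, h2]
  have h4 := (LinearMap.IsIdempotentElem.isProj_range _ h3).trace
  rw [Matrix.trace_toLin'_eq] at h4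
  refine ⟨Module.finrank ℂ (LinearMap.range (Matrix.toLin' P)), ?_⟩
  · rw [← h4]
    have := fourierCoeff.sum (T := 2 * Real.pi) Finset.univ
      (fun j s => t (circ s) j j) (fun j _ => (hi j j))
    have h2 := congrFun this k
    simp only [Finset.sum_apply] at h2
    convert h2 using 2
    · ext s; simp [Matrix.trace]
    · simp only [Matrix.trace, Matrix.diag_apply, hPe]
end

lemma int_lemma (a : ℤ → ℤ) (hs : HasSum (fun k => ((a k : ℝ)) ^ 2) 2) (ho : ∀ k, a (-k) = - a k) :
    ∃ k, k ≠ -k ∧ a k = 1 ∧ ∀ j, j ≠ k → j ≠ -k → a j = 0 := by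
  have hex : ∃ k, 0 < a k := by
    by_contra! hcon
    have : ∀ k, a k = 0 := fun k => le_antisymm (hcon k) (by have := hcon (-k); rw [ho] at this; linarith)
    simp only [this] at hs
    have := hs.unique (a₂ := 0) (by simpa using hasSum_zero)
    norm_num at this
  obtain ⟨k, hk⟩ := hex
  have hkk : k ≠ -k := by
    intro h
    have := ho k
    rw [← h] at this; omega
  have hle : ∀ s : Finset ℤ, ∑ i ∈ s, (a i)^2 ≤ 2 := by
    intro s
    have := sum_le_hasSum s (fun i _ => sq_nonneg _) hs
    exact_mod_cast this
  refine ⟨k, hkk, ?_, fun j h1 h2 => ?_⟩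
  · have := hle {k, -k}
    rw [Finset.sum_pair hkk, ho] at this
    nlinarith
  · have := hle {j, k, -k}
    rw [Finset.sum_insert (by simp [h1, h2]), Finset.sum_pair hkk, ho] at this
    have : (a j)^2 ≤ 0 := by nlinarith
    nlinarith [sq_nonneg (a j), pow_eq_zero_iff (two_ne_zero) |>.1 (le_antisymm this (sq_nonneg (a j)))]

variable {n : ℕ} (t : unitQuaternions →* Matrix (Fin (n + 1)) (Fin (n + 1)) ℂ)

lemma main_sin (hcont : ∀ i j, Continuous fun x => t x i j)
    (hunitary : ∀ x, (t x)ᴴ * t x = 1)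
    (hirred : ∀ A : Matrix (Fin (n + 1)) (Fin (n + 1)) ℂ,
      (∀ x, t x * A = A * t x) → ∃ c : ℂ, A = c • 1) (θ : ℝ) :
    (t (circ (θ : Circ))).trace * Real.sin θ = Real.sin ((n + 1) * θ) := by
  have htc : Continuous fun x => (t x).trace := by
    simp only [Matrix.trace, Matrix.diag_apply]
    exact continuous_finsetSum _ fun i _ => hcont i i
  set f : Circ → ℂ := fun s => (t (circ s)).trace with hf
  have hfc : Continuous f := htc.comp continuous_circ
  have heven : ∀ s, f (-s) = f s := by
    intro s
    refine trace_circ t _ _ ?_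
    induction s using QuotientAddGroup.induction_on with | H r => ?_
    have e1 := re_circ r
    have e2 := re_circ (-r)
    rw [Real.cos_neg, ← e1] at e2
    exact e2
  choose m hm using coeff_nat t hcont
  have hmeven : ∀ k, m (-k) = m k := by
    intro k
    have : fourierCoeff f (-k) = fourierCoeff f k := by
      unfold fourierCoeff
      rw [← integral_neg_eq_self (fun s => fourier (-k) s • f s)]
      refine integral_congr_ae (ae_of_all _ fun s => ?_)
      simp [heven, fourier_apply]
    rw [hm, hm] at this
    exact_mod_cast this
  let F : C(Circ, ℂ) := ⟨fun s => f s * (fourier 1 s - fourier (-1) s), by fun_prop⟩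
  have hFe : ∀ s, F s = f s * (fourier 1 s - fourier (-1) s) := fun _ => rfl
  have hFcoeff : ∀ k, fourierCoeff F k = ((m (k-1) : ℤ) - m (k+1) : ℤ) := by
    intro k
    have : ((((m (k-1) : ℤ) - m (k+1) : ℤ)) : ℂ) = m (k-1) - m (k+1) := by push_cast; rfl
    rw [this, ← hm, ← hm]
    unfold fourierCoeff
    rw [← integral_sub]
    · refine integral_congr_ae (ae_of_all _ fun s => ?_)
      have e1 : (fourier (-(k-1)) s : ℂ) = fourier (-k) s * fourier 1 s := by
        rw [← fourier_add]; congr 2; ring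
      have e2 : (fourier (-(k+1)) s : ℂ) = fourier (-k) s * fourier (-1) s := by
        rw [← fourier_add]; congr 2; ring
      simp only [hFe, smul_eq_mul, e1, e2, hf]
      ring
    · exact (int_circ f hfc).fourier_smul _
    · exact (int_circ f hfc).fourier_smul _
  have hfour : ∀ (k : ℤ) (θ : ℝ), (fourier k (θ : Circ) : ℂ) - fourier (-k) (θ : Circ) =
      2 * Complex.I * Real.sin (k * θ) := by
    intro k θ
    rw [fourier_coe_apply, fourier_coe_apply]
    have hpi : (Real.pi : ℂ) ≠ 0 := by exact_mod_cast Real.pi_ne_zero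
    have e1 : 2 * (Real.pi:ℂ) * Complex.I * k * θ / ((2 * Real.pi : ℝ) : ℂ) = (k * θ) * Complex.I := by
      push_cast; field_simp
    have e2 : 2 * (Real.pi:ℂ) * Complex.I * ((-k : ℤ) : ℂ) * θ / ((2 * Real.pi : ℝ) : ℂ) =
        -(k * θ) * Complex.I := by
      push_cast; field_simp
    rw [e1, e2]
    push_cast
    rw [Complex.sin]
    linear_combination (-(Complex.exp (-(k * θ) * Complex.I) - Complex.exp ((k * θ) * Complex.I))) * Complex.I_sq
  have hnorm : ∫ s, ‖F s‖ ^ 2 ∂haarAddCircle = 2 := by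
    rw [integral_haarAddCircle, ← AddCircle.intervalIntegral_preimage (2 * Real.pi) (-Real.pi)]
    have hb : -Real.pi + 2 * Real.pi = Real.pi := by ring
    rw [hb]
    set g : ℝ → ℝ := fun c => ‖f ((Real.arccos c : ℝ) : Circ)‖ ^ 2 with hg
    have hmk : Continuous (fun r : ℝ => (r : Circ)) := AddCircle.continuous_mk' _
    have hgc : Continuous g := by
      have := Real.continuous_arccos
      fun_prop
    have hgx : ∀ x : unitQuaternions, g (x : Quaternion ℝ).re = ‖(t x).trace‖ ^ 2 := by
      intro x
      simp only [hg, hf]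
      rw [trace_circ t x ((Real.arccos (x : Quaternion ℝ).re : ℝ) : Circ)]
      have hx : Quaternion.normSq (x : Quaternion ℝ) = 1 := by
        rw [Quaternion.normSq_eq_norm_mul_self, mem_sphere_zero_iff_norm.1 x.2, one_mul]
      rw [Quaternion.normSq_def'] at hx
      rw [re_circ, Real.cos_arccos] <;> nlinarith
    have hgθ : ∀ θ : ℝ, g (Real.cos θ) = ‖f (θ : Circ)‖ ^ 2 := by
      intro θ
      rw [← re_circ, hgx]
    have hw := weyl g hgc (fun x => by positivity)
    simp_rw [hgx, hgθ] at hw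
    rw [schur t hcont hunitary hirred] at hw
    have hV : nu.real univ ≠ 0 := by
      rw [measureReal_def]
      exact ENNReal.toReal_ne_zero.2 ⟨by
        rw [Ne, measure_univ_eq_zero]; exact toSphere_ne_zero _, measure_ne_top _ _⟩
    have hpi := Real.pi_ne_zero
    have hw2 : ∫ θ in (-Real.pi)..Real.pi, Real.sin θ ^ 2 * ‖f (θ : Circ)‖ ^ 2 = Real.pi := by
      field_simp at hw
      linarith
    have hpt : ∀ θ : ℝ, ‖F (θ : Circ)‖ ^ 2 = 4 * (Real.sin θ ^ 2 * ‖f (θ : Circ)‖ ^ 2) := by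
      intro θ
      have := hfour 1 θ
      rw [hFe, this]
      simp only [norm_mul, mul_pow, Complex.norm_I, Complex.norm_real, Real.norm_eq_abs, sq_abs]
      simp
      ring
    simp_rw [hpt]
    rw [intervalIntegral.integral_const_mul, hw2, smul_eq_mul]
    field_simp
    norm_num
  have hsum : HasSum (fun k => ((((m (k-1) : ℤ) - m (k+1) : ℤ)) : ℝ) ^ 2) 2 := by
    have := hasSum_sq_fourierCoeff (ContinuousMap.toLp (E := ℂ) 2 haarAddCircle ℂ F)
    simp_rw [fourierCoeff_toLp, hFcoeff] at this
    have e : ∫ s, ‖(ContinuousMap.toLp (E := ℂ) 2 haarAddCircle ℂ F) s‖ ^ 2 ∂haarAddCircle = 2 := by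
      refine Eq.trans (integral_congr_ae ?_) hnorm
      filter_upwards [ContinuousMap.coeFn_toLp (p := 2) (𝕜 := ℂ) haarAddCircle F] with s hs
      rw [hs]
    rw [e] at this
    convert this using 2 with k
    rw [← Complex.ofReal_intCast, Complex.norm_real, Real.norm_eq_abs, sq_abs]
  obtain ⟨k, hkk, hk1, hk0⟩ := int_lemma (fun k => (m (k-1) : ℤ) - m (k+1)) hsum (by
    intro k
    have e1 : -k - 1 = -(k+1) := by ring
    have e2 : -k + 1 = -(k-1) := by ring
    simp only [e1, e2, hmeven]
    ring)
  have hkm : ((m (-k-1) : ℤ) - m (-k+1)) = -1 := by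
    have e1 : -k - 1 = -(k+1) := by ring
    have e2 : -k + 1 = -(k-1) := by ring
    rw [e1, e2, hmeven, hmeven]
    linarith
  have hF : ∀ s, F s = fourier k s - fourier (-k) s := by
    intro s
    have hzero : ∀ j ∉ ({k, -k} : Finset ℤ), fourierCoeff F j = 0 := by
      intro j hj
      simp only [Finset.mem_insert, Finset.mem_singleton, not_or] at hj
      rw [hFcoeff, hk0 j hj.1 hj.2]; simp
    have hsm : Summable (fourierCoeff F) := summable_of_ne_finset_zero hzero
    have h1 := has_pointwise_sum_fourier_series_of_summable hsm s
    have h2 : HasSum (fun i => fourierCoeff F i • (fourier i s : ℂ))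
        (∑ i ∈ ({k, -k} : Finset ℤ), fourierCoeff F i • (fourier i s : ℂ)) :=
      hasSum_sum_of_ne_finset_zero (fun j hj => by rw [hzero j hj, zero_smul])
    rw [h1.unique h2, Finset.sum_pair hkk, hFcoeff, hFcoeff, hkm]
    rw [hk1]
    simp
    ring
  have hsin : ∀ θ : ℝ, f (θ : Circ) * Real.sin θ = Real.sin (k * θ) := by
    intro θ
    have h1 := hF (θ : Circ)
    have h2 := hfour 1 θ
    rw [hFe, hfour k, h2] at h1
    have hI : (2 * Complex.I : ℂ) ≠ 0 := by simp
    apply mul_left_cancel₀ hI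
    rw [← h1]
    simp
    ring
  have hkn : (k : ℂ) = n + 1 := by
    have hd1 : HasDerivAt (fun θ : ℝ => (Real.sin θ : ℂ)) ((1:ℝ):ℂ) 0 := by
      have := (Real.hasDerivAt_sin 0).ofReal_comp
      simpa using this
    have hd2 : HasDerivAt (fun θ : ℝ => (Real.sin (k * θ) : ℂ)) ((k:ℝ):ℂ) 0 := by
      have h0 : HasDerivAt (fun θ : ℝ => Real.sin (k * θ)) (k:ℝ) 0 := by
        have := ((hasDerivAt_id (0:ℝ)).const_mul (k:ℝ)).sin
        simpa using this
      exact h0.ofReal_comp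
    rw [hasDerivAt_iff_tendsto_slope] at hd1 hd2
    have hmk : Continuous (fun r : ℝ => f (r : Circ)) := hfc.comp (AddCircle.continuous_mk' _)
    have hft : Filter.Tendsto (fun r : ℝ => f (r : Circ)) (nhdsWithin 0 {0}ᶜ) (nhds (f ((0:ℝ) : Circ))) :=
      (hmk.tendsto 0).mono_left nhdsWithin_le_nhds
    have hp := hft.mul hd1
    have he : (fun r : ℝ => f (r : Circ) * slope (fun θ : ℝ => (Real.sin θ : ℂ)) 0 r) =
        slope (fun θ : ℝ => (Real.sin (k * θ) : ℂ)) 0 := by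
      ext r
      simp only [slope_def_module, ← hsin]
      simp
      ring
    rw [he] at hp
    have hu := tendsto_nhds_unique hd2 hp
    have h0 : f ((0:ℝ) : Circ) = n + 1 := by
      simp [hf, circ_zero]
    rw [h0] at hu
    simpa using hu
  have hkn' : (k : ℝ) = n + 1 := by exact_mod_cast hkn
  rw [← hkn']
  exact hsin θ

end CharQ

/-- The character of the `(n+1)`-dimensional irreducible unitary representation `t_n` of the
group `S³` of unit quaternions depends only on the scalar part:
`tr t_n(x) = C_n^1(Sc x)`, and `tr t_n(x) = sin((n+1)θ)/sin θ` whenever `Sc x = cos θ`. -/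
theorem character_unitQuaternions (n : ℕ)
    (t : unitQuaternions →* Matrix (Fin (n + 1)) (Fin (n + 1)) ℂ)
    (hcont : ∀ i j, Continuous fun x => t x i j)
    (hunitary : ∀ x, (t x)ᴴ * t x = 1)
    (hirred : ∀ A : Matrix (Fin (n + 1)) (Fin (n + 1)) ℂ,
      (∀ x, t x * A = A * t x) → ∃ c : ℂ, A = c • 1) :
    (∀ x : unitQuaternions, (t x).trace = (((gegenbauer 1 n).eval (x : Quaternion ℝ).re : ℝ) : ℂ)) ∧
      ∀ (x : unitQuaternions) (θ : ℝ), Real.sin θ ≠ 0 → (x : Quaternion ℝ).re = Real.cos θ →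
        (t x).trace = ((Real.sin (((n : ℝ) + 1) * θ) / Real.sin θ : ℝ) : ℂ) := by
  have hmain := CharQ.main_sin t hcont hunitary hirred
  have hU : ∀ θ : ℝ, (t (CharQ.circ (θ : CharQ.Circ))).trace =
      (((gegenbauer 1 n).eval (Real.cos θ) : ℝ) : ℂ) := by
    have htc : Continuous fun x => (t x).trace := by
      simp only [Matrix.trace, Matrix.diag_apply]
      exact continuous_finsetSum _ fun i _ => hcont i i
    have hc1 : Continuous fun θ : ℝ => (t (CharQ.circ (θ : CharQ.Circ))).trace :=
      htc.comp (CharQ.continuous_circ.comp (AddCircle.continuous_mk' _))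
    have hc2 : Continuous fun θ : ℝ => (((gegenbauer 1 n).eval (Real.cos θ) : ℝ) : ℂ) :=
      Complex.continuous_ofReal.comp ((gegenbauer 1 n).continuous.comp Real.continuous_cos)
    have hcount : {θ : ℝ | Real.sin θ = 0}.Countable := by
      refine (Set.countable_range (fun m : ℤ => (m : ℝ) * Real.pi)).mono ?_
      intro θ hθ
      exact Real.sin_eq_zero_iff.1 hθ
    have hdense := hcount.dense_compl ℝ
    refine congrFun (Continuous.ext_on hdense hc1 hc2 ?_)
    intro θ hθ
    have hs : (Real.sin θ : ℂ) ≠ 0 := by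
      intro h
      exact hθ (by exact_mod_cast h)
    apply mul_right_cancel₀ hs
    simp only
    rw [hmain, (CharQ.gegenbauer_eq n).1, ← Complex.ofReal_mul, Polynomial.Chebyshev.U_real_cos]
    simp
  refine ⟨fun x => ?_, fun x θ hs hx => ?_⟩
  · have hx : Quaternion.normSq (x : Quaternion ℝ) = 1 := by
      rw [Quaternion.normSq_eq_norm_mul_self, mem_sphere_zero_iff_norm.1 x.2, one_mul]
    rw [Quaternion.normSq_def'] at hx
    have hcos : Real.cos (Real.arccos (x : Quaternion ℝ).re) = (x : Quaternion ℝ).re := by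
      rw [Real.cos_arccos] <;> nlinarith
    rw [CharQ.trace_circ t x ((Real.arccos (x : Quaternion ℝ).re : ℝ) : CharQ.Circ)
      (by rw [CharQ.re_circ, hcos]), hU, hcos]
  · rw [CharQ.trace_circ t x (θ : CharQ.Circ) (by rw [CharQ.re_circ, hx])]
    have hs' : (Real.sin θ : ℂ) ≠ 0 := by exact_mod_cast hs
    rw [Complex.ofReal_div, eq_div_iff hs', hmain]

end
end
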